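/- Let (f₀, U₀) be a compactly supported polytropic steady state of the relativistic Vlasov–Poisson system with exponent 1 ≤ k < 7/2 and cut-off energy E₀ < 0, and let Φ(f) = −∫₀^f φ^{−1}(s) ds = −E₀ f + (k/(k+1)) f^{(k+1)/k}. Then there exist constants δ₀ > 0 and C₀ > 0 such that for all f ∈ D_{f₀} with dist(f, f₀) ≤ δ₀, one has H_C(f) − H_C(f₀) ≥ C₀ ‖∇U_f − ∇U_{f₀}‖_{L²}², i.e. f₀ is a local minimizer of the energy–Casimir functional on the set of dynamically accessible states. -/

import Mathlib

/-!
The functional is expanded around the steady state. For an accessible `f`, which is a rearrangement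
of `f₀`, the integrals of `Φ(f)` and `Φ(f₀)` agree, and
`H_C(f) - H_C(f₀) = D - (1/8π) ‖∇U_f - ∇U_{f₀}‖²` with
`D = ∬ (Φ(f) - Φ(f₀) + E (f - f₀)) ≥ 0` (`Steady.energy_identity`). By Newton's shell theorem the field
term equals `½ ∫ δ(r)² / r² dr`, where `δ(r)` is the difference of the masses of `f` and `f₀` in the
ball of radius `r` (`field_energy`). Everything therefore reduces to a strict inequality
`D ≥ (½ + ε) ∫ δ² / r²`, valid once `D` is small.

Let `V` be the potential with `V' = δ / r²` outside a small ball of radius `a`, constant inside it, and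
let `b` be a function of the energy. The Fenchel–Young inequality for the convex function `Φ`, applied
to the perturbed energy `E + V - b(E)`, gives
`D ≥ ∬ (b(E) - V)(f - f₀) - ½ ∬ h(E) (V - b(E))²` (`dpt_fenchel`), where `h` is `-φ'` with
the cut-off energy raised by a bound of `|V - b(E)|`, which, for fixed `a`, tends to zero with `D`. Two
facts make this useful.

* `∬ b(E)(f - f₀)` is negligible: up to an error `Lip(b) · D` it is the difference of the values at
  `f` and `f₀` of a Casimir functional, and these are equal (`Steady.casimir`). The term
  `-∬ V (f - f₀)` equals `∫_{r > a} δ² / r²`.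
* An Antonov-type inequality `∬ h(E) (V - b(E))² ≤ (1 - ε) ∫ δ² / r²` holds for a suitable `b`
  (`Steady.antonov`). For each energy `e`, choose `b(e) = V(r*)`, where `r*` is the radius at which the
  phase-space weight `(r² (ε² - 1))^{3/2}`, `ε = e - u(r)`, has its maximum. The logarithmic derivative
  of that weight is a multiple of `q = ε - 1/ε - m(r)/r`, and `-q' = 4πrρ + (m/r²)/ε² ≥ θ(r)` with
  `θ(r) = r (4πρ + c₄)`, `c₄ > 0`. Cauchy–Schwarz with weight `θ` bounds `(V(r) - V(r*))²` by
  `|q(r)|` times `∫ (V')² / θ` over the interval between `r` and `r*` (`RadData.osc`); exchanging the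
  order of integration, the integral of weight times `|q|` is explicit (`RadData.sh_below`,
  `RadData.sh_above`), and the integral over the energy reproduces the density `ρ`. What remains is the
  factor `4πρ / (4πρ + c₄)`, which is bounded by a constant below `1`; the gain `c₄` comes from the
  term `(m/r²)/ε²` of `-q'`.

The function `r*` of the energy is Lipschitz only away from `r = 0`, hence the cut-off at the radius
`a`. The remaining part `∫₀ᵃ δ² / r²` is at most `C a^{1/5} D` (`Steady.inner_energy`), because the
values of `f` are bounded by those of `f₀`, so that `D` controls the squared `L²` distance
(`Steady.l2_bound`), while far from the support of `f₀` it controls the `L¹` distance.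
-/

open MeasureTheory Set Filter Topology
open scoped ENNReal RealInnerProductSpace

noncomputable section

/-- Position/momentum space `ℝ³`. -/
abbrev V3 : Type := EuclideanSpace ℝ (Fin 3)

/-- A rotation: a linear isometry of `ℝ³` with determinant `1` (an element of SO(3)). -/
def IsRot (A : V3 ≃ₗᵢ[ℝ] V3) : Prop :=
  LinearMap.det (A.toLinearEquiv : V3 →ₗ[ℝ] V3) = 1

/-- The squared modulus of angular momentum, `|x×p|² = |x|²|p|² − (x·p)²`. -/
def angmom (z : V3 × V3) : ℝ := ‖z.1‖ ^ 2 * ‖z.2‖ ^ 2 - (⟪z.1, z.2⟫) ^ 2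

/-- `T` respects spherical symmetry: `T(Ax,Ap) = (Ax',Ap')` for all rotations `A`,
where `(x',p') = T(x,p)`, and `|x'×p'| = |x×p|`. -/
def RespectsSym (T : V3 × V3 → V3 × V3) : Prop :=
  (∀ A : V3 ≃ₗᵢ[ℝ] V3, IsRot A → ∀ x p : V3,
    T (A x, A p) = (A (T (x, p)).1, A (T (x, p)).2)) ∧
  ∀ z : V3 × V3, angmom (T z) = angmom z

/-- The set of dynamically accessible states from `f₀`:  all `f = f₀ ∘ T` with `T`
a measure-preserving `C¹`-diffeomorphism of `ℝ⁶` respecting spherical symmetry. -/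
def DynAcc (f₀ : V3 × V3 → ℝ) : Set (V3 × V3 → ℝ) :=
  {f | ∃ T S : V3 × V3 → V3 × V3, ContDiff ℝ 1 T ∧ ContDiff ℝ 1 S ∧
    Function.LeftInverse S T ∧ Function.RightInverse S T ∧
    MeasurePreserving T volume volume ∧ RespectsSym T ∧ f = f₀ ∘ T}

/-- The relativistic particle energy `E(x,p) = √(1+|p|²) + U₀(x)`. -/
def Erel (U₀ : V3 → ℝ) (z : V3 × V3) : ℝ := Real.sqrt (1 + ‖z.2‖ ^ 2) + U₀ z.1

/-- The polytropic ansatz `φ(E) = (E₀−E)₊^k`. -/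
def polyAnsatz (E₀ k e : ℝ) : ℝ := max (E₀ - e) 0 ^ k

/-- The Casimir function `Φ(f) = −E₀ f + (k/(k+1)) f^{(k+1)/k}`. -/
def PhiRVP (E₀ k s : ℝ) : ℝ := -E₀ * s + k / (k + 1) * s ^ ((k + 1) / k)

/-- The spatial density of a phase-space density. -/
def rhoOf (g : V3 × V3 → ℝ) (x : V3) : ℝ := ∫ p : V3, g (x, p)

/-- The field `∇U_f(x) = ∫ ρ_f(y)(x−y)|x−y|⁻³ dy`. -/
def gradUf (g : V3 × V3 → ℝ) (x : V3) : V3 :=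
  ∫ y : V3, (rhoOf g y / ‖x - y‖ ^ 3) • (x - y)

/-- The energy–Casimir functional for (RVP):
`H_C(f) = ∬ √(1+|p|²) f − (1/2)∬ ρ_f ρ_f |x−y|⁻¹ + ∬ Φ(f)`. -/
def HCrel (E₀ k : ℝ) (f : V3 × V3 → ℝ) : ℝ :=
  (∫ z : V3 × V3, Real.sqrt (1 + ‖z.2‖ ^ 2) * f z) -
    (1 / 2) * (∫ x : V3, ∫ y : V3, rhoOf f x * rhoOf f y / ‖x - y‖) +
    ∫ z : V3 × V3, PhiRVP E₀ k (f z)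

/-- The distance functional
`dist(f,f₀) = ∬ [Φ(f)−Φ(f₀)+E(f−f₀)] + (1/8π)∫ |∇U_f−∇U_{f₀}|²`. -/
def distRVP (E₀ k : ℝ) (U₀ : V3 → ℝ) (f f₀ : V3 × V3 → ℝ) : ℝ :=
  (∫ z : V3 × V3, (PhiRVP E₀ k (f z) - PhiRVP E₀ k (f₀ z) + Erel U₀ z * (f z - f₀ z))) +
    (1 / (8 * Real.pi)) * ∫ x : V3, ‖gradUf f x - gradUf f₀ x‖ ^ 2

/-! ### Radial integration on `ℝ³` and the hat-box theorem -/

lemma lint_coords (F : ℝ × ℝ → ℝ≥0∞) (hF : Measurable F) :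
    ∫⁻ y : V3, F (‖y‖, y 0) =
      ∫⁻ z : ℝ, ∫⁻ q : ℝ × ℝ, F (Real.sqrt (z ^ 2 + (q.1 ^ 2 + q.2 ^ 2)), z) := by
  have h1 := (EuclideanSpace.volume_preserving_symm_measurableEquiv_toLp (Fin 3))
  have h2 := (MeasureTheory.volume_preserving_piFinSuccAbove (fun _ : Fin 3 => ℝ) 0)
  have h3 := (MeasurePreserving.id (volume : Measure ℝ)).prod (volume_preserving_finTwoArrow ℝ)
  have h4 := h3.comp (h2.comp h1)
  have hm : Measurable (fun q : ℝ × (ℝ × ℝ) =>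
      F (Real.sqrt (q.1 ^ 2 + (q.2.1 ^ 2 + q.2.2 ^ 2)), q.1)) := by
    apply hF.comp; fun_prop
  have h5 := h4.lintegral_comp hm
  rw [show (∫⁻ z : ℝ, ∫⁻ q : ℝ × ℝ, F (Real.sqrt (z ^ 2 + (q.1 ^ 2 + q.2 ^ 2)), z)) = _ from
    (lintegral_prod _ hm.aemeasurable).symm]
  refine Eq.trans ?_ h5
  apply lintegral_congr
  intro y
  simp [EuclideanSpace.norm_eq, Fin.sum_univ_three]
  congr 3
  rw [add_assoc]; rfl

lemma lint_plane (G : ℝ → ℝ≥0∞) (hG : Measurable G) :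
    ∫⁻ q : ℝ × ℝ, G (q.1 ^ 2 + q.2 ^ 2) =
      ∫⁻ q in Ioi (0:ℝ), ENNReal.ofReal (2 * Real.pi * q) * G (q ^ 2) := by
  rw [← lintegral_comp_polarCoord_symm]
  rw [polarCoord_target]
  rw [Measure.volume_eq_prod, ← Measure.prod_restrict, lintegral_prod]
  · simp
    apply setLIntegral_congr_fun measurableSet_Ioi
    intro r hr
    have hr : 0 < r := hr
    have : ∀ y : ℝ, (r * Real.cos y) ^ 2 + (r * Real.sin y) ^ 2 = r ^ 2 := by
      intro y
      linear_combination r ^ 2 * Real.sin_sq_add_cos_sq y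
    simp only [this]
    simp
    rw [show 2 * Real.pi * r = r * (Real.pi + Real.pi) by ring, ENNReal.ofReal_mul hr.le]
    ring
  · simp
    apply AEMeasurable.mul
    · fun_prop
    · apply Measurable.aemeasurable
      apply hG.comp
      fun_prop

lemma lint_sub_sqrt (z : ℝ) (G : ℝ → ℝ≥0∞) :
    ∫⁻ q in Ioi (0:ℝ), ENNReal.ofReal (2 * Real.pi * q) * G (Real.sqrt (z ^ 2 + q ^ 2)) =
      ∫⁻ t in Ioi |z|, ENNReal.ofReal (2 * Real.pi * t) * G t := by
  have himg : (fun q : ℝ => Real.sqrt (z ^ 2 + q ^ 2)) '' Ioi 0 = Ioi |z| := by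
    ext t
    simp only [mem_image, mem_Ioi]
    constructor
    · rintro ⟨q, hq, rfl⟩
      apply Real.lt_sqrt_of_sq_lt
      rw [sq_abs]; nlinarith
    · intro ht
      have h0 : 0 ≤ |z| := abs_nonneg z
      have h1 : z ^ 2 < t ^ 2 := by rw [← sq_abs z]; nlinarith
      refine ⟨Real.sqrt (t ^ 2 - z ^ 2), Real.sqrt_pos.2 (by linarith), ?_⟩
      rw [Real.sq_sqrt (by linarith), show z ^ 2 + (t ^ 2 - z ^ 2) = t ^ 2 by ring,
        Real.sqrt_sq (by linarith)]
  rw [← himg, lintegral_image_eq_lintegral_abs_deriv_mul (f' := fun q => q / Real.sqrt (z ^ 2 + q ^ 2))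
    measurableSet_Ioi]
  · apply setLIntegral_congr_fun measurableSet_Ioi
    intro q hq
    have hq : 0 < q := hq
    have hs : 0 < Real.sqrt (z ^ 2 + q ^ 2) := Real.sqrt_pos.2 (by positivity)
    simp only
    rw [← mul_assoc, ← ENNReal.ofReal_mul (abs_nonneg _), abs_of_pos (by positivity)]
    congr 2
    field_simp
  · intro q hq
    have hq : 0 < q := hq
    have h : HasDerivAt (fun q : ℝ => Real.sqrt (z ^ 2 + q ^ 2)) (2 * q / (2 * Real.sqrt (z ^ 2 + q ^ 2))) q := by
      apply HasDerivAt.sqrt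
      · simpa using ((hasDerivAt_pow 2 q).const_add (z ^ 2))
      · positivity
    rw [show 2 * q / (2 * Real.sqrt (z ^ 2 + q ^ 2)) = q / Real.sqrt (z ^ 2 + q ^ 2) by
      rw [mul_div_mul_left _ _ two_ne_zero]] at h
    exact h.hasDerivWithinAt
  · intro a ha b hb hab
    have ha : 0 < a := ha
    have hb : 0 < b := hb
    have := congrArg (fun x => x ^ 2) hab
    simp only [Real.sq_sqrt (show 0 ≤ z ^ 2 + a ^ 2 by positivity),
      Real.sq_sqrt (show 0 ≤ z ^ 2 + b ^ 2 by positivity)] at this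
    nlinarith

/-- The law of `(‖y‖, ⟪e, y⟫)` under Lebesgue measure, for a unit vector `e`. -/
def archMeasure : Measure (ℝ × ℝ) :=
  (volume.restrict {q : ℝ × ℝ | |q.2| < q.1}).withDensity
    (fun q => ENNReal.ofReal (2 * Real.pi * q.1))

lemma measurableSet_cone : MeasurableSet {q : ℝ × ℝ | |q.2| < q.1} :=
  measurableSet_lt (by fun_prop) (by fun_prop)

lemma lint_archMeasure (F : ℝ × ℝ → ℝ≥0∞) (hF : Measurable F) :
    ∫⁻ q, F q ∂archMeasure =
      ∫⁻ z : ℝ, ∫⁻ t in Ioi |z|, ENNReal.ofReal (2 * Real.pi * t) * F (t, z) := by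
  rw [archMeasure, lintegral_withDensity_eq_lintegral_mul _ (by fun_prop) hF,
    ← lintegral_indicator measurableSet_cone, Measure.volume_eq_prod, lintegral_prod_symm]
  · apply lintegral_congr
    intro z
    rw [← lintegral_indicator measurableSet_Ioi]
    rfl
  · apply Measurable.aemeasurable
    apply Measurable.indicator _ measurableSet_cone
    fun_prop

lemma exists_isometry (x y : V3) (h : ‖x‖ = ‖y‖) : ∃ A : V3 ≃ₗᵢ[ℝ] V3, A x = y :=
  ⟨(ℝ ∙ (x - y))ᗮ.reflection, Submodule.reflection_sub h⟩

/-- Archimedes' hat-box theorem: on each sphere, the coordinate along a fixed axis is uniformly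
distributed. -/
lemma map_arch (e : V3) (he : ‖e‖ = 1) :
    Measure.map (fun y : V3 => (‖y‖, ⟪e, y⟫)) volume = archMeasure := by
  obtain ⟨A, hA⟩ := exists_isometry e (EuclideanSpace.single 0 1) (by simp [he])
  have hm : Measurable (fun y : V3 => (‖y‖, ⟪e, y⟫)) := by fun_prop
  apply Measure.ext_of_lintegral
  intro F hF
  rw [lintegral_map hF hm, lint_archMeasure F hF]
  have h1 : ∀ y : V3, F (‖y‖, ⟪e, y⟫) = F (‖A y‖, (A y) 0) := by
    intro y
    rw [A.norm_map]
    have : ⟪e, y⟫ = ⟪A e, A y⟫ := (A.inner_map_map e y).symm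
    rw [this, hA, EuclideanSpace.inner_single_left]
    simp
  simp_rw [h1]
  rw [A.measurePreserving.lintegral_comp (f := fun y => F (‖y‖, y 0)) (hF.comp (by fun_prop)),
    lint_coords F hF]
  apply lintegral_congr
  intro z
  rw [lint_plane (fun u => F (Real.sqrt (z ^ 2 + u), z)) (hF.comp (by fun_prop)),
    lint_sub_sqrt z (fun t => F (t, z))]

lemma lint_radial (F : ℝ → ℝ≥0∞) (hF : Measurable F) :
    ∫⁻ y : V3, F ‖y‖ = ∫⁻ t in Ioi (0:ℝ), ENNReal.ofReal (4 * Real.pi * t ^ 2) * F t := by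
  have h := map_arch (EuclideanSpace.single 0 1) (by simp)
  have h2 : ∫⁻ y : V3, F ‖y‖ = ∫⁻ q, F q.1 ∂archMeasure := by
    rw [← h, lintegral_map (by fun_prop) (by fun_prop)]
  rw [h2, archMeasure, lintegral_withDensity_eq_lintegral_mul _ (by fun_prop) (by fun_prop),
    ← lintegral_indicator measurableSet_cone, Measure.volume_eq_prod, lintegral_prod,
    ← lintegral_indicator measurableSet_Ioi]
  · apply lintegral_congr
    intro t
    by_cases ht : 0 < t
    · rw [indicator_of_mem (by exact ht)]
      have : ∀ z, ({q : ℝ × ℝ | |q.2| < q.1}.indicator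
        ((fun q : ℝ × ℝ => ENNReal.ofReal (2 * Real.pi * q.1)) * fun a => F a.1) (t, z)) =
        (Ioo (-t) t).indicator (fun _ => ENNReal.ofReal (2 * Real.pi * t) * F t) z := by
        intro z
        simp [indicator, abs_lt]
      simp_rw [this]
      rw [lintegral_indicator measurableSet_Ioo]
      simp
      rw [mul_right_comm, ← ENNReal.ofReal_mul (by positivity)]
      congr 2; ring
    · rw [indicator_of_notMem (by exact ht)]
      have : ∀ z, ({q : ℝ × ℝ | |q.2| < q.1}.indicator
        ((fun q : ℝ × ℝ => ENNReal.ofReal (2 * Real.pi * q.1)) * fun a => F a.1) (t, z)) = 0 := by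
        intro z
        apply indicator_of_notMem
        simp only [mem_ofPred_eq, not_lt]
        exact (not_lt.1 ht).trans (abs_nonneg z)
      simp_rw [this]
      simp
  · apply Measurable.aemeasurable
    apply Measurable.indicator _ measurableSet_cone
    fun_prop

/-! ### Potential and force of a sphere -/

lemma integral_radial (F : ℝ → ℝ) :
    ∫ y : V3, F ‖y‖ = ∫ t in Ioi (0:ℝ), 4 * Real.pi * t ^ 2 * F t := by
  rw [integral_fun_norm_addHaar (volume : Measure V3) F]
  have : (volume : Measure V3).real (Metric.ball 0 1) = Real.pi * 4 / 3 := by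
    rw [Measure.real, EuclideanSpace.volume_ball_fin_three]
    simp
    positivity
  rw [this]
  simp only [finrank_euclideanSpace, Fintype.card_fin, nsmul_eq_mul, smul_eq_mul]
  rw [← integral_const_mul, ← integral_const_mul]
  congr 1; ext t
  push_cast; ring

/-- Integration of a function of `(‖y‖, ⟪e, y⟫)` vanishes if it vanishes on almost every sphere. -/
lemma integral_arch_zero (e : V3) (he : ‖e‖ = 1) (K : ℝ × ℝ → ℝ) (hK : Measurable K)
    (hi : Integrable (fun y : V3 => K (‖y‖, ⟪e, y⟫)))
    (h0 : ∀ᵐ t : ℝ, 0 < t → ∫ z in Ioo (-t) t, K (t, z) = 0) :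
    ∫ y : V3, K (‖y‖, ⟪e, y⟫) = 0 := by
  have hm : Measurable (fun y : V3 => (‖y‖, ⟪e, y⟫)) := by fun_prop
  have hmap := map_arch e he
  have hi2 : Integrable K archMeasure := by
    rw [← hmap, integrable_map_measure hK.aestronglyMeasurable hm.aemeasurable]
    exact hi
  have e1 : ∫ y : V3, K (‖y‖, ⟪e, y⟫) = ∫ q, K q ∂archMeasure := by
    rw [← hmap, integral_map hm.aemeasurable hK.aestronglyMeasurable]
  have hd : Measurable (fun q : ℝ × ℝ => (2 * Real.pi * q.1).toNNReal) := by fun_prop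
  have harch : archMeasure = (volume.restrict {q : ℝ × ℝ | |q.2| < q.1}).withDensity
    (fun q => ((2 * Real.pi * q.1).toNNReal : ℝ≥0∞)) := rfl
  rw [e1, harch, integral_withDensity_eq_integral_smul hd]
  rw [harch, integrable_withDensity_iff_integrable_smul hd] at hi2
  rw [← integral_indicator measurableSet_cone, Measure.volume_eq_prod, integral_prod]
  · rw [integral_eq_zero_of_ae]
    filter_upwards [h0] with t ht
    by_cases htp : 0 < t
    · have : ∀ z, ({q : ℝ × ℝ | |q.2| < q.1}.indicator
          (fun q : ℝ × ℝ => (2 * Real.pi * q.1).toNNReal • K q) (t, z)) =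
          (Ioo (-t) t).indicator (fun z => (2 * Real.pi * t).toNNReal • K (t, z)) z := by
        intro z
        simp [indicator, abs_lt]
      simp_rw [this]
      rw [integral_indicator measurableSet_Ioo]
      simp only [NNReal.smul_def, smul_eq_mul]
      rw [integral_const_mul, ht htp]
      simp
    · have : ∀ z, ({q : ℝ × ℝ | |q.2| < q.1}.indicator
        (fun q : ℝ × ℝ => (2 * Real.pi * q.1).toNNReal • K q) (t, z)) = 0 := by
        intro z
        apply indicator_of_notMem
        simp only [mem_ofPred_eq, not_lt]
        exact (not_lt.1 htp).trans (abs_nonneg z)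
      simp_rw [this]
      simp
  · rw [← Measure.volume_eq_prod]
    exact (integrable_indicator_iff measurableSet_cone).2 hi2

/-- `‖x - y‖⁻ʲ` is locally integrable on `ℝ³` for `j ≤ 2`. -/
lemma integrable_kernel (j : ℕ) (hj : j ≤ 2) (g : V3 → ℝ) (hg : Measurable g) (M R : ℝ)
    (hM : ∀ y, |g y| ≤ M) (hR : ∀ y, R < ‖y‖ → g y = 0) (x : V3) :
    Integrable (fun y : V3 => g y / ‖x - y‖ ^ j) := by
  set R' : ℝ := |R| + ‖x‖
  have hR' : 0 ≤ R' := by positivity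
  have hM0 : 0 ≤ M := (abs_nonneg _).trans (hM 0)
  set h : ℝ → ℝ := fun t => if t ≤ R' then M / t ^ j else 0 with hh
  have hhm : Measurable h := by
    apply Measurable.ite measurableSet_Iic <;> fun_prop
  have hI : Integrable (fun y : V3 => h ‖y‖) := by
    refine ⟨(hhm.comp measurable_norm).aestronglyMeasurable, ?_⟩
    have := lint_radial (fun t => ‖h t‖ₑ) hhm.enorm
    rw [HasFiniteIntegral, this]
    calc ∫⁻ t in Ioi (0:ℝ), ENNReal.ofReal (4 * Real.pi * t ^ 2) * ‖h t‖ₑ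
        ≤ ∫⁻ t in Ioi (0:ℝ), (Ioc 0 R').indicator
            (fun _ => ENNReal.ofReal (4 * Real.pi * M * R' ^ (2 - j))) t := by
          apply setLIntegral_mono' measurableSet_Ioi
          intro t ht
          have ht : 0 < t := ht
          by_cases htR : t ≤ R'
          · rw [indicator_of_mem (by exact ⟨ht, htR⟩), hh]
            simp only [htR, if_true]
            rw [Real.enorm_of_nonneg (by positivity), ← ENNReal.ofReal_mul (by positivity)]
            apply ENNReal.ofReal_le_ofReal
            have : t ^ 2 = t ^ j * t ^ (2 - j) := by rw [← pow_add]; congr 1; omega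
            rw [this]
            have h3 : t ^ (2 - j) ≤ R' ^ (2 - j) := pow_le_pow_left₀ ht.le htR _
            have : 4 * Real.pi * (t ^ j * t ^ (2 - j)) * (M / t ^ j) =
              4 * Real.pi * M * t ^ (2 - j) := by field_simp
            rw [this]
            gcongr
          · rw [hh]; simp [htR]
      _ ≤ ∫⁻ t, (Ioc 0 R').indicator
            (fun _ => ENNReal.ofReal (4 * Real.pi * M * R' ^ (2 - j))) t :=
          setLIntegral_le_lintegral _ _
      _ < ⊤ := by
          rw [lintegral_indicator measurableSet_Ioc]
          simp [ENNReal.mul_lt_top]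
  have hI2 : Integrable (fun y : V3 => h ‖x - y‖) := hI.comp_sub_left x
  refine hI2.mono' (by apply Measurable.aestronglyMeasurable; fun_prop) ?_
  filter_upwards with y
  by_cases hy : ‖x - y‖ ≤ R'
  · simp only [hh, hy, if_true, norm_div, norm_pow, Real.norm_eq_abs, abs_norm]
    exact div_le_div_of_nonneg_right (hM y) (pow_nonneg (norm_nonneg _) _)
  · have : g y = 0 := by
      apply hR
      have h1 : ‖x - y‖ ≤ ‖x‖ + ‖y‖ := norm_sub_le x y
      have h2 : |R| < ‖y‖ := by simp only [R'] at hy; linarith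
      exact (le_abs_self R).trans_lt h2
    simp [this, hh, hy]

lemma norm_sub_eq (e : V3) (he : ‖e‖ = 1) (a : ℝ) (y : V3) :
    ‖a • e - y‖ = Real.sqrt (a ^ 2 + ‖y‖ ^ 2 - 2 * a * ⟪e, y⟫) := by
  rw [← Real.sqrt_sq (norm_nonneg (a • e - y)), norm_sub_sq_real, norm_smul, he,
    real_inner_smul_left]
  congr 1
  rw [mul_one, Real.norm_eq_abs, sq_abs]; ring

lemma rad_pos {a t z : ℝ} (ha : 0 < a) (hat : a ≠ t) (hz : |z| ≤ t) :
    0 < a ^ 2 + t ^ 2 - 2 * a * z := by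
  have h1 := abs_le.1 hz
  have : 0 < (a - t) ^ 2 := by
    have : a - t ≠ 0 := sub_ne_zero.2 hat
    positivity
  nlinarith

lemma rad_deriv {a t z : ℝ} (h : 0 < a ^ 2 + t ^ 2 - 2 * a * z) :
    HasDerivAt (fun z => Real.sqrt (a ^ 2 + t ^ 2 - 2 * a * z))
      (-a / Real.sqrt (a ^ 2 + t ^ 2 - 2 * a * z)) z := by
  have h1 : HasDerivAt (fun z : ℝ => a ^ 2 + t ^ 2 - 2 * a * z) (-(2 * a)) z := by
    simpa using ((hasDerivAt_id z).const_mul (2 * a)).const_sub (a ^ 2 + t ^ 2)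
  refine (h1.sqrt h.ne').congr_deriv ?_
  rw [neg_div, neg_div, mul_div_mul_left _ _ two_ne_zero]

/-- The mean over the sphere of radius `t` of the Coulomb potential at distance `a` from the centre is
`1 / max a t`; `z` is the axial coordinate, uniformly distributed on `[-t, t]`. -/
lemma sphere_pot {a t : ℝ} (ha : 0 < a) (ht : 0 < t) (hat : a ≠ t) :
    ∫ z in (-t)..t, (1 / Real.sqrt (a ^ 2 + t ^ 2 - 2 * a * z) - 1 / max a t) = 0 := by
  have hpos : ∀ z ∈ uIcc (-t) t, 0 < a ^ 2 + t ^ 2 - 2 * a * z := by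
    intro z hz
    rw [uIcc_of_le (by linarith)] at hz
    exact rad_pos ha hat (abs_le.2 hz)
  have hd : ∀ z ∈ uIcc (-t) t, HasDerivAt
      (fun z => -(1 / a) * Real.sqrt (a ^ 2 + t ^ 2 - 2 * a * z) - z * (1 / max a t))
      (1 / Real.sqrt (a ^ 2 + t ^ 2 - 2 * a * z) - 1 / max a t) z := by
    intro z hz
    have h1 := (rad_deriv (hpos z hz)).const_mul (-(1 / a))
    have h2 := (hasDerivAt_id z).mul_const (1 / max a t)
    refine (h1.sub h2).congr_deriv ?_
    field_simp
  rw [intervalIntegral.integral_eq_sub_of_hasDerivAt hd]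
  · have e1 : Real.sqrt (a ^ 2 + t ^ 2 - 2 * a * t) = |a - t| := by
      rw [← Real.sqrt_sq_eq_abs]; congr 1; ring
    have e2 : Real.sqrt (a ^ 2 + t ^ 2 - 2 * a * (-t)) = a + t := by
      rw [← Real.sqrt_sq (show 0 ≤ a + t by positivity)]; congr 1; ring
    rw [e1, e2]
    rcases lt_or_gt_of_ne hat with h | h
    · rw [abs_of_neg (by linarith), max_eq_right h.le]; field_simp; ring
    · rw [abs_of_pos (by linarith), max_eq_left h.le]; field_simp; ring
  · apply ContinuousOn.intervalIntegrable
    apply ContinuousOn.sub _ continuousOn_const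
    apply ContinuousOn.div continuousOn_const (by fun_prop)
    intro z hz
    exact (Real.sqrt_pos.2 (hpos z hz)).ne'

/-- The mean over the sphere of radius `t` of the axial component of the Coulomb force at distance `a`
from the centre: `1 / a²` outside the sphere and zero inside. -/
lemma sphere_force {a t : ℝ} (ha : 0 < a) (ht : 0 < t) (hat : a ≠ t) :
    ∫ z in (-t)..t, ((a - z) / Real.sqrt (a ^ 2 + t ^ 2 - 2 * a * z) ^ 3 -
      if t < a then 1 / a ^ 2 else 0) = 0 := by
  have hpos : ∀ z ∈ uIcc (-t) t, 0 < a ^ 2 + t ^ 2 - 2 * a * z := by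
    intro z hz
    rw [uIcc_of_le (by linarith)] at hz
    exact rad_pos ha hat (abs_le.2 hz)
  set c : ℝ := if t < a then 1 / a ^ 2 else 0 with hc
  have hd : ∀ z ∈ uIcc (-t) t, HasDerivAt
      (fun z => 1 / (2 * a ^ 2) * ((a ^ 2 - t ^ 2) * (Real.sqrt (a ^ 2 + t ^ 2 - 2 * a * z))⁻¹ -
        Real.sqrt (a ^ 2 + t ^ 2 - 2 * a * z)) - z * c)
      ((a - z) / Real.sqrt (a ^ 2 + t ^ 2 - 2 * a * z) ^ 3 - c) z := by
    intro z hz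
    have hp := Real.sqrt_pos.2 (hpos z hz)
    have hsq := Real.sq_sqrt (hpos z hz).le
    have h0 := rad_deriv (hpos z hz)
    have h1 := (((h0.inv hp.ne').const_mul (a ^ 2 - t ^ 2)).sub h0).const_mul (1 / (2 * a ^ 2))
    have h2 := (hasDerivAt_id z).mul_const c
    refine (h1.sub h2).congr_deriv ?_
    set R := Real.sqrt (a ^ 2 + t ^ 2 - 2 * a * z)
    have hz' : z = (a ^ 2 + t ^ 2 - R ^ 2) / (2 * a) := by field_simp; linarith
    rw [hz']
    field_simp
    ring
  rw [intervalIntegral.integral_eq_sub_of_hasDerivAt hd]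
  · have e1 : Real.sqrt (a ^ 2 + t ^ 2 - 2 * a * t) = |a - t| := by
      rw [← Real.sqrt_sq_eq_abs]; congr 1; ring
    have e2 : Real.sqrt (a ^ 2 + t ^ 2 - 2 * a * (-t)) = a + t := by
      rw [← Real.sqrt_sq (show 0 ≤ a + t by positivity)]; congr 1; ring
    rw [e1, e2]
    have hs : a - t ≠ 0 := sub_ne_zero.2 hat
    have hs' : t - a ≠ 0 := sub_ne_zero.2 hat.symm
    rcases lt_or_gt_of_ne hat with h | h
    · rw [abs_of_neg (by linarith), hc, if_neg (by linarith), neg_sub]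
      field_simp; ring
    · rw [abs_of_pos (by linarith), hc, if_pos (by linarith)]
      field_simp; ring
  · apply ContinuousOn.intervalIntegrable
    apply ContinuousOn.sub _ continuousOn_const
    apply ContinuousOn.div (by fun_prop) (by fun_prop)
    intro z hz
    have := Real.sqrt_pos.2 (hpos z hz)
    positivity

/-! ### Newton's shell theorem for radial densities -/

/-- A radial profile: a continuous function of the radius vanishing beyond the radius `R`. -/
structure Prof (s : ℝ → ℝ) (R : ℝ) : Prop where
  cont : Continuous s
  pos : 0 < R
  zero : ∀ t, R ≤ t → s t = 0

/-- The mass in the ball of radius `r` of the radial density with profile `s`. -/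
def mass (s : ℝ → ℝ) (r : ℝ) : ℝ := ∫ t in (0:ℝ)..r, 4 * Real.pi * t ^ 2 * s t

/-- The (sign-reversed) Newtonian potential at radius `r` of the radial density with profile `s`. -/
def wpot (s : ℝ → ℝ) (R r : ℝ) : ℝ := mass s r / r + ∫ t in r..R, 4 * Real.pi * t * s t

lemma Prof.bound {s : ℝ → ℝ} {R : ℝ} (h : Prof s R) : ∃ M, 0 < M ∧ ∀ t, 0 ≤ t → |s t| ≤ M := by
  obtain ⟨M, hM⟩ := (isCompact_Icc (a := (0:ℝ)) (b := R)).exists_bound_of_continuousOn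
    h.cont.continuousOn
  refine ⟨max M 1, by positivity, fun t ht => ?_⟩
  by_cases htR : t ≤ R
  · exact (hM t ⟨ht, htR⟩).trans (le_max_left _ _)
  · rw [h.zero t (not_le.1 htR).le]; simp

lemma mass_hasDerivAt {s : ℝ → ℝ} {R : ℝ} (h : Prof s R) (r : ℝ) :
    HasDerivAt (mass s) (4 * Real.pi * r ^ 2 * s r) r := by
  have hc : Continuous (fun t => 4 * Real.pi * t ^ 2 * s t) := by
    have := h.cont; fun_prop
  exact intervalIntegral.integral_hasDerivAt_right (hc.intervalIntegrable _ _)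
    (hc.stronglyMeasurableAtFilter _ _) hc.continuousAt

lemma mass_cont {s : ℝ → ℝ} {R : ℝ} (h : Prof s R) : Continuous (mass s) :=
  continuous_iff_continuousAt.2 fun r => (mass_hasDerivAt h r).continuousAt

lemma mass_zero (s : ℝ → ℝ) : mass s 0 = 0 := by simp [mass]

lemma mass_eq_of_ge {s : ℝ → ℝ} {R : ℝ} (h : Prof s R) {r : ℝ} (hr : R ≤ r) :
    mass s r = mass s R := by
  have hc : Continuous (fun t => 4 * Real.pi * t ^ 2 * s t) := by
    have := h.cont; fun_prop
  have h1 := intervalIntegral.integral_add_adjacent_intervals (hc.intervalIntegrable (μ := volume) 0 R)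
    (hc.intervalIntegrable R r)
  rw [mass, mass, ← h1]
  have : ∫ t in R..r, 4 * Real.pi * t ^ 2 * s t = 0 := by
    rw [intervalIntegral.integral_congr (g := fun _ => 0)]
    · simp
    · intro t ht
      rw [uIcc_of_le hr] at ht
      simp [h.zero t ht.1]
  rw [this, add_zero]

lemma mass_bound {s : ℝ → ℝ} {R : ℝ} (h : Prof s R) :
    ∃ C, 0 < C ∧ ∀ r, 0 ≤ r → |mass s r| ≤ C * r ^ 3 ∧ |mass s r| ≤ C := by
  obtain ⟨M, hM, hb⟩ := h.bound
  have key : ∀ r, 0 ≤ r → |mass s r| ≤ 4 * Real.pi * M * r ^ 3 := by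
    intro r hr
    have := intervalIntegral.norm_integral_le_of_norm_le_const (a := 0) (b := r)
      (f := fun t => 4 * Real.pi * t ^ 2 * s t) (C := 4 * Real.pi * r ^ 2 * M) ?_
    · rw [mass, ← Real.norm_eq_abs]
      refine this.trans (le_of_eq ?_)
      rw [sub_zero, abs_of_nonneg hr]; ring
    · intro t ht
      rw [uIoc_of_le hr] at ht
      have ht0 := ht.1
      rw [Real.norm_eq_abs, abs_mul, abs_of_nonneg (by positivity)]
      have := hb t ht0.le
      have h2 : t ^ 2 ≤ r ^ 2 := pow_le_pow_left₀ ht0.le ht.2 2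
      gcongr
  have hR := h.pos
  refine ⟨4 * Real.pi * M * (1 + R ^ 3), by positivity, fun r hr => ⟨?_, ?_⟩⟩
  · refine (key r hr).trans (mul_le_mul_of_nonneg_right ?_ (pow_nonneg hr 3))
    have : 0 ≤ 4 * Real.pi * M * R ^ 3 := by positivity
    linarith
  · by_cases hrR : r ≤ R
    · refine (key r hr).trans ?_
      gcongr
      have : r ^ 3 ≤ R ^ 3 := pow_le_pow_left₀ hr hrR 3
      linarith
    · rw [mass_eq_of_ge h (not_le.1 hrR).le]
      refine (key R hR.le).trans ?_
      gcongr
      linarith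

lemma wpot_hasDerivAt {s : ℝ → ℝ} {R : ℝ} (h : Prof s R) {r : ℝ} (hr : 0 < r) :
    HasDerivAt (wpot s R) (-(mass s r / r ^ 2)) r := by
  have hc : Continuous (fun t => 4 * Real.pi * t * s t) := by
    have := h.cont; fun_prop
  have h1 := (mass_hasDerivAt h r).div (hasDerivAt_id r) hr.ne'
  have h2 := intervalIntegral.integral_hasDerivAt_left (hc.intervalIntegrable (μ := volume) r R)
    (hc.stronglyMeasurableAtFilter _ _) hc.continuousAt
  refine (h1.add h2).congr_deriv ?_
  simp only [id]
  field_simp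
  ring

lemma wpot_eq_of_ge {s : ℝ → ℝ} {R : ℝ} (h : Prof s R) {r : ℝ} (hr : R ≤ r) :
    wpot s R r = mass s R / r := by
  rw [wpot, mass_eq_of_ge h hr, intervalIntegral.integral_congr (g := fun _ => 0)]
  · simp
  · intro t ht
    rw [uIcc_of_ge hr] at ht
    simp [h.zero t ht.1]

/-- Shell theorem for the potential. -/
lemma newton_pot {s : ℝ → ℝ} {R : ℝ} (h : Prof s R) {x : V3} (hx : x ≠ 0) :
    ∫ y : V3, s ‖y‖ / ‖x - y‖ = wpot s R ‖x‖ := by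
  obtain ⟨M, hM, hb⟩ := h.bound
  have hcs := h.cont
  set a := ‖x‖
  have ha : 0 < a := norm_pos_iff.2 hx
  set e : V3 := a⁻¹ • x
  have he : ‖e‖ = 1 := by simp [e, norm_smul, a, hx]
  have hxe : x = a • e := by simp [e, smul_smul, ha.ne']
  have i1 : Integrable (fun y : V3 => s ‖y‖ / ‖x - y‖) := by
    have := integrable_kernel 1 (by norm_num) (fun y : V3 => s ‖y‖)
      (by fun_prop) M R (fun y => hb _ (norm_nonneg _))
      (fun y hy => h.zero _ hy.le) x
    simpa using this
  have i2 : Integrable (fun y : V3 => s ‖y‖ * (1 / max a ‖y‖)) := by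
    apply Continuous.integrable_of_hasCompactSupport
    · apply Continuous.mul (by fun_prop)
      apply Continuous.div continuous_const (by fun_prop)
      intro y
      exact (lt_max_of_lt_left ha).ne'
    · apply HasCompactSupport.intro (isCompact_closedBall (0:V3) R)
      intro y hy
      have : R < ‖y‖ := by simpa using hy
      simp [h.zero _ this.le]
  have hz := integral_arch_zero e he
    (fun q => s q.1 * (1 / Real.sqrt (a ^ 2 + q.1 ^ 2 - 2 * a * q.2) - 1 / max a q.1))
    (by fun_prop) ?_ ?_
  · have e1 : ∫ y : V3, s ‖y‖ / ‖x - y‖ = ∫ y : V3, s ‖y‖ * (1 / max a ‖y‖) := by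
      rw [← sub_eq_zero, ← integral_sub i1 i2]
      refine Eq.trans ?_ hz
      congr 1; ext y
      simp only
      rw [← norm_sub_eq e he, ← hxe]
      ring
    rw [e1, integral_radial (fun t => s t * (1 / max a t))]
    have e2 : Ioi (0:ℝ) = Ioc 0 a ∪ Ioi a := (Ioc_union_Ioi_eq_Ioi ha.le).symm
    have c1 : Continuous (fun t => 4 * Real.pi * t ^ 2 * (s t * (1 / max a t))) := by
      apply Continuous.mul (by fun_prop)
      apply Continuous.mul (by fun_prop)
      apply Continuous.div continuous_const (by fun_prop)
      intro y
      exact (lt_max_of_lt_left ha).ne'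
    have c2 : Continuous (fun t => 4 * Real.pi * t * s t) := by fun_prop
    have hi : ∀ b, IntegrableOn (fun t => 4 * Real.pi * t ^ 2 * (s t * (1 / max a t))) (Ioi b) := by
      intro b
      have : IntegrableOn (fun t => 4 * Real.pi * t ^ 2 * (s t * (1 / max a t)))
          (Ioc b (max b R) ∪ Ioi (max b R)) := by
        apply IntegrableOn.union
        · exact (c1.integrableOn_Icc).mono_set Ioc_subset_Icc_self
        · refine (integrableOn_zero).congr_fun ?_ measurableSet_Ioi
          intro t ht
          simp [h.zero t ((le_max_right _ _).trans (le_of_lt ht))]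
      rwa [Ioc_union_Ioi_eq_Ioi (le_max_left _ _)] at this
    rw [e2, setIntegral_union (Ioc_disjoint_Ioi le_rfl) measurableSet_Ioi
      (c1.integrableOn_Icc.mono_set Ioc_subset_Icc_self) (hi a), wpot]
    congr 1
    · rw [mass, intervalIntegral.integral_of_le ha.le, ← integral_div]
      apply setIntegral_congr_fun measurableSet_Ioc
      intro t ht
      simp only
      rw [max_eq_left ht.2]; ring
    · have e3 : ∫ t in Ioi a, 4 * Real.pi * t ^ 2 * (s t * (1 / max a t)) =
          ∫ t in Ioi a, 4 * Real.pi * t * s t := by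
        apply setIntegral_congr_fun measurableSet_Ioi
        intro t ht
        have ht : a < t := ht
        have : 0 < t := ha.trans ht
        simp only
        rw [max_eq_right ht.le]; field_simp
      rw [e3]
      have z0 : ∀ b, R ≤ b → ∫ t in Ioi b, 4 * Real.pi * t * s t = 0 := by
        intro b hbR
        rw [setIntegral_congr_fun (g := fun _ => 0) measurableSet_Ioi]
        · simp
        · intro t ht
          simp [h.zero t (hbR.trans (le_of_lt ht))]
      by_cases haR : a ≤ R
      · rw [intervalIntegral.integral_of_le haR, ← Ioc_union_Ioi_eq_Ioi haR,
          setIntegral_union (Ioc_disjoint_Ioi le_rfl) measurableSet_Ioi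
          (c2.integrableOn_Icc.mono_set Ioc_subset_Icc_self), z0 R le_rfl, add_zero]
        refine (integrableOn_zero).congr_fun ?_ measurableSet_Ioi
        intro t ht
        simp [h.zero t (le_of_lt ht)]
      · have haR := (not_le.1 haR).le
        rw [z0 a haR, intervalIntegral.integral_congr (g := fun _ => 0)]
        · simp
        · intro t ht
          rw [uIcc_of_ge haR] at ht
          simp [h.zero t ht.1]
  · refine (i1.sub i2).congr ?_
    filter_upwards with y
    simp only [Pi.sub_apply]
    rw [← norm_sub_eq e he, ← hxe]
    ring
  · have : ∀ᵐ t : ℝ, t ≠ a := by simp [ae_iff]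
    filter_upwards [this] with t hta ht
    rw [integral_const_mul, ← integral_Ioc_eq_integral_Ioo,
      ← intervalIntegral.integral_of_le (by linarith), sphere_pot ha ht hta.symm, mul_zero]

/-- Shell theorem for the force. -/
lemma newton_force {s : ℝ → ℝ} {R : ℝ} (h : Prof s R) {x : V3} (hx : x ≠ 0) :
    ∫ y : V3, (s ‖y‖ / ‖x - y‖ ^ 3) • (x - y) = (mass s ‖x‖ / ‖x‖ ^ 3) • x := by
  obtain ⟨M, hM, hb⟩ := h.bound
  have hcs := h.cont
  set a := ‖x‖
  have ha : 0 < a := norm_pos_iff.2 hx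
  set e : V3 := a⁻¹ • x
  have he : ‖e‖ = 1 := by simp [e, norm_smul, a, hx]
  have hxe : x = a • e := by simp [e, smul_smul, ha.ne']
  have hnorm : ∀ y : V3, ‖(s ‖y‖ / ‖x - y‖ ^ 3) • (x - y)‖ = ‖s ‖y‖ / ‖x - y‖ ^ 2‖ := by
    intro y
    rw [norm_smul, norm_div, norm_div, norm_pow, norm_pow, norm_norm]
    by_cases h0 : ‖x - y‖ = 0
    · simp [h0]
    · field_simp
  have iv : Integrable (fun y : V3 => (s ‖y‖ / ‖x - y‖ ^ 3) • (x - y)) := by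
    have := integrable_kernel 2 (by norm_num) (fun y : V3 => s ‖y‖)
      (by fun_prop) M R (fun y => hb _ (norm_nonneg _))
      (fun y hy => h.zero _ hy.le) x
    refine this.mono ?_ ?_
    · apply Measurable.aestronglyMeasurable
      fun_prop
    · filter_upwards with y
      rw [hnorm]
  set g := ∫ y : V3, (s ‖y‖ / ‖x - y‖ ^ 3) • (x - y) with hg
  have hin : ∀ w : V3, ⟪w, g⟫ = ∫ y : V3, (s ‖y‖ / ‖x - y‖ ^ 3) * ⟪w, x - y⟫ := by
    intro w
    rw [hg, ← integral_inner iv w]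
    congr 1; ext y; rw [real_inner_smul_right]
  have hperp : ∀ w : V3, ⟪w, e⟫ = 0 → ⟪w, g⟫ = 0 := by
    intro w hw
    set A := (ℝ ∙ w)ᗮ.reflection
    have hAw : A w = -w := Submodule.reflection_orthogonalComplement_singleton_eq_neg w
    have hAe : A e = e := by
      apply Submodule.reflection_mem_subspace_eq_self
      rw [Submodule.mem_orthogonal_singleton_iff_inner_right]; exact hw
    have hAx : A x = x := by rw [hxe, map_smul, hAe]
    have hsymm : ∀ y, ⟪w, x - A y⟫ = -⟪w, x - y⟫ := by
      intro y
      have : ⟪A w, A (x - y)⟫ = ⟪w, x - y⟫ := A.inner_map_map _ _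
      rw [map_sub, hAx, hAw, inner_neg_left] at this
      linarith
    have h1 := A.measurePreserving.integral_comp' (f := A.toMeasurableEquiv)
      (fun y : V3 => (s ‖y‖ / ‖x - y‖ ^ 3) * ⟪w, x - y⟫)
    have h2 : ∀ y, (s ‖A y‖ / ‖x - A y‖ ^ 3) * ⟪w, x - A y⟫ =
        -((s ‖y‖ / ‖x - y‖ ^ 3) * ⟪w, x - y⟫) := by
      intro y
      have : ‖x - A y‖ = ‖x - y‖ := by
        rw [← A.norm_map (x - y), map_sub, hAx]
      rw [hsymm, this, A.norm_map]; ring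
    have h3 : ∫ y : V3, (s ‖A y‖ / ‖x - A y‖ ^ 3) * ⟪w, x - A y⟫ =
      ∫ y : V3, (s ‖y‖ / ‖x - y‖ ^ 3) * ⟪w, x - y⟫ := h1
    simp_rw [h2] at h3
    rw [integral_neg] at h3
    rw [hin]; linarith
  have hpar : ⟪e, g⟫ = mass s a / a ^ 2 := by
    have i1 : Integrable (fun y : V3 => (s ‖y‖ / ‖x - y‖ ^ 3) * ⟪e, x - y⟫) := by
      have := iv.const_inner (𝕜 := ℝ) e
      refine this.congr ?_
      filter_upwards with y
      rw [real_inner_smul_right]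
    have hmeas : Measurable (fun t : ℝ => s t * if t < a then 1 / a ^ 2 else 0) := by
      apply Measurable.mul (by fun_prop)
      exact Measurable.ite measurableSet_Iio measurable_const measurable_const
    have i2 : Integrable (fun y : V3 => s ‖y‖ * if ‖y‖ < a then 1 / a ^ 2 else 0) := by
      have i3 : Integrable (fun y : V3 => s ‖y‖) := by
        apply Continuous.integrable_of_hasCompactSupport (by fun_prop)
        apply HasCompactSupport.intro (isCompact_closedBall (0:V3) R)
        intro y hy
        have : R < ‖y‖ := by simpa using hy
        exact h.zero _ this.le
      refine (i3.mul_const (1 / a ^ 2)).mono (hmeas.comp measurable_norm).aestronglyMeasurable ?_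
      filter_upwards with y
      split_ifs
      · exact le_rfl
      · simp; positivity
    have hz := integral_arch_zero e he
      (fun q => s q.1 * ((a - q.2) / Real.sqrt (a ^ 2 + q.1 ^ 2 - 2 * a * q.2) ^ 3 -
        if q.1 < a then 1 / a ^ 2 else 0)) ?_ ?_ ?_
    · have e1 : ∫ y : V3, (s ‖y‖ / ‖x - y‖ ^ 3) * ⟪e, x - y⟫ =
          ∫ y : V3, s ‖y‖ * if ‖y‖ < a then 1 / a ^ 2 else 0 := by
        rw [← sub_eq_zero, ← integral_sub i1 i2]
        refine Eq.trans ?_ hz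
        congr 1; ext y
        simp only
        rw [← norm_sub_eq e he, ← hxe, inner_sub_right]
        nth_rw 2 [hxe]
        rw [real_inner_smul_right, real_inner_self_eq_norm_sq, he]
        ring
      rw [hin, e1, integral_radial (fun t => s t * if t < a then 1 / a ^ 2 else 0), mass,
        intervalIntegral.integral_of_le ha.le, integral_Ioc_eq_integral_Ioo, ← integral_div,
        ← integral_indicator measurableSet_Ioi, ← integral_indicator measurableSet_Ioo]
      congr 1; ext t
      by_cases ht : 0 < t <;> by_cases hta : t < a <;> simp [indicator, ht, hta]
      field_simp
    · apply Measurable.mul (by fun_prop)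
      apply Measurable.sub (by fun_prop)
      exact Measurable.ite (measurableSet_lt (by fun_prop) (by fun_prop)) measurable_const
        measurable_const
    · refine (i1.sub i2).congr ?_
      filter_upwards with y
      simp only [Pi.sub_apply]
      rw [← norm_sub_eq e he, ← hxe, inner_sub_right]
      nth_rw 2 [hxe]
      rw [real_inner_smul_right, real_inner_self_eq_norm_sq, he]
      ring
    · have : ∀ᵐ t : ℝ, t ≠ a := by simp [ae_iff]
      filter_upwards [this] with t hta ht
      rw [integral_const_mul, ← integral_Ioc_eq_integral_Ioo,
        ← intervalIntegral.integral_of_le (by linarith), sphere_force ha ht hta.symm, mul_zero]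
  have hgw : g - ⟪e, g⟫ • e = 0 := by
    have hw : ⟪g - ⟪e, g⟫ • e, e⟫ = 0 := by
      rw [inner_sub_left, real_inner_smul_left, real_inner_self_eq_norm_sq, he, real_inner_comm]
      ring
    have h1 := hperp _ hw
    rw [← inner_self_eq_zero (𝕜 := ℝ)]
    rw [inner_sub_right (g - ⟪e, g⟫ • e) g, real_inner_smul_right, h1, hw]; simp
  rw [sub_eq_zero.1 hgw, hpar, hxe, smul_smul]
  congr 1
  field_simp

/-! ### Field energy and Coulomb energy of radial densities -/

lemma Prof.sub {s₁ s₂ : ℝ → ℝ} {R₁ R₂ : ℝ} (h₁ : Prof s₁ R₁) (h₂ : Prof s₂ R₂) :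
    Prof (s₁ - s₂) (max R₁ R₂) where
  cont := h₁.cont.sub h₂.cont
  pos := lt_max_of_lt_left h₁.pos
  zero t ht := by
    simp [h₁.zero t ((le_max_left _ _).trans ht), h₂.zero t ((le_max_right _ _).trans ht)]

lemma mass_sub {s₁ s₂ : ℝ → ℝ} {R₁ R₂ : ℝ} (h₁ : Prof s₁ R₁) (h₂ : Prof s₂ R₂) (r : ℝ) :
    mass (s₁ - s₂) r = mass s₁ r - mass s₂ r := by
  have c1 : Continuous (fun t => 4 * Real.pi * t ^ 2 * s₁ t) := by
    have := h₁.cont; fun_prop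
  have c2 : Continuous (fun t => 4 * Real.pi * t ^ 2 * s₂ t) := by
    have := h₂.cont; fun_prop
  rw [mass, mass, mass, ← intervalIntegral.integral_sub (c1.intervalIntegrable _ _)
    (c2.intervalIntegrable _ _)]
  congr 1; ext t; simp; ring

lemma integrable_mass_mul {s₁ s₂ : ℝ → ℝ} {R₁ R₂ : ℝ} (h₁ : Prof s₁ R₁) (h₂ : Prof s₂ R₂) :
    IntegrableOn (fun r => mass s₁ r * mass s₂ r / r ^ 2) (Ioi 0) := by
  obtain ⟨C₁, hC₁, hb₁⟩ := mass_bound h₁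
  obtain ⟨C₂, hC₂, hb₂⟩ := mass_bound h₂
  have m1 := (mass_cont h₁).measurable
  have m2 := (mass_cont h₂).measurable
  rw [← Ioc_union_Ioi_eq_Ioi (zero_le_one' ℝ)]
  apply IntegrableOn.union
  · have : IntegrableOn (fun _ : ℝ => C₁ * C₂) (Ioc 0 1) :=
      continuous_const.integrableOn_Icc.mono_set Ioc_subset_Icc_self
    refine Integrable.mono' this (by apply Measurable.aestronglyMeasurable; fun_prop) ?_
    refine (ae_restrict_iff' measurableSet_Ioc).2 (Eventually.of_forall fun r hr => ?_)
    have hr0 := hr.1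
    rw [Real.norm_eq_abs, abs_div, abs_mul, abs_of_nonneg (sq_nonneg r), div_le_iff₀ (by positivity)]
    have e1 : |mass s₁ r| ≤ C₁ * r := by
      refine ((hb₁ r hr0.le).1).trans ?_
      gcongr
      calc r ^ 3 ≤ r ^ 1 := pow_le_pow_of_le_one hr0.le hr.2 (by norm_num)
        _ = r := pow_one r
    have e2 : |mass s₂ r| ≤ C₂ * r := by
      refine ((hb₂ r hr0.le).1).trans ?_
      gcongr
      calc r ^ 3 ≤ r ^ 1 := pow_le_pow_of_le_one hr0.le hr.2 (by norm_num)
        _ = r := pow_one r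
    calc |mass s₁ r| * |mass s₂ r| ≤ (C₁ * r) * (C₂ * r) := by gcongr
      _ = C₁ * C₂ * r ^ 2 := by ring
  · have : IntegrableOn (fun r : ℝ => (C₁ * C₂) * r ^ (-2 : ℝ)) (Ioi 1) :=
      (integrableOn_Ioi_rpow_of_lt (by norm_num) one_pos).const_mul _
    refine Integrable.mono' this (by apply Measurable.aestronglyMeasurable; fun_prop) ?_
    refine (ae_restrict_iff' measurableSet_Ioi).2 (Eventually.of_forall fun r hr => ?_)
    have hr0 : 0 < r := one_pos.trans hr
    rw [Real.norm_eq_abs, abs_div, abs_mul, abs_of_nonneg (sq_nonneg r), Real.rpow_neg hr0.le,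
      Real.rpow_two, ← div_eq_mul_inv]
    have := (hb₁ r hr0.le).2
    have := (hb₂ r hr0.le).2
    gcongr

/-- Continuous functions of compact support on the half line. -/
lemma integrableOn_Ioi_of_zero {g : ℝ → ℝ} (hg : Continuous g) {R : ℝ} (hz : ∀ t, R ≤ t → g t = 0)
    (b : ℝ) : IntegrableOn g (Ioi b) := by
  have : IntegrableOn g (Ioc b (max b R) ∪ Ioi (max b R)) := by
    apply IntegrableOn.union
    · exact (hg.integrableOn_Icc).mono_set Ioc_subset_Icc_self
    · refine (integrableOn_zero).congr_fun ?_ measurableSet_Ioi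
      intro t ht
      exact (hz t ((le_max_right _ _).trans (le_of_lt ht))).symm
  rwa [Ioc_union_Ioi_eq_Ioi (le_max_left _ _)] at this

lemma pot_energy_radial {s₁ s₂ : ℝ → ℝ} {R₁ R₂ : ℝ} (h₁ : Prof s₁ R₁) (h₂ : Prof s₂ R₂) :
    ∫ r in Ioi (0:ℝ), 4 * Real.pi * r ^ 2 * (s₁ r * wpot s₂ R₂ r) =
      ∫ r in Ioi (0:ℝ), mass s₁ r * mass s₂ r / r ^ 2 := by
  obtain ⟨C₁, hC₁, hb₁⟩ := mass_bound h₁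
  obtain ⟨C₂, hC₂, hb₂⟩ := mass_bound h₂
  have m1 := mass_cont h₁
  have m2 := mass_cont h₂
  have hs1 := h₁.cont
  have hs2 := h₂.cont
  have co : Continuous (fun r => ∫ t in r..R₂, 4 * Real.pi * t * s₂ t) := by
    have c : Continuous (fun t => 4 * Real.pi * t * s₂ t) := by fun_prop
    exact (intervalIntegral.differentiable_integral_of_continuous c).continuous.neg.congr
      (fun r => (intervalIntegral.integral_symm _ _).symm)
  have i1 : IntegrableOn (fun r => 4 * Real.pi * r ^ 2 * (s₁ r * wpot s₂ R₂ r)) (Ioi 0) := by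
    have : IntegrableOn (fun r => 4 * Real.pi * r * s₁ r * mass s₂ r +
        4 * Real.pi * r ^ 2 * s₁ r * ∫ t in r..R₂, 4 * Real.pi * t * s₂ t) (Ioi 0) := by
      apply integrableOn_Ioi_of_zero (R := R₁)
      · fun_prop
      · intro t ht; simp [h₁.zero t ht]
    refine this.congr_fun ?_ measurableSet_Ioi
    intro r hr
    have hr : r ≠ 0 := (show (0:ℝ) < r from hr).ne'
    simp only [wpot]
    field_simp
  have i2 := integrable_mass_mul h₁ h₂
  have key := integral_Ioi_of_hasDerivAt_of_tendsto (a := 0) (m := 0)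
    (f := fun r => mass s₁ r * wpot s₂ R₂ r)
    (f' := fun r => 4 * Real.pi * r ^ 2 * (s₁ r * wpot s₂ R₂ r) - mass s₁ r * mass s₂ r / r ^ 2)
    ?_ ?_ (i1.sub i2) ?_
  · rw [integral_sub i1 i2, mass_zero] at key
    linarith
  · have e1 : ContinuousWithinAt (fun r => mass s₁ r * (mass s₂ r / r)) (Ici 0) 0 := by
      rw [ContinuousWithinAt]
      simp only [mass_zero, zero_div, mul_zero]
      apply squeeze_zero_norm' (a := fun r => C₁ * C₂ * r ^ 2)
      · refine eventually_nhdsWithin_of_forall fun r hr => ?_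
        have hr : 0 ≤ r := hr
        rcases hr.eq_or_lt with h0 | h0
        · simp [← h0]
        · rw [Real.norm_eq_abs, abs_mul, abs_div, abs_of_pos h0]
          calc |mass s₁ r| * (|mass s₂ r| / r) ≤ C₁ * (C₂ * r ^ 3 / r) := by
                gcongr
                · exact (hb₁ r hr).2
                · exact (hb₂ r hr).1
            _ = C₁ * C₂ * r ^ 2 := by field_simp
      · have : Continuous (fun r : ℝ => C₁ * C₂ * r ^ 2) := by fun_prop
        have := this.continuousWithinAt (s := Ici 0) (x := 0)
        simpa [ContinuousWithinAt] using this
    have e2 := ((m1.mul co).continuousWithinAt (s := Ici 0) (x := 0))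
    refine (e1.add e2).congr (fun r _ => ?_) ?_ <;> simp [wpot, mul_add]
  · intro r hr
    have hr : (0:ℝ) < r := hr
    refine ((mass_hasDerivAt h₁ r).mul (wpot_hasDerivAt h₂ hr)).congr_deriv ?_
    ring
  · have : Tendsto (fun r : ℝ => mass s₁ R₁ * (mass s₂ R₂ / r)) atTop (𝓝 0) := by
      simpa using (tendsto_const_nhds.div_atTop tendsto_id).const_mul (mass s₁ R₁)
    refine this.congr' ?_
    filter_upwards [eventually_ge_atTop R₁, eventually_ge_atTop R₂] with r hr1 hr2
    rw [mass_eq_of_ge h₁ hr1, wpot_eq_of_ge h₂ hr2]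

/-- The Coulomb interaction energy of two radial densities in terms of their mass functions. -/
lemma pot_energy {s₁ s₂ : ℝ → ℝ} {R₁ R₂ : ℝ} (h₁ : Prof s₁ R₁) (h₂ : Prof s₂ R₂) :
    ∫ x : V3, s₁ ‖x‖ * (∫ y : V3, s₂ ‖y‖ / ‖x - y‖) =
      ∫ r in Ioi (0:ℝ), mass s₁ r * mass s₂ r / r ^ 2 := by
  rw [← pot_energy_radial h₁ h₂, ← integral_radial (fun r => s₁ r * wpot s₂ R₂ r)]
  apply integral_congr_ae
  have : ∀ᵐ x : V3, x ≠ 0 := by simp [ae_iff]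
  filter_upwards [this] with x hx
  rw [newton_pot h₂ hx]

lemma coulomb_energy {g₁ g₂ : V3 × V3 → ℝ} {s₁ s₂ : ℝ → ℝ} {R₁ R₂ : ℝ}
    (h₁ : Prof s₁ R₁) (h₂ : Prof s₂ R₂)
    (e₁ : ∀ x, rhoOf g₁ x = s₁ ‖x‖) (e₂ : ∀ x, rhoOf g₂ x = s₂ ‖x‖) :
    ∫ x : V3, ∫ y : V3, rhoOf g₁ x * rhoOf g₂ y / ‖x - y‖ =
      ∫ r in Ioi (0:ℝ), mass s₁ r * mass s₂ r / r ^ 2 := by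
  rw [← pot_energy h₁ h₂]
  congr 1; ext x
  rw [← integral_const_mul]
  congr 1; ext y
  rw [e₁, e₂]; ring

/-- By Newton's theorem, the field energy of a difference of radial densities depends only on the
difference of the mass functions. -/
lemma field_energy {g₁ g₂ : V3 × V3 → ℝ} {s₁ s₂ : ℝ → ℝ} {R₁ R₂ : ℝ}
    (h₁ : Prof s₁ R₁) (h₂ : Prof s₂ R₂)
    (e₁ : ∀ x, rhoOf g₁ x = s₁ ‖x‖) (e₂ : ∀ x, rhoOf g₂ x = s₂ ‖x‖) :
    ∫ x : V3, ‖gradUf g₁ x - gradUf g₂ x‖ ^ 2 =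
      4 * Real.pi * ∫ r in Ioi (0:ℝ), mass (s₁ - s₂) r ^ 2 / r ^ 2 := by
  have : ∀ᵐ x : V3, x ≠ 0 := by simp [ae_iff]
  have h : ∫ x : V3, ‖gradUf g₁ x - gradUf g₂ x‖ ^ 2 =
      ∫ x : V3, (fun r => mass (s₁ - s₂) r ^ 2 / r ^ 4) ‖x‖ := by
    apply integral_congr_ae
    filter_upwards [this] with x hx
    have hx' : 0 < ‖x‖ := norm_pos_iff.2 hx
    simp only [gradUf, e₁, e₂]
    rw [newton_force h₁ hx, newton_force h₂ hx, ← sub_smul, norm_smul, ← sub_div, mass_sub h₁ h₂,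
      mul_pow, Real.norm_eq_abs, sq_abs]
    field_simp
  rw [h, integral_radial (fun r => mass (s₁ - s₂) r ^ 2 / r ^ 4), ← integral_const_mul]
  apply setIntegral_congr_fun measurableSet_Ioi
  intro r hr
  have hr : (0:ℝ) < r := hr
  simp only
  field_simp

/-! ### Steady states, accessible states, and the energy identity -/

/-- `SO(3)` acts transitively on spheres. -/
lemma exists_rot (x y : V3) (h : ‖x‖ = ‖y‖) : ∃ A : V3 ≃ₗᵢ[ℝ] V3, IsRot A ∧ A x = y := by
  by_cases hxy : x = y
  · refine ⟨LinearIsometryEquiv.refl ℝ V3, ?_, by simp [hxy]⟩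
    rw [IsRot]
    have : ((LinearIsometryEquiv.refl ℝ V3).toLinearEquiv : V3 →ₗ[ℝ] V3) = LinearMap.id := rfl
    rw [this, LinearMap.det_id]
  · have hdet : ∀ w : V3, w ≠ 0 →
        LinearMap.det ((ℝ ∙ w)ᗮ.reflection.toLinearEquiv : V3 →ₗ[ℝ] V3) = -1 := by
      intro w hw
      have := Submodule.det_reflection (ℝ ∙ w)ᗮ
      rw [Submodule.orthogonal_orthogonal, finrank_span_singleton hw, pow_one] at this
      exact this
    have hy : y ≠ 0 := by
      rintro rfl
      rw [norm_zero, norm_eq_zero] at h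
      exact hxy h
    obtain ⟨w, hw, hw0⟩ : ∃ w ∈ (ℝ ∙ y)ᗮ, w ≠ 0 := by
      have : Fact (Module.finrank ℝ V3 = 2 + 1) := ⟨by simp⟩
      have h2 := Submodule.finrank_orthogonal_span_singleton (𝕜 := ℝ) (n := 2) hy
      have : (ℝ ∙ y)ᗮ ≠ ⊥ := by
        intro hb
        rw [hb] at h2; simp at h2
      exact Submodule.exists_mem_ne_zero_of_ne_bot this
    refine ⟨(ℝ ∙ (x - y))ᗮ.reflection.trans (ℝ ∙ w)ᗮ.reflection, ?_, ?_⟩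
    · rw [IsRot]
      have : (((ℝ ∙ (x - y))ᗮ.reflection.trans (ℝ ∙ w)ᗮ.reflection).toLinearEquiv : V3 →ₗ[ℝ] V3) =
        ((ℝ ∙ w)ᗮ.reflection.toLinearEquiv : V3 →ₗ[ℝ] V3) ∘ₗ
        ((ℝ ∙ (x - y))ᗮ.reflection.toLinearEquiv : V3 →ₗ[ℝ] V3) := rfl
      rw [this, LinearMap.det_comp, hdet w hw0, hdet _ (sub_ne_zero.2 hxy)]
      norm_num
    · rw [LinearIsometryEquiv.trans_apply, Submodule.reflection_sub h]
      apply Submodule.reflection_mem_subspace_eq_self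
      rw [Submodule.mem_orthogonal_singleton_iff_inner_right, real_inner_comm]
      rwa [Submodule.mem_orthogonal_singleton_iff_inner_right] at hw

/-- The regularity shared by the steady state and all states dynamically accessible from it:
continuity, compact support, nonnegativity, invariance under rotations. -/
structure Adm (f : V3 × V3 → ℝ) : Prop where
  cont : Continuous f
  supp : ∃ R : ℝ, 0 < R ∧ ∀ z, R ≤ ‖z‖ → f z = 0
  nonneg : ∀ z, 0 ≤ f z
  rot : ∀ A : V3 ≃ₗᵢ[ℝ] V3, IsRot A → ∀ x p, f (A x, A p) = f (x, p)

lemma Adm.integrable_mul {f : V3 × V3 → ℝ} (h : Adm f) {w : V3 × V3 → ℝ} (hw : Continuous w) :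
    Integrable (fun z => w z * f z) := by
  obtain ⟨R, hR, hz⟩ := h.supp
  apply Continuous.integrable_of_hasCompactSupport (hw.mul h.cont)
  apply HasCompactSupport.intro (isCompact_closedBall (0 : V3 × V3) R)
  intro z hzR
  have : R < ‖z‖ := by simpa using hzR
  simp [hz z this.le]

lemma Adm.integrable_comp {f : V3 × V3 → ℝ} (h : Adm f) {F : ℝ → ℝ} (hF : Continuous F)
    (hF0 : F 0 = 0) : Integrable (fun z => F (f z)) := by
  obtain ⟨R, hR, hz⟩ := h.supp
  apply Continuous.integrable_of_hasCompactSupport (hF.comp h.cont)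
  apply HasCompactSupport.intro (isCompact_closedBall (0 : V3 × V3) R)
  intro z hzR
  have : R < ‖z‖ := by simpa using hzR
  simp [hz z this.le, hF0]

lemma Adm.exists_prof {f : V3 × V3 → ℝ} (h : Adm f) :
    ∃ s R, Prof s R ∧ ∀ x, rhoOf f x = s ‖x‖ := by
  obtain ⟨R, hR, hz⟩ := h.supp
  have hrad : ∀ x y : V3, ‖x‖ = ‖y‖ → rhoOf f x = rhoOf f y := by
    intro x y hxy
    obtain ⟨A, hA, rfl⟩ := exists_rot x y hxy
    have h1 := A.measurePreserving.integral_comp' (f := A.toMeasurableEquiv)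
      (fun p : V3 => f (A x, p))
    rw [rhoOf, rhoOf, ← h1]
    congr 1; ext p
    exact (h.rot A hA x p).symm
  have hcont : Continuous (rhoOf f) := by
    have h1 : Continuous (fun x => ∫ p in Metric.closedBall (0:V3) R, f (x, p)) :=
      continuous_parametric_integral_of_continuous (f := fun x p => f (x, p))
        h.cont (isCompact_closedBall _ _)
    refine h1.congr fun x => ?_
    rw [rhoOf]
    apply setIntegral_eq_integral_of_forall_compl_eq_zero
    intro p hp
    apply hz
    have : R < ‖p‖ := by simpa using hp
    exact this.le.trans (le_max_right _ _)
  set e : V3 := EuclideanSpace.single 0 1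
  have he : ‖e‖ = 1 := by simp [e]
  refine ⟨fun t => rhoOf f (t • e), R, ⟨by fun_prop, hR, ?_⟩, ?_⟩
  · intro t ht
    have : ∀ p, f (t • e, p) = 0 := by
      intro p
      apply hz
      refine le_trans ?_ (le_max_left _ _)
      simp only [norm_smul, he, mul_one]
      exact ht.trans (le_abs_self t)
    simp [rhoOf, this]
  · intro x
    apply hrad
    simp [norm_smul, he]

lemma Adm.integral_pos_mul {f : V3 × V3 → ℝ} (h : Adm f) {w : V3 → ℝ} (hw : Continuous w) :
    ∫ z : V3 × V3, w z.1 * f z = ∫ x, w x * rhoOf f x := by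
  rw [Measure.volume_eq_prod, integral_prod]
  · congr 1; ext x
    rw [rhoOf, ← integral_const_mul]
  · rw [← Measure.volume_eq_prod]
    exact h.integrable_mul (w := fun z => w z.1) (by fun_prop)

/-- The standing data: a compactly supported polytropic steady state. -/
structure Steady (k E₀ : ℝ) (U₀ : V3 → ℝ) (f₀ : V3 × V3 → ℝ) : Prop where
  one_le : 1 ≤ k
  E_neg : E₀ < 0
  smooth : ContDiff ℝ 2 U₀
  rad : ∀ x y : V3, ‖x‖ = ‖y‖ → U₀ x = U₀ y
  inf : Tendsto U₀ (Filter.cocompact V3) (nhds 0)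
  ansatz : f₀ = fun z => polyAnsatz E₀ k (Erel U₀ z)
  cpt : HasCompactSupport f₀
  poisson : ∀ x : V3, U₀ x = -∫ y : V3, rhoOf f₀ y / ‖x - y‖

section
variable {k E₀ : ℝ} {U₀ : V3 → ℝ} {f₀ : V3 × V3 → ℝ}

lemma Steady.cont_Erel (h : Steady k E₀ U₀ f₀) : Continuous (Erel U₀) := by
  have := h.smooth.continuous
  unfold Erel; fun_prop

lemma Steady.cont (h : Steady k E₀ U₀ f₀) : Continuous f₀ := by
  have := h.cont_Erel
  have hk := h.one_le
  rw [h.ansatz]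
  unfold polyAnsatz
  apply Continuous.rpow_const (by fun_prop)
  intro z; right; linarith

lemma supp_of_compact {f : V3 × V3 → ℝ} (h : HasCompactSupport f) :
    ∃ R : ℝ, 0 < R ∧ ∀ z, R ≤ ‖z‖ → f z = 0 := by
  obtain ⟨R, hR⟩ := h.isCompact.isBounded.exists_norm_le
  refine ⟨max R 0 + 1, by positivity, fun z hz => ?_⟩
  apply image_eq_zero_of_notMem_tsupport
  intro hmem
  have := hR z hmem
  have := le_max_left R 0
  linarith

lemma Steady.f_nonneg (h : Steady k E₀ U₀ f₀) (z) : 0 ≤ f₀ z := by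
  rw [h.ansatz]; unfold polyAnsatz; positivity

lemma Steady.f_rot (h : Steady k E₀ U₀ f₀) (A : V3 ≃ₗᵢ[ℝ] V3) (x p : V3) :
    f₀ (A x, A p) = f₀ (x, p) := by
  rw [h.ansatz]; simp only [Erel, A.norm_map]
  rw [h.rad (A x) x (A.norm_map x)]

lemma Steady.adm (h : Steady k E₀ U₀ f₀) : Adm f₀ :=
  ⟨h.cont, supp_of_compact h.cpt, h.f_nonneg, fun A _ x p => h.f_rot A x p⟩

/-- Accessible states are admissible and equimeasurable with the steady state. -/
lemma Steady.dynAcc (h : Steady k E₀ U₀ f₀) {f : V3 × V3 → ℝ} (hf : f ∈ DynAcc f₀) :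
    Adm f ∧ (∀ F : ℝ → ℝ, ∫ z, F (f z) = ∫ z, F (f₀ z)) ∧ (∀ z, ∃ z', f z = f₀ z') := by
  obtain ⟨T, S, hT, hS, hST, hTS, hmp, hsym, rfl⟩ := hf
  let H : (V3 × V3) ≃ₜ (V3 × V3) :=
    { toFun := T, invFun := S, left_inv := hST, right_inv := hTS,
      continuous_toFun := hT.continuous, continuous_invFun := hS.continuous }
  refine ⟨⟨h.cont.comp hT.continuous, ?_, fun z => h.f_nonneg _, ?_⟩, ?_, fun z => ⟨T z, rfl⟩⟩
  · exact supp_of_compact (h.cpt.comp_homeomorph H)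
  · intro A hA x p
    simp only [Function.comp]
    rw [hsym.1 A hA x p, h.f_rot]
  · intro F
    exact hmp.integral_comp H.measurableEmbedding (fun z => F (f₀ z))

lemma Phi_cont {k E₀ : ℝ} (hk : 1 ≤ k) : Continuous (PhiRVP E₀ k) := by
  unfold PhiRVP
  apply Continuous.add (by fun_prop)
  apply Continuous.mul continuous_const
  exact continuous_id.rpow_const fun _ => Or.inr (by positivity)

lemma Phi_zero {k E₀ : ℝ} (hk : 1 ≤ k) : PhiRVP E₀ k 0 = 0 := by
  have : (k + 1) / k ≠ 0 := by positivity
  simp [PhiRVP, Real.zero_rpow this]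

/-- The integrand of the relative energy–Casimir functional. -/
def dens (E₀ k : ℝ) (U₀ : V3 → ℝ) (f f₀ : V3 × V3 → ℝ) (z : V3 × V3) : ℝ :=
  PhiRVP E₀ k (f z) - PhiRVP E₀ k (f₀ z) + Erel U₀ z * (f z - f₀ z)

lemma Steady.integrable_dens (h : Steady k E₀ U₀ f₀) {f : V3 × V3 → ℝ} (hf : Adm f) :
    Integrable (dens E₀ k U₀ f f₀) := by
  have hP := Phi_cont (E₀ := E₀) h.one_le
  have h0 := Phi_zero (E₀ := E₀) h.one_le
  refine (((hf.integrable_comp hP h0).sub (h.adm.integrable_comp hP h0)).add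
    ((hf.integrable_mul h.cont_Erel).sub (h.adm.integrable_mul h.cont_Erel))).congr ?_
  filter_upwards with z
  simp [dens]; ring

/-- The second order expansion of the energy–Casimir functional at the steady state. -/
lemma Steady.energy_identity (h : Steady k E₀ U₀ f₀) {f : V3 × V3 → ℝ} (hf : Adm f)
    (heq : ∀ F : ℝ → ℝ, ∫ z, F (f z) = ∫ z, F (f₀ z)) {s s₀ : ℝ → ℝ} {R R₀ : ℝ}
    (hs : Prof s R) (hs₀ : Prof s₀ R₀) (e : ∀ x, rhoOf f x = s ‖x‖)
    (e₀ : ∀ x, rhoOf f₀ x = s₀ ‖x‖) :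
    HCrel E₀ k f - HCrel E₀ k f₀ = (∫ z, dens E₀ k U₀ f f₀ z) -
      1 / 2 * ∫ r in Ioi (0:ℝ), mass (s - s₀) r ^ 2 / r ^ 2 := by
  have hP := Phi_cont (E₀ := E₀) h.one_le
  have h0 := Phi_zero (E₀ := E₀) h.one_le
  have hU := h.smooth.continuous
  have hsq : Continuous (fun z : V3 × V3 => Real.sqrt (1 + ‖z.2‖ ^ 2)) := by fun_prop
  have hUz : Continuous (fun z : V3 × V3 => U₀ z.1) := by fun_prop
  have hpot : ∀ (g : V3 × V3 → ℝ) (sg : ℝ → ℝ) (Rg : ℝ), Adm g → Prof sg Rg →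
      (∀ x, rhoOf g x = sg ‖x‖) →
      ∫ z : V3 × V3, U₀ z.1 * g z = -∫ r in Ioi (0:ℝ), mass sg r * mass s₀ r / r ^ 2 := by
    intro g sg Rg hg hsg hgs
    rw [hg.integral_pos_mul hU, ← pot_energy hsg hs₀, ← integral_neg]
    congr 1; ext x
    rw [h.poisson x, hgs]
    simp_rw [e₀]
    ring
  have hD : ∫ z, dens E₀ k U₀ f f₀ z =
      ((∫ z, PhiRVP E₀ k (f z)) - ∫ z, PhiRVP E₀ k (f₀ z)) +
      (((∫ z : V3 × V3, Real.sqrt (1 + ‖z.2‖ ^ 2) * f z) -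
        ∫ z : V3 × V3, Real.sqrt (1 + ‖z.2‖ ^ 2) * f₀ z) +
       ((∫ z : V3 × V3, U₀ z.1 * f z) - ∫ z : V3 × V3, U₀ z.1 * f₀ z)) := by
    have a1 := hf.integrable_comp hP h0
    have a2 := h.adm.integrable_comp hP h0
    have b1 := hf.integrable_mul hsq
    have b2 := h.adm.integrable_mul hsq
    have c1 := hf.integrable_mul hUz
    have c2 := h.adm.integrable_mul hUz
    have a : Integrable (fun z => PhiRVP E₀ k (f z) - PhiRVP E₀ k (f₀ z)) := a1.sub a2
    have b : Integrable (fun z : V3 × V3 => Real.sqrt (1 + ‖z.2‖ ^ 2) * f z -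
      Real.sqrt (1 + ‖z.2‖ ^ 2) * f₀ z) := b1.sub b2
    have c : Integrable (fun z : V3 × V3 => U₀ z.1 * f z - U₀ z.1 * f₀ z) := c1.sub c2
    rw [← integral_sub a1 a2, ← integral_sub b1 b2, ← integral_sub c1 c2,
      ← integral_add b c, ← integral_add a (by exact b.add c)]
    congr 1; ext z
    simp [dens, Erel]; ring
  rw [hD, hpot f s R hf hs e, hpot f₀ s₀ R₀ h.adm hs₀ e₀, HCrel, HCrel,
    coulomb_energy hs hs e e, coulomb_energy hs₀ hs₀ e₀ e₀]
  have i1 := integrable_mass_mul hs hs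
  have i2 := integrable_mass_mul hs hs₀
  have i3 := integrable_mass_mul hs₀ hs₀
  have hI : ∫ r in Ioi (0:ℝ), mass (s - s₀) r ^ 2 / r ^ 2 =
      (∫ r in Ioi (0:ℝ), mass s r * mass s r / r ^ 2) -
      2 * (∫ r in Ioi (0:ℝ), mass s r * mass s₀ r / r ^ 2) +
      ∫ r in Ioi (0:ℝ), mass s₀ r * mass s₀ r / r ^ 2 := by
    rw [← integral_const_mul, ← integral_sub i1 (i2.const_mul 2),
      ← integral_add (by exact i1.sub (i2.const_mul 2)) i3]
    congr 1; ext r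
    rw [mass_sub hs hs₀]; ring
  rw [hI, heq (PhiRVP E₀ k)]
  ring

end

/-! ### The relative Casimir energy density -/

/-- Lipschitz bound for the truncated power `x ↦ x₊ᵏ` on `(-∞, b]`. -/
lemma pospow_lip {k u v b : ℝ} (hk : 1 ≤ k) (huv : u ≤ v) (hvb : v ≤ b) (hb : 0 < b) :
    max v 0 ^ k - max u 0 ^ k ≤ k * b ^ (k - 1) * (v - u) := by
  have hL : 0 ≤ k * b ^ (k - 1) := by positivity
  rcases le_or_gt v 0 with hv | hv
  · rw [max_eq_right hv, max_eq_right (huv.trans hv), sub_self]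
    exact mul_nonneg hL (by linarith)
  · rw [max_eq_left hv.le]
    set w := max u 0
    have hw0 : 0 ≤ w := le_max_right _ _
    have hwu : u ≤ w := le_max_left _ _
    have hwv : w ≤ v := max_le huv hv.le
    have h1 := one_add_mul_self_le_rpow_one_add (s := w / v - 1) (by
      have : 0 ≤ w / v := by positivity
      linarith) hk
    rw [add_sub_cancel, Real.div_rpow hw0 hv.le, le_div_iff₀ (by positivity)] at h1
    have h2 : v ^ k = v ^ (k - 1) * v := by
      rw [← Real.rpow_add_one hv.ne']; congr 1; ring
    have h3 : v ^ k - w ^ k ≤ k * v ^ (k - 1) * (v - w) := by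
      have : (1 + k * (w / v - 1)) * v ^ k = v ^ k - k * v ^ (k - 1) * (v - w) := by
        rw [h2]; field_simp; ring
      linarith
    refine h3.trans ?_
    have h4 : v ^ (k - 1) ≤ b ^ (k - 1) := Real.rpow_le_rpow hv.le hvb (by linarith)
    have h5 : 0 ≤ v - w := by linarith
    calc k * v ^ (k - 1) * (v - w) ≤ k * b ^ (k - 1) * (v - w) := by gcongr
      _ ≤ k * b ^ (k - 1) * (v - u) := by gcongr

lemma pospow_hasDerivAt {k : ℝ} (hk : 1 ≤ k) (x : ℝ) :
    HasDerivAt (fun x : ℝ => max x 0 ^ (k + 1) / (k + 1)) (max x 0 ^ k) x := by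
  have hk1 : k + 1 ≠ 0 := by positivity
  rcases lt_trichotomy x 0 with hx | hx | hx
  · rw [max_eq_right hx.le, Real.zero_rpow (by positivity)]
    refine (hasDerivAt_const x (0:ℝ)).congr_of_eventuallyEq ?_
    filter_upwards [Iio_mem_nhds hx] with y hy
    rw [max_eq_right (le_of_lt hy), Real.zero_rpow hk1, zero_div]
  · subst hx
    rw [max_self, Real.zero_rpow (by positivity), hasDerivAt_iff_isLittleO_nhds_zero]
    simp only [zero_add, max_self, Real.zero_rpow hk1, zero_div, sub_zero, smul_zero]
    rw [Asymptotics.isLittleO_iff]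
    intro c hc
    filter_upwards [Metric.ball_mem_nhds (0:ℝ) (lt_min hc one_pos)] with y hy
    rw [Real.norm_eq_abs, Real.norm_eq_abs, abs_of_nonneg (by positivity)]
    rw [Metric.mem_ball, dist_zero_right, Real.norm_eq_abs] at hy
    have hy1 := hy.trans_le (min_le_left _ _)
    have hy2 := hy.trans_le (min_le_right _ _)
    rcases le_or_gt y 0 with h0 | h0
    · rw [max_eq_right h0, Real.zero_rpow hk1, zero_div]; positivity
    · rw [max_eq_left h0.le, abs_of_pos h0, Real.rpow_add_one h0.ne']
      rw [abs_of_pos h0] at hy1 hy2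
      have : y ^ k ≤ y := by
        calc y ^ k ≤ y ^ (1:ℝ) := Real.rpow_le_rpow_of_exponent_ge h0 hy2.le hk
          _ = y := Real.rpow_one y
      rw [div_le_iff₀ (by positivity)]
      have h5 : y ^ k * y ≤ c * y := by gcongr; linarith
      have : 0 < c * y := by positivity
      nlinarith
  · rw [max_eq_left hx.le]
    have h1 : HasDerivAt (fun x : ℝ => x ^ (k + 1) / (k + 1)) (x ^ k) x := by
      refine ((Real.hasDerivAt_rpow_const (Or.inl hx.ne')).div_const (k + 1)).congr_deriv ?_
      rw [add_sub_cancel_right]; field_simp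
    refine h1.congr_of_eventuallyEq ?_
    filter_upwards [Ioi_mem_nhds hx] with y hy
    rw [max_eq_left (le_of_lt hy)]

/-- The derivative of the truncated ansatz shifted by `Y`; it bounds the second derivative of the
Legendre transform of the Casimir function. -/
def hY (E₀ k Y e : ℝ) : ℝ := if e < E₀ + Y then k * (E₀ + Y - e) ^ (k - 1) else 0

lemma hY_nonneg {E₀ k Y e : ℝ} (hk : 1 ≤ k) : 0 ≤ hY E₀ k Y e := by
  unfold hY
  split_ifs with h
  · have : 0 ≤ E₀ + Y - e := by linarith
    positivity
  · exact le_rfl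

lemma pospow_taylor {k a y Y : ℝ} (hk : 1 ≤ k) (hy : |y| ≤ Y) (hb : 0 < a + Y) :
    max (a + y) 0 ^ (k + 1) / (k + 1) ≤
      max a 0 ^ (k + 1) / (k + 1) + y * max a 0 ^ k + 1 / 2 * y ^ 2 * (k * (a + Y) ^ (k - 1)) := by
  set L := k * (a + Y) ^ (k - 1)
  set g : ℝ → ℝ := fun y => max a 0 ^ (k + 1) / (k + 1) + y * max a 0 ^ k + 1 / 2 * y ^ 2 * L -
    max (a + y) 0 ^ (k + 1) / (k + 1) with hg
  have hd : ∀ x, HasDerivAt g (max a 0 ^ k + x * L - max (a + x) 0 ^ k) x := by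
    intro x
    have h1 : HasDerivAt (fun x : ℝ => max (a + x) 0 ^ (k + 1) / (k + 1)) (max (a + x) 0 ^ k) x := by
      have := (pospow_hasDerivAt hk (a + x)).comp_const_add a x
      exact this
    have h2 : HasDerivAt (fun y : ℝ => max a 0 ^ (k + 1) / (k + 1) + y * max a 0 ^ k +
        1 / 2 * y ^ 2 * L) (max a 0 ^ k + x * L) x := by
      refine ((((hasDerivAt_id x).mul_const (max a 0 ^ k)).const_add _).add
        (((hasDerivAt_pow 2 x).const_mul (1 / 2)).mul_const L)).congr_deriv ?_
      simp
    exact h2.sub h1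
  have hc : Continuous g := continuous_iff_continuousAt.2 fun x => (hd x).continuousAt
  have g0 : g 0 = 0 := by simp [hg]
  have habs := abs_le.1 hy
  suffices 0 ≤ g y by simp only [hg] at this; linarith
  rcases le_total 0 y with h0 | h0
  · have hmono : MonotoneOn g (Icc 0 Y) := by
      apply monotoneOn_of_deriv_nonneg (convex_Icc _ _) hc.continuousOn
      · intro x _; exact (hd x).differentiableAt.differentiableWithinAt
      · intro x hx
        rw [interior_Icc] at hx
        rw [(hd x).deriv]
        have := pospow_lip (u := a) (v := a + x) hk (by linarith [hx.1]) (by linarith [hx.2]) hb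
        have e : k * (a + Y) ^ (k - 1) * (a + x - a) = x * L := by ring
        linarith
    rw [← g0]
    exact hmono ⟨le_rfl, h0.trans habs.2⟩ ⟨h0, habs.2⟩ h0
  · have hanti : AntitoneOn g (Icc (-Y) 0) := by
      apply antitoneOn_of_deriv_nonpos (convex_Icc _ _) hc.continuousOn
      · intro x _; exact (hd x).differentiableAt.differentiableWithinAt
      · intro x hx
        rw [interior_Icc] at hx
        rw [(hd x).deriv]
        have := pospow_lip (u := a + x) (v := a) (b := a + Y) hk (by linarith [hx.2])
          (by linarith [hx.2, hx.1]) hb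
        have e : k * (a + Y) ^ (k - 1) * (a - (a + x)) = -(x * L) := by ring
        linarith
    rw [← g0]
    exact hanti ⟨habs.1, h0⟩ ⟨by linarith, le_rfl⟩ h0

/-- The pointwise relative energy as a function of the value `f` and the particle energy `e`. -/
def dpt (E₀ k e f : ℝ) : ℝ :=
  PhiRVP E₀ k f - PhiRVP E₀ k (polyAnsatz E₀ k e) + e * (f - polyAnsatz E₀ k e)

/-- Fenchel–Young lower bound for the relative energy with a perturbed potential. -/
lemma dpt_fenchel {E₀ k e f y Y : ℝ} (hk : 1 ≤ k) (hf : 0 ≤ f) (hy : |y| ≤ Y) :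
    y * (f - polyAnsatz E₀ k e) - 1 / 2 * y ^ 2 * hY E₀ k Y e ≤ dpt E₀ k e f := by
  set a := E₀ - e with ha
  have hk1 : 0 < k := by linarith
  have hyoung : max (a + y) 0 * f ≤
      max (a + y) 0 ^ (k + 1) / (k + 1) + k / (k + 1) * f ^ ((k + 1) / k) := by
    have hpq : (k + 1).HolderConjugate ((k + 1) / k) := by
      rw [Real.holderConjugate_iff]
      refine ⟨by linarith, ?_⟩
      field_simp; ring
    have := Real.young_inequality_of_nonneg (le_max_right (a + y) 0) hf hpq
    refine this.trans (le_of_eq ?_)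
    field_simp
  have h1 : (a + y) * f ≤ max (a + y) 0 * f := by gcongr; exact le_max_left _ _
  have hf0 : (max a 0 ^ k) ^ ((k + 1) / k) = max a 0 ^ (k + 1) := by
    rw [← Real.rpow_mul (le_max_right _ _)]; congr 1; field_simp
  have haa : a * max a 0 ^ k = max a 0 ^ (k + 1) := by
    rcases le_or_gt a 0 with h | h
    · rw [max_eq_right h, Real.zero_rpow hk1.ne', Real.zero_rpow (by positivity), mul_zero]
    · rw [max_eq_left h.le, Real.rpow_add_one h.ne']; ring
  have htay : max (a + y) 0 ^ (k + 1) / (k + 1) ≤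
      max a 0 ^ (k + 1) / (k + 1) + y * max a 0 ^ k + 1 / 2 * y ^ 2 * hY E₀ k Y e := by
    unfold hY
    split_ifs with h
    · have := pospow_taylor (a := a) hk hy (by linarith)
      rw [show E₀ + Y - e = a + Y by rw [ha]; ring]
      exact this
    · have h3 := (abs_le.1 hy)
      have hY0 : 0 ≤ Y := (abs_nonneg y).trans hy
      rw [max_eq_right (by linarith : a + y ≤ 0), max_eq_right (by linarith : a ≤ 0),
        Real.zero_rpow hk1.ne']
      simp
  have hkk : k / (k + 1) = 1 - 1 / (k + 1) := by field_simp; ring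
  simp only [dpt, polyAnsatz, PhiRVP]
  rw [← ha, hf0]
  have e1 : k / (k + 1) * max a 0 ^ (k + 1) = max a 0 ^ (k + 1) - max a 0 ^ (k + 1) / (k + 1) := by
    rw [hkk]; ring
  rw [e1]
  have e2 : e * (f - max a 0 ^ k) = E₀ * f - E₀ * max a 0 ^ k - a * f + max a 0 ^ (k + 1) := by
    rw [← haa, ha]; ring
  rw [e2]
  linarith

lemma dpt_nonneg {E₀ k e f : ℝ} (hk : 1 ≤ k) (hf : 0 ≤ f) : 0 ≤ dpt E₀ k e f := by
  simpa using dpt_fenchel (E₀ := E₀) (e := e) (y := 0) (Y := 0) hk hf (by simp)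

/-- Quadratic coercivity of the relative energy on bounded sets. -/
lemma dpt_coercive {E₀ k A M : ℝ} (hk : 1 ≤ k) (hA : 0 ≤ A) (hM : 0 < M) :
    ∃ c, 0 < c ∧ ∀ e f, 0 ≤ f → E₀ - e ≤ A → |f - polyAnsatz E₀ k e| ≤ M →
      c * (f - polyAnsatz E₀ k e) ^ 2 ≤ dpt E₀ k e f := by
  set H := k * (A + 1) ^ (k - 1)
  have hH : 0 < H := by positivity
  set η := min (1 / M) (1 / H)
  have hη : 0 < η := by positivity
  have hη1 : η * M ≤ 1 := by
    rw [← le_div_iff₀ hM]; exact min_le_left _ _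
  have hη2 : η * H ≤ 1 := by
    rw [← le_div_iff₀ hH]; exact min_le_right _ _
  refine ⟨1 / 2 * η, by positivity, fun e f hf hA' hfM => ?_⟩
  set d := f - polyAnsatz E₀ k e with hd
  have h1 := dpt_fenchel (E₀ := E₀) (e := e) (y := η * d) (Y := 1) hk hf (by
    rw [abs_mul, abs_of_pos hη]
    exact (by gcongr : η * |d| ≤ η * M).trans hη1)
  have h2 : hY E₀ k 1 e ≤ H := by
    unfold hY
    split_ifs with h
    · have : E₀ + 1 - e ≤ A + 1 := by linarith
      have h0 : 0 ≤ E₀ + 1 - e := by linarith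
      have := Real.rpow_le_rpow h0 this (by linarith : 0 ≤ k - 1)
      exact mul_le_mul_of_nonneg_left this (by linarith)
    · exact hH.le
  rw [← hd] at h1
  have h3 : (η * d) ^ 2 * hY E₀ k 1 e ≤ η * d ^ 2 := by
    calc (η * d) ^ 2 * hY E₀ k 1 e ≤ (η * d) ^ 2 * H := by gcongr
      _ = (η * H) * (η * d ^ 2) := by ring
      _ ≤ 1 * (η * d ^ 2) := by gcongr
      _ = _ := one_mul _
  nlinarith

/-- Above the cut-off energy the relative Casimir density grows at least linearly in `f`. -/
lemma dpt_linear {E₀ k e f : ℝ} (hk : 1 ≤ k) (hf : 0 ≤ f) (he : E₀ ≤ e) :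
    (e - E₀) * f ≤ dpt E₀ k e f := by
  have h0 : polyAnsatz E₀ k e = 0 := by
    unfold polyAnsatz
    rw [max_eq_right (by linarith), Real.zero_rpow (by linarith)]
  rw [dpt, h0, Phi_zero hk, PhiRVP]
  have : 0 ≤ k / (k + 1) * f ^ ((k + 1) / k) := by positivity
  nlinarith

/-- The relative Casimir density as the integral of `e - φ⁻¹` from the steady value `φ(e)` to `f`. -/
lemma dpt_eq_integral {E₀ k e f : ℝ} (hk : 1 ≤ k) :
    dpt E₀ k e f = ∫ u in (polyAnsatz E₀ k e)..f, (e - (E₀ - u ^ (1 / k))) := by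
  have hk1 : 0 < k := by linarith
  have h1k : 0 < 1 / k := by positivity
  have hc : Continuous (fun u : ℝ => u ^ (1 / k)) :=
    continuous_id.rpow_const fun _ => Or.inr h1k.le
  have e1 : ∀ u : ℝ, e - (E₀ - u ^ (1 / k)) = (e - E₀) + u ^ (1 / k) := fun u => by ring
  simp_rw [e1]
  rw [intervalIntegral.integral_add (by simp) (hc.intervalIntegrable _ _),
    intervalIntegral.integral_const, integral_rpow (Or.inl (by linarith))]
  have e2 : 1 / k + 1 = (k + 1) / k := by field_simp; ring
  rw [e2, dpt, PhiRVP, PhiRVP, smul_eq_mul]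
  field_simp
  ring

/-- Composing an `L`-Lipschitz function of the energy with the equimeasurable rearrangement costs
at most `L` times the relative energy. -/
lemma dpt_rearr {E₀ k e f L : ℝ} {b : ℝ → ℝ} (hk : 1 ≤ k) (hf : 0 ≤ f)
    (hb : ∀ x y, |b x - b y| ≤ L * |x - y|) (hbc : Continuous b) :
    |(∫ u in (0:ℝ)..f, b (E₀ - u ^ (1 / k))) - (∫ u in (0:ℝ)..(polyAnsatz E₀ k e),
      b (E₀ - u ^ (1 / k))) - b e * (f - polyAnsatz E₀ k e)| ≤ L * dpt E₀ k e f := by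
  have hk1 : 0 < k := by linarith
  have h1k : 0 < 1 / k := by positivity
  have hc : Continuous (fun u : ℝ => u ^ (1 / k)) :=
    continuous_id.rpow_const fun _ => Or.inr h1k.le
  have hcb : Continuous (fun u : ℝ => b (E₀ - u ^ (1 / k))) := by fun_prop
  set g := polyAnsatz E₀ k e with hg
  have hg0 : 0 ≤ g := by rw [hg, polyAnsatz]; positivity
  have hgk : g ^ (1 / k) = max (E₀ - e) 0 := by
    rw [hg, polyAnsatz, ← Real.rpow_mul (le_max_right _ _)]
    rw [mul_one_div_cancel hk1.ne', Real.rpow_one]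
  have e1 : (∫ u in (0:ℝ)..f, b (E₀ - u ^ (1 / k))) - (∫ u in (0:ℝ)..g,
      b (E₀ - u ^ (1 / k))) - b e * (f - g) = ∫ u in g..f, (b (E₀ - u ^ (1 / k)) - b e) := by
    rw [intervalIntegral.integral_interval_sub_left (hcb.intervalIntegrable _ _)
      (hcb.intervalIntegrable _ _),
      intervalIntegral.integral_sub (hcb.intervalIntegrable _ _) (by simp),
      intervalIntegral.integral_const, smul_eq_mul]
    ring
  rw [e1, dpt_eq_integral hk, ← hg, ← intervalIntegral.integral_const_mul]
  have hint : ∀ p q, IntervalIntegrable (fun u : ℝ => L * (e - (E₀ - u ^ (1 / k)))) volume p q :=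
    fun p q => Continuous.intervalIntegrable (by fun_prop) _ _
  rcases le_total g f with h | h
  · rw [← Real.norm_eq_abs]
    apply intervalIntegral.norm_integral_le_of_norm_le h _ (hint _ _)
    refine Eventually.of_forall fun u hu => ?_
    rw [Real.norm_eq_abs]
    refine (hb _ _).trans ?_
    have h2 : g ^ (1 / k) ≤ u ^ (1 / k) := Real.rpow_le_rpow hg0 hu.1.le h1k.le
    have h3 : E₀ - e ≤ g ^ (1 / k) := by rw [hgk]; exact le_max_left _ _
    rw [abs_of_nonpos (by linarith)]
    exact le_of_eq (by ring)
  · rw [intervalIntegral.integral_symm, abs_neg, intervalIntegral.integral_symm f g,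
      ← intervalIntegral.integral_neg, ← Real.norm_eq_abs]
    apply intervalIntegral.norm_integral_le_of_norm_le h _ (hint _ _).neg
    refine Eventually.of_forall fun u hu => ?_
    rw [Real.norm_eq_abs]
    refine (hb _ _).trans ?_
    have h2 : u ^ (1 / k) ≤ g ^ (1 / k) := Real.rpow_le_rpow (hf.trans hu.1.le) hu.2 h1k.le
    have hgp : 0 < g := lt_of_le_of_lt hf (hu.1.trans_le hu.2)
    have h4 : 0 < g ^ (1 / k) := Real.rpow_pos_of_pos hgp _
    have h3 : g ^ (1 / k) = E₀ - e := by
      rw [hgk] at h4 ⊢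
      rcases max_choice (E₀ - e) 0 with h5 | h5
      · exact h5
      · rw [h5] at h4; exact absurd h4 (lt_irrefl _)
    rw [abs_of_nonneg (by linarith)]
    refine le_of_eq ?_
    simp only [Pi.neg_apply]
    ring

/-! ### Perturbations of the steady state -/

/-- Integrating a Lipschitz function of the particle energy against a dynamically accessible
perturbation costs at most the Lipschitz constant times the relative Casimir energy: the linear
term is, up to that error, a Casimir functional, hence conserved. -/
lemma Steady.casimir {k E₀ : ℝ} {U₀ : V3 → ℝ} {f₀ : V3 × V3 → ℝ} (h : Steady k E₀ U₀ f₀)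
    {f : V3 × V3 → ℝ} (hf : Adm f)
    (heq : ∀ F : ℝ → ℝ, ∫ z, F (f z) = ∫ z, F (f₀ z)) {b : ℝ → ℝ} {L : ℝ}
    (hb : ∀ x y, |b x - b y| ≤ L * |x - y|) (hbc : Continuous b) :
    |∫ z, b (Erel U₀ z) * (f z - f₀ z)| ≤ L * ∫ z, dens E₀ k U₀ f f₀ z := by
  have hk := h.one_le
  have h1k : 0 ≤ 1 / k := by positivity
  have hc : Continuous (fun u : ℝ => u ^ (1 / k)) :=
    continuous_id.rpow_const fun _ => Or.inr h1k
  have hcb : Continuous (fun u : ℝ => b (E₀ - u ^ (1 / k))) := by fun_prop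
  set B : ℝ → ℝ := fun s => ∫ u in (0:ℝ)..s, b (E₀ - u ^ (1 / k)) with hB
  have hBc : Continuous B := intervalIntegral.continuous_primitive
    (fun a b => hcb.intervalIntegrable a b) 0
  have hB0 : B 0 = 0 := by simp [hB]
  have hbE : Continuous (fun z => b (Erel U₀ z)) := hbc.comp h.cont_Erel
  have i1 := hf.integrable_comp hBc hB0
  have i2 := h.adm.integrable_comp hBc hB0
  have i3 : Integrable (fun z => B (f z) - B (f₀ z)) := i1.sub i2
  have i4 : Integrable (fun z => b (Erel U₀ z) * (f z - f₀ z)) :=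
    ((hf.integrable_mul hbE).sub (h.adm.integrable_mul hbE)).congr
      (Eventually.of_forall fun z => by simp only [Pi.sub_apply]; ring)
  have e1 : ∫ z, (B (f z) - B (f₀ z)) = 0 := by
    rw [integral_sub i1 i2, heq B, sub_self]
  have e2 : ∫ z, b (Erel U₀ z) * (f z - f₀ z) =
      - ∫ z, (B (f z) - B (f₀ z) - b (Erel U₀ z) * (f z - f₀ z)) := by
    rw [integral_sub i3 i4, e1]; ring
  rw [e2, abs_neg, ← integral_const_mul, ← Real.norm_eq_abs]
  refine norm_integral_le_of_norm_le ((h.integrable_dens hf).const_mul L) ?_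
  refine Eventually.of_forall fun z => ?_
  have := dpt_rearr (E₀ := E₀) (e := Erel U₀ z) hk (hf.nonneg z) hb hbc
  rw [Real.norm_eq_abs]
  have e3 : dens E₀ k U₀ f f₀ z = dpt E₀ k (Erel U₀ z) (f z) := by
    rw [dens, dpt, h.ansatz]
  have e4 : f₀ z = polyAnsatz E₀ k (Erel U₀ z) := by rw [h.ansatz]
  rw [e3, e4]
  exact this

/-! ### Radial description of the steady state -/

/-- Radial data of a nontrivial steady state: potential `u`, mass function `m` and density `ρ` as
functions of the radius. Beyond the radius `R₁` no particle of energy at most `1 / 2` is found. -/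
structure RadData (u m ρ : ℝ → ℝ) (R₁ c : ℝ) : Prop where
  ucont : Continuous u
  uder : ∀ r, 0 < r → HasDerivAt u (m r / r ^ 2) r
  mder : ∀ r, HasDerivAt m (4 * Real.pi * r ^ 2 * ρ r) r
  m0 : m 0 = 0
  rho_nonneg : ∀ r, 0 ≤ r → 0 ≤ ρ r
  rho_cont : Continuous ρ
  Rpos : 0 < R₁
  ubig : ∀ r, R₁ ≤ r → -(1 / 2) < u r
  cpos : 0 < c
  mlow : ∀ r, 0 < r → r ≤ R₁ → c * r ^ 3 ≤ m r

lemma mass_mono {s : ℝ → ℝ} {R : ℝ} (h : Prof s R) (hp : ∀ r, 0 ≤ r → 0 ≤ s r) {a b : ℝ}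
    (ha : 0 ≤ a) (hab : a ≤ b) : mass s a ≤ mass s b := by
  have : MonotoneOn (mass s) (Ici 0) := by
    apply monotoneOn_of_deriv_nonneg (convex_Ici 0) (mass_cont h).continuousOn
    · exact fun x _ => (mass_hasDerivAt h x).differentiableAt.differentiableWithinAt
    · intro x hx
      rw [interior_Ici] at hx
      rw [(mass_hasDerivAt h x).deriv]
      have := hp x (le_of_lt hx)
      positivity
  exact this ha (ha.trans hab) hab

/-- A mass function whose density is positive at the centre grows at least cubically. -/
lemma mass_low {s : ℝ → ℝ} {R : ℝ} (h : Prof s R) (hp : ∀ r, 0 ≤ r → 0 ≤ s r) (h0 : 0 < s 0)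
    (R₁ : ℝ) (hR₁ : 0 < R₁) : ∃ c, 0 < c ∧ ∀ r, 0 < r → r ≤ R₁ → c * r ^ 3 ≤ mass s r := by
  have hev : ∀ᶠ t in 𝓝 (0:ℝ), s 0 / 2 < s t :=
    h.cont.continuousAt.eventually_const_lt (by linarith)
  obtain ⟨η, hη, hb⟩ := Metric.eventually_nhds_iff.1 hev
  have hlow : ∀ r, 0 < r → r < η → (2 * Real.pi / 3 * s 0) * r ^ 3 ≤ mass s r := by
    intro r hr hrη
    have hmono : MonotoneOn (fun t => mass s t - (2 * Real.pi / 3 * s 0) * t ^ 3) (Icc 0 r) := by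
      have hd : ∀ t, HasDerivAt (fun t => mass s t - (2 * Real.pi / 3 * s 0) * t ^ 3)
          (4 * Real.pi * t ^ 2 * (s t - s 0 / 2)) t := fun t =>
        ((mass_hasDerivAt h t).sub ((hasDerivAt_pow 3 t).const_mul _)).congr_deriv (by
          push_cast; ring)
      apply monotoneOn_of_deriv_nonneg (convex_Icc 0 r)
        (fun t _ => (hd t).continuousAt.continuousWithinAt)
        (fun t _ => (hd t).differentiableAt.differentiableWithinAt)
      intro t ht
      rw [interior_Icc] at ht
      rw [(hd t).deriv]
      have : s 0 / 2 < s t := hb (by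
        rw [Real.dist_eq, sub_zero, abs_of_pos ht.1]; exact ht.2.trans hrη)
      have h3 : 0 ≤ s t - s 0 / 2 := by linarith
      positivity
    have := hmono (left_mem_Icc.2 hr.le) (right_mem_Icc.2 hr.le) hr.le
    simp only [mass_zero] at this
    linarith
  set b := 2 * Real.pi / 3 * s 0
  have hbp : 0 < b := by positivity
  have hη2 : 0 < η / 2 := by positivity
  have hmη : 0 < mass s (η / 2) := lt_of_lt_of_le (by positivity) (hlow (η / 2) hη2 (by linarith))
  refine ⟨min b (mass s (η / 2) / R₁ ^ 3), by positivity, fun r hr hrR => ?_⟩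
  rcases lt_or_ge r (η / 2) with hc | hc
  · refine le_trans ?_ (hlow r hr (by linarith))
    gcongr
    exact min_le_left _ _
  · refine le_trans ?_ (mass_mono h hp hη2.le hc)
    calc min b (mass s (η / 2) / R₁ ^ 3) * r ^ 3 ≤ mass s (η / 2) / R₁ ^ 3 * R₁ ^ 3 := by
          gcongr; exact min_le_right _ _
      _ = mass s (η / 2) := by field_simp

section
variable {k E₀ : ℝ} {U₀ : V3 → ℝ} {f₀ : V3 × V3 → ℝ}

/-- A fixed unit vector. -/
def unitV : V3 := EuclideanSpace.single 0 1

lemma norm_unitV : ‖unitV‖ = 1 := by simp [unitV]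

/-- The radial potential, mass and density of a nontrivial steady state satisfy the properties
collected in `RadData`. -/
lemma Steady.exists_rad (h : Steady k E₀ U₀ f₀) (hne : f₀ ≠ 0) {s₀ : ℝ → ℝ} {R₀ : ℝ}
    (hs₀ : Prof s₀ R₀) (e₀ : ∀ x, rhoOf f₀ x = s₀ ‖x‖) :
    ∃ u R₁ c, RadData u (mass s₀) s₀ R₁ c ∧ ∀ x, U₀ x = u ‖x‖ := by
  set u : ℝ → ℝ := fun r => U₀ (r • unitV) with hu
  have huc : Continuous u := by have := h.smooth.continuous; fun_prop
  have hux : ∀ x, U₀ x = u ‖x‖ := fun x => h.rad _ _ (by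
    rw [norm_smul, norm_unitV, mul_one, norm_norm])
  have huw : ∀ r, 0 < r → u r = - wpot s₀ R₀ r := by
    intro r hr
    have hn : ‖r • unitV‖ = r := by rw [norm_smul, norm_unitV, mul_one, Real.norm_of_nonneg hr.le]
    have hx : r • unitV ≠ 0 := by
      rw [← norm_pos_iff, hn]; exact hr
    have h1 := newton_pot hs₀ hx
    rw [hn] at h1
    rw [hu]
    simp only
    rw [h.poisson, ← h1]
    simp_rw [e₀]
  have hsp : ∀ r, 0 ≤ r → 0 ≤ s₀ r := by
    intro r hr
    have hn : ‖r • unitV‖ = r := by rw [norm_smul, norm_unitV, mul_one, Real.norm_of_nonneg hr]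
    rw [← hn, ← e₀]
    exact integral_nonneg fun p => h.f_nonneg _
  have hder : ∀ r, 0 < r → HasDerivAt u (mass s₀ r / r ^ 2) r := by
    intro r hr
    have := (wpot_hasDerivAt hs₀ hr).neg
    rw [neg_neg] at this
    refine this.congr_of_eventuallyEq ?_
    filter_upwards [Ioi_mem_nhds hr] with t ht
    exact huw t ht
  have hu0 : Tendsto u atTop (𝓝 0) := by
    refine h.inf.comp ?_
    rw [← Metric.cobounded_eq_cocompact, ← tendsto_norm_atTop_iff_cobounded]
    refine tendsto_abs_atTop_atTop.congr fun r => ?_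
    rw [norm_smul, norm_unitV, mul_one, Real.norm_eq_abs]
  obtain ⟨R', hR'⟩ := eventually_atTop.1 (hu0.eventually_const_lt (show -(1/2) < (0:ℝ) by norm_num))
  have humono : ∀ r, 0 ≤ r → u 0 ≤ u r := by
    have : MonotoneOn u (Ici 0) := by
      apply monotoneOn_of_deriv_nonneg (convex_Ici 0) huc.continuousOn
      · intro x hx
        rw [interior_Ici] at hx
        exact (hder x hx).differentiableAt.differentiableWithinAt
      · intro x hx
        rw [interior_Ici] at hx
        rw [(hder x hx).deriv]
        have h1 := mass_mono hs₀ hsp le_rfl (le_of_lt hx)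
        rw [mass_zero] at h1
        positivity
    exact fun r hr => this self_mem_Ici hr hr
  have h00 : 0 < s₀ 0 := by
    obtain ⟨z, hz⟩ := Function.ne_iff.1 hne
    have hz1 : Erel U₀ z < E₀ := by
      by_contra hcon
      apply hz
      have hk := h.one_le
      rw [h.ansatz]
      simp only [polyAnsatz]
      rw [max_eq_right (by linarith), Real.zero_rpow (by linarith), Pi.zero_apply]
    have h1 : Erel U₀ (0, 0) < E₀ := by
      refine lt_of_le_of_lt ?_ hz1
      simp only [Erel]
      have a1 : U₀ (0:V3) ≤ U₀ z.1 := by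
        rw [hux, hux z.1, norm_zero]; exact humono _ (norm_nonneg _)
      have a2 : √(1 + ‖(0:V3)‖ ^ 2) ≤ √(1 + ‖z.2‖ ^ 2) := by
        apply Real.sqrt_le_sqrt
        rw [norm_zero]
        have := sq_nonneg ‖z.2‖
        linarith
      linarith
    have h2 : 0 < f₀ (0, 0) := by
      rw [h.ansatz]
      simp only [polyAnsatz]
      apply Real.rpow_pos_of_pos
      rw [lt_max_iff]; left; linarith
    have h3 := e₀ 0
    rw [norm_zero] at h3
    rw [← h3, rhoOf]
    obtain ⟨R, hR, hz⟩ := h.adm.supp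
    have hc : Continuous (fun p : V3 => f₀ (0, p)) := h.cont.comp (by fun_prop)
    refine hc.integral_pos_of_hasCompactSupport_nonneg_nonzero ?_ (fun p => h.f_nonneg _) (x := 0)
      h2.ne'
    apply HasCompactSupport.intro (isCompact_closedBall (0 : V3) R)
    intro p hp
    apply hz
    rw [mem_closedBall_zero_iff, not_le] at hp
    exact hp.le.trans (le_max_right _ _)
  obtain ⟨c, hc, hcl⟩ := mass_low hs₀ hsp h00 (max R' 1) (by positivity)
  exact ⟨u, max R' 1, c, ⟨huc, hder, mass_hasDerivAt hs₀, mass_zero s₀, hsp, hs₀.cont, by positivity,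
    fun r hr => hR' r ((le_max_left _ _).trans hr), hc, hcl⟩, hux⟩

end

/-! ### The turning radius -/

/-- The function `q(e, r) = ε - 1 / ε - m(r) / r` with `ε = e - u(r)` (truncated below at `1`). Up to
a positive factor it is the radial derivative of the phase-space weight `(r² (ε² - 1)) ^ (3 / 2)`. -/
def qf (u m : ℝ → ℝ) (e r : ℝ) : ℝ := (max (e - u r) 1 - 1 / max (e - u r) 1) - m r / r

/-- The radius at which `q(e, ·)` changes sign from positive to negative. -/
def rst (u m : ℝ → ℝ) (e : ℝ) : ℝ := sSup {r | 0 < r ∧ 1 < e - u r ∧ 0 ≤ qf u m e r}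

/-- A lower bound for `-∂q / ∂r`, uniform in the energy. -/
def tht (ρ : ℝ → ℝ) (c₄ s : ℝ) : ℝ := 4 * Real.pi * ρ s * s + c₄ * s

/-- The constant in the linear part of `tht`. -/
def cfour (u : ℝ → ℝ) (c : ℝ) : ℝ := c / (|u 0| + 1) ^ 2

section
variable {u m ρ : ℝ → ℝ} {R₁ c : ℝ}

lemma RadData.cfour_pos (hd : RadData u m ρ R₁ c) : 0 < cfour u c := by
  have := hd.cpos
  unfold cfour; positivity

lemma RadData.mnonneg (hd : RadData u m ρ R₁ c) {r : ℝ} (hr : 0 ≤ r) : 0 ≤ m r := by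
  have : MonotoneOn m (Ici 0) := by
    apply monotoneOn_of_deriv_nonneg (convex_Ici 0)
      (fun x _ => (hd.mder x).continuousAt.continuousWithinAt)
    · exact fun x _ => (hd.mder x).differentiableAt.differentiableWithinAt
    · intro x hx
      rw [interior_Ici] at hx
      rw [(hd.mder x).deriv]
      have := hd.rho_nonneg x (le_of_lt hx)
      positivity
  have := this self_mem_Ici hr hr
  rwa [hd.m0] at this

lemma RadData.umono (hd : RadData u m ρ R₁ c) {r t : ℝ} (hr : 0 ≤ r) (hrt : r ≤ t) :
    u r ≤ u t := by
  have : MonotoneOn u (Ici 0) := by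
    apply monotoneOn_of_deriv_nonneg (convex_Ici 0) hd.ucont.continuousOn
    · intro x hx
      rw [interior_Ici] at hx
      exact (hd.uder x hx).differentiableAt.differentiableWithinAt
    · intro x hx
      rw [interior_Ici] at hx
      rw [(hd.uder x hx).deriv]
      have := hd.mnonneg (le_of_lt hx)
      positivity
  exact this hr (hr.trans hrt) hrt

lemma RadData.lt_R (hd : RadData u m ρ R₁ c) {e r : ℝ} (he : e ≤ 1 / 2) (h1 : 1 < e - u r) :
    r < R₁ := by
  by_contra hcon
  have := hd.ubig r (not_lt.1 hcon)
  linarith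

lemma RadData.eps_le (hd : RadData u m ρ R₁ c) {e r : ℝ} (he : e ≤ 1 / 2) (hr : 0 ≤ r) :
    e - u r ≤ |u 0| + 1 := by
  have := hd.umono le_rfl hr
  have := neg_abs_le (u 0)
  linarith

lemma RadData.qf_deriv (hd : RadData u m ρ R₁ c) {e r : ℝ} (hr : 0 < r) (h1 : 1 < e - u r) :
    HasDerivAt (qf u m e) (-(4 * Real.pi * ρ r * r + m r / r ^ 2 / (e - u r) ^ 2)) r := by
  have hne : e - u r ≠ 0 := by linarith
  have h2 : HasDerivAt (fun r => ((e - u r) - 1 / (e - u r)) - m r / r)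
      (-(4 * Real.pi * ρ r * r + m r / r ^ 2 / (e - u r) ^ 2)) r := by
    have a := (hd.uder r hr).const_sub e
    have b := (hasDerivAt_const r (1:ℝ)).div a hne
    refine ((a.sub b).sub ((hd.mder r).div (hasDerivAt_id r) hr.ne')).congr_deriv ?_
    simp only [id]
    field_simp
    ring
  refine h2.congr_of_eventuallyEq ?_
  have : ∀ᶠ t in 𝓝 r, 1 < e - u t :=
    (continuousAt_const.sub hd.ucont.continuousAt).eventually_const_lt h1
  filter_upwards [this] with t ht
  rw [qf, max_eq_left ht.le]

lemma RadData.tht_cont (hd : RadData u m ρ R₁ c) (c₄ : ℝ) : Continuous (tht ρ c₄) := by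
  have := hd.rho_cont
  unfold tht; fun_prop

lemma RadData.tht_pos (hd : RadData u m ρ R₁ c) {s : ℝ} (hs : 0 < s) : 0 < tht ρ (cfour u c) s := by
  have := hd.rho_nonneg s hs.le
  have := hd.cfour_pos
  unfold tht; positivity

/-- On the allowed region `q` decreases at a rate of at least `θ`, uniformly in the energy. -/
lemma RadData.qf_drop (hd : RadData u m ρ R₁ c) {e t r : ℝ} (he : e ≤ 1 / 2) (ht : 0 < t)
    (htr : t ≤ r) (h1 : 1 < e - u r) :
    ∫ s in t..r, tht ρ (cfour u c) s ≤ qf u m e t - qf u m e r := by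
  have hc := hd.tht_cont (cfour u c)
  have hlt : ∀ x ∈ Icc t r, 1 < e - u x := fun x hx => by
    have := hd.umono (ht.le.trans hx.1) hx.2
    linarith
  have hder : ∀ x ∈ Icc t r, HasDerivAt (fun x => qf u m e x + ∫ s in t..x, tht ρ (cfour u c) s)
      (-(4 * Real.pi * ρ x * x + m x / x ^ 2 / (e - u x) ^ 2) + tht ρ (cfour u c) x) x := by
    intro x hx
    exact (hd.qf_deriv (ht.trans_le hx.1) (hlt x hx)).add
      (intervalIntegral.integral_hasDerivAt_right (hc.intervalIntegrable _ _)
        (hc.stronglyMeasurableAtFilter _ _) hc.continuousAt)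
  have hanti : AntitoneOn (fun x => qf u m e x + ∫ s in t..x, tht ρ (cfour u c) s) (Icc t r) := by
    apply antitoneOn_of_deriv_nonpos (convex_Icc t r)
      (fun x hx => (hder x hx).continuousAt.continuousWithinAt)
    · intro x hx
      rw [interior_Icc] at hx
      exact (hder x (Ioo_subset_Icc_self hx)).differentiableAt.differentiableWithinAt
    · intro x hx
      rw [interior_Icc] at hx
      have hxI := Ioo_subset_Icc_self hx
      rw [(hder x hxI).deriv]
      have hx0 : 0 < x := ht.trans_le hxI.1
      have hε := hlt x hxI
      have hεm := hd.eps_le he hx0.le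
      have hm := hd.mlow x hx0 (hd.lt_R he hε).le
      have hcp := hd.cpos
      have key : cfour u c * x ≤ m x / x ^ 2 / (e - u x) ^ 2 := by
        rw [div_div, le_div_iff₀ (by positivity)]
        have h3 : (e - u x) ^ 2 ≤ (|u 0| + 1) ^ 2 := by gcongr
        calc cfour u c * x * (x ^ 2 * (e - u x) ^ 2) ≤ cfour u c * x * (x ^ 2 * (|u 0| + 1) ^ 2) := by
              have := hd.cfour_pos
              gcongr
          _ = c * x ^ 3 := by
              unfold cfour
              have : |u 0| + 1 ≠ 0 := by positivity
              field_simp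
          _ ≤ m x := hm
      unfold tht
      linarith
  have := hanti (left_mem_Icc.2 htr) (right_mem_Icc.2 htr) htr
  simp only [intervalIntegral.integral_same, add_zero] at this
  linarith

lemma RadData.qf_anti (hd : RadData u m ρ R₁ c) {e t r : ℝ} (he : e ≤ 1 / 2) (ht : 0 < t)
    (htr : t ≤ r) (h1 : 1 < e - u r) : qf u m e r ≤ qf u m e t := by
  have := hd.qf_drop he ht htr h1
  have h2 : 0 ≤ ∫ s in t..r, tht ρ (cfour u c) s :=
    intervalIntegral.integral_nonneg htr fun s hs => (hd.tht_pos (ht.trans_le hs.1)).le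
  linarith

lemma qf_energy {e e' r : ℝ} (h : e ≤ e') :
    qf u m e r ≤ qf u m e' r ∧ qf u m e' r ≤ qf u m e r + 2 * (e' - e) := by
  unfold qf
  set a := max (e - u r) 1 with ha
  set b := max (e' - u r) 1 with hb
  have hab : a ≤ b := max_le_max (by linarith) le_rfl
  have ha1 : 1 ≤ a := le_max_right _ _
  have hba : b - a ≤ e' - e := by
    have : b ≤ a + (e' - e) := by
      apply max_le
      · have : e - u r ≤ a := le_max_left _ _
        linarith
      · linarith
    linarith
  have h1 : 1 / b ≤ 1 / a := one_div_le_one_div_of_le (by linarith) hab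
  have h2 : 1 / a - 1 / b ≤ b - a := by
    have : 1 / a - 1 / b = (b - a) / (a * b) := by
      have : a ≠ 0 := by linarith
      have : b ≠ 0 := by linarith
      field_simp
    rw [this]
    apply div_le_self (by linarith)
    nlinarith
  constructor <;> linarith

lemma RadData.rst_bdd (hd : RadData u m ρ R₁ c) {e : ℝ} (he : e ≤ 1 / 2) :
    BddAbove {r | 0 < r ∧ 1 < e - u r ∧ 0 ≤ qf u m e r} :=
  ⟨R₁, fun _ hr => (hd.lt_R he hr.2.1).le⟩

lemma rst_nonneg (e : ℝ) : 0 ≤ rst u m e := Real.sSup_nonneg fun _ hr => hr.1.le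

lemma RadData.rst_le (hd : RadData u m ρ R₁ c) {e : ℝ} (he : e ≤ 1 / 2) : rst u m e ≤ R₁ :=
  Real.sSup_le (fun _ hr => (hd.lt_R he hr.2.1).le) hd.Rpos.le

lemma RadData.rst_below (hd : RadData u m ρ R₁ c) {e r : ℝ} (he : e ≤ 1 / 2) (hr : 0 < r)
    (h : r < rst u m e) : 1 < e - u r ∧ 0 ≤ qf u m e r := by
  have hne : {r | 0 < r ∧ 1 < e - u r ∧ 0 ≤ qf u m e r}.Nonempty := by
    by_contra hcon
    rw [not_nonempty_iff_eq_empty] at hcon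
    rw [rst, hcon, Real.sSup_empty] at h
    linarith
  obtain ⟨t, ht, hrt⟩ := exists_lt_of_lt_csSup hne h
  have := hd.umono hr.le hrt.le
  exact ⟨by linarith [ht.2.1], ht.2.2.trans (hd.qf_anti he hr hrt.le ht.2.1)⟩

lemma RadData.rst_above (hd : RadData u m ρ R₁ c) {e r : ℝ} (he : e ≤ 1 / 2) (hr : 0 < r)
    (h : rst u m e < r) : qf u m e r ≤ 0 := by
  by_cases h1 : 1 < e - u r
  · by_contra hcon
    exact absurd (le_csSup (hd.rst_bdd he) ⟨hr, h1, (not_le.1 hcon).le⟩) (not_le.2 h)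
  · unfold qf
    rw [max_eq_right (not_lt.1 h1)]
    have := hd.mnonneg hr.le
    have : 0 ≤ m r / r := by positivity
    linarith

lemma RadData.rst_mono (hd : RadData u m ρ R₁ c) {e e' : ℝ} (h : e ≤ e') (he : e' ≤ 1 / 2) :
    rst u m e ≤ rst u m e' := by
  apply Real.sSup_le _ (rst_nonneg _)
  intro r hr
  exact le_csSup (hd.rst_bdd he) ⟨hr.1, by linarith [hr.2.1], hr.2.2.trans (qf_energy h).1⟩

/-- Away from the centre the radius `r*` is Lipschitz in the energy: `q` depends on the energy with
a bounded derivative and decreases in `r` at the rate `θ`. -/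
lemma RadData.rst_lip (hd : RadData u m ρ R₁ c) {e e' a : ℝ} (h : e ≤ e') (he : e' ≤ 1 / 2)
    (ha : 0 < a) :
    max (rst u m e') a - max (rst u m e) a ≤ 2 / (cfour u c * a) * (e' - e) := by
  have hc4 := hd.cfour_pos
  have hnn : 0 ≤ 2 / (cfour u c * a) * (e' - e) := by
    have : 0 ≤ e' - e := by linarith
    positivity
  set p := max (rst u m e) a with hp
  rcases le_or_gt (rst u m e') p with h1 | h1
  · have : max (rst u m e') a ≤ p := max_le h1 (le_max_right _ _)
    linarith
  rw [max_eq_left (by linarith [le_max_right (rst u m e) a])]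
  set K := 2 / (cfour u c * a) * (e' - e) with hK
  by_contra hcon
  rw [not_le] at hcon
  set d := rst u m e' - p with hdd
  set t := p + (d - K) / 4 with htd
  set r := rst u m e' - (d - K) / 4 with hrd
  have hpa : a ≤ p := le_max_right _ _
  have hpr : rst u m e ≤ p := le_max_left _ _
  have ht : p < t := by linarith
  have htr : t ≤ r := by linarith
  have hr : r < rst u m e' := by linarith
  obtain ⟨b1, b2⟩ := hd.rst_below he (by linarith) hr
  have h2 := hd.qf_drop he (by linarith) htr b1
  have h3 := hd.rst_above (h.trans he) (by linarith) (lt_of_le_of_lt hpr ht)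
  have h4 := (qf_energy (u := u) (m := m) (r := t) h).2
  have h5 : cfour u c * a * (r - t) ≤ ∫ s in t..r, tht ρ (cfour u c) s := by
    have : ∫ _ in t..r, cfour u c * a = cfour u c * a * (r - t) := by
      rw [intervalIntegral.integral_const, smul_eq_mul, mul_comm]
    rw [← this]
    apply intervalIntegral.integral_mono_on htr (by simp)
      ((hd.tht_cont _).intervalIntegrable _ _)
    intro s hs
    have hs0 : a ≤ s := by linarith [hs.1]
    have := hd.rho_nonneg s (by linarith)
    have : 0 ≤ 4 * Real.pi * ρ s * s := by
      have : 0 ≤ s := by linarith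
      positivity
    have : cfour u c * a ≤ cfour u c * s := by gcongr
    unfold tht
    linarith
  have h6 : cfour u c * a * (r - t) ≤ 2 * (e' - e) := by linarith
  have h7 : r - t ≤ K := by
    rw [hK, div_mul_eq_mul_div, le_div_iff₀ (by positivity)]
    linarith
  linarith

end

/-! ### The perturbation potential, cut off near the centre -/

/-- The field strength `δ(s) / s²`, made continuous by freezing the denominator for `s ≤ a`. -/
def gf (δ : ℝ → ℝ) (a s : ℝ) : ℝ := δ s / max s a ^ 2

/-- The potential of the field `δ(s) / s²` restricted to `s > a`, vanishing for `s ≥ B`. -/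
def Vf (δ : ℝ → ℝ) (a B r : ℝ) : ℝ := ∫ s in B..(max r a), gf δ a s

section
variable {δ : ℝ → ℝ} {a B N : ℝ}

lemma gf_cont (hδ : Continuous δ) (ha : 0 < a) : Continuous (gf δ a) := by
  unfold gf
  apply hδ.div (by fun_prop)
  intro s
  have : 0 < max s a := lt_max_of_lt_right ha
  positivity

lemma Vf_cont (hδ : Continuous δ) (ha : 0 < a) : Continuous (Vf δ a B) :=
  (intervalIntegral.continuous_primitive
    (fun p q => (gf_cont hδ ha).intervalIntegrable p q) B).comp (by fun_prop)

lemma Vf_sub (hδ : Continuous δ) (ha : 0 < a) (r t : ℝ) :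
    Vf δ a B t - Vf δ a B r = ∫ s in (max r a)..(max t a), gf δ a s := by
  unfold Vf
  rw [intervalIntegral.integral_interval_sub_left ((gf_cont hδ ha).intervalIntegrable _ _)
    ((gf_cont hδ ha).intervalIntegrable _ _)]

lemma gf_bound (ha : 0 < a) (hN : ∀ s, 0 ≤ s → |δ s| ≤ N) {s : ℝ} (hs : 0 ≤ s) :
    |gf δ a s| ≤ N / max s a ^ 2 := by
  have : 0 < max s a := lt_max_of_lt_right ha
  rw [gf, abs_div, abs_of_pos (show 0 < max s a ^ 2 by positivity)]
  gcongr
  exact hN s hs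

lemma Vf_lip (hδ : Continuous δ) (ha : 0 < a) (hN : ∀ s, 0 ≤ s → |δ s| ≤ N) (r t : ℝ) :
    |Vf δ a B t - Vf δ a B r| ≤ N / a ^ 2 * |max t a - max r a| := by
  rw [Vf_sub hδ ha, ← Real.norm_eq_abs]
  apply intervalIntegral.norm_integral_le_of_norm_le_const
  intro s hs
  have has : a ≤ s := by
    rcases le_total (max r a) (max t a) with h | h
    · rw [uIoc_of_le h] at hs
      exact (le_max_right _ _).trans hs.1.le
    · rw [uIoc_of_ge h] at hs
      exact (le_max_right _ _).trans hs.1.le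
  have hs0 : 0 ≤ s := ha.le.trans has
  refine (gf_bound ha hN hs0).trans ?_
  have : 0 ≤ N := (abs_nonneg _).trans (hN s hs0)
  gcongr
  exact le_max_right _ _

lemma Vf_bound (ha : 0 < a) (haB : a ≤ B)
    (hN : ∀ s, 0 ≤ s → |δ s| ≤ N) (hz : ∀ s, B ≤ s → δ s = 0) (r : ℝ) :
    |Vf δ a B r| ≤ N / a := by
  have hN0 : 0 ≤ N := (abs_nonneg _).trans (hN 0 le_rfl)
  rcases le_total B (max r a) with h | h
  · have : Vf δ a B r = 0 := by
      rw [Vf, intervalIntegral.integral_congr (g := fun _ => 0)]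
      · simp
      · intro s hs
        rw [uIcc_of_le h] at hs
        simp [gf, hz s hs.1]
    rw [this, abs_zero]
    positivity
  · rw [Vf, intervalIntegral.integral_symm, abs_neg]
    set p := max r a
    have hp : a ≤ p := le_max_right _ _
    have hp0 : 0 < p := ha.trans_le hp
    have hd : ∀ s ∈ uIcc p B, HasDerivAt (fun s => -(N / s)) (N / s ^ 2) s := by
      intro s hs
      rw [uIcc_of_le h] at hs
      have : s ≠ 0 := by linarith [hs.1]
      refine ((hasDerivAt_const s N).div (hasDerivAt_id s) this).neg.congr_deriv ?_
      simp only [id]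
      ring
    have hci : IntervalIntegrable (fun s => N / s ^ 2) volume p B := by
      apply ContinuousOn.intervalIntegrable
      apply continuousOn_const.div (by fun_prop)
      intro s hs
      rw [uIcc_of_le h] at hs
      have : s ≠ 0 := by linarith [hs.1]
      positivity
    have h1 : |∫ s in p..B, gf δ a s| ≤ ∫ s in p..B, N / s ^ 2 := by
      rw [← Real.norm_eq_abs]
      apply intervalIntegral.norm_integral_le_of_norm_le h _ hci
      refine Eventually.of_forall fun s hs => ?_
      have hs0 : 0 < s := hp0.trans hs.1
      have := gf_bound ha hN hs0.le
      rwa [max_eq_left (hp.trans hs.1.le)] at this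
    rw [intervalIntegral.integral_eq_sub_of_hasDerivAt hd hci] at h1
    refine h1.trans ?_
    have h2 : 0 ≤ N / B := by
      have : 0 < B := by linarith
      positivity
    have h3 : N / p ≤ N / a := by gcongr
    linarith

end

section
variable {σ : ℝ → ℝ} {R a B : ℝ}

/-- Integration by parts: the truncated potential paired with the density perturbation gives
minus the field energy outside the ball of radius `a`. -/
lemma Vf_pairing (h : Prof σ R) (ha : 0 < a) (haB : a ≤ B) (hRB : R ≤ B) :
    ∫ r in Ioi (0:ℝ), 4 * Real.pi * r ^ 2 * (Vf (mass σ) a B r * σ r) =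
      - ∫ s in a..B, mass σ s ^ 2 / s ^ 2 := by
  have hσ := h.cont
  have hδ := mass_cont h
  have hV := Vf_cont (B := B) hδ ha
  have hg := gf_cont hδ ha
  have hc : Continuous (fun r => 4 * Real.pi * r ^ 2 * (Vf (mass σ) a B r * σ r)) := by fun_prop
  have hB : 0 ≤ B := by linarith
  have e1 : ∫ r in Ioi (0:ℝ), 4 * Real.pi * r ^ 2 * (Vf (mass σ) a B r * σ r) =
      ∫ r in (0:ℝ)..B, 4 * Real.pi * r ^ 2 * (Vf (mass σ) a B r * σ r) := by
    rw [intervalIntegral.integral_of_le hB]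
    apply setIntegral_eq_of_subset_of_forall_sdiff_eq_zero measurableSet_Ioi
    · exact Ioc_subset_Ioi_self
    · intro x hx
      have : B < x := by
        by_contra hcon
        exact hx.2 ⟨hx.1, not_lt.1 hcon⟩
      rw [h.zero x (by linarith)]
      ring
  rw [e1, ← intervalIntegral.integral_add_adjacent_intervals (hc.intervalIntegrable 0 a)
    (hc.intervalIntegrable a B)]
  have e2 : ∫ r in (0:ℝ)..a, 4 * Real.pi * r ^ 2 * (Vf (mass σ) a B r * σ r) =
      Vf (mass σ) a B a * mass σ a := by
    rw [mass, ← intervalIntegral.integral_const_mul]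
    apply intervalIntegral.integral_congr
    intro r hr
    rw [uIcc_of_le ha.le] at hr
    simp only [Vf, max_eq_right hr.2, max_self]
    ring
  have hd : ∀ r ∈ uIcc a B, HasDerivAt (fun r => mass σ r * ∫ s in B..r, gf (mass σ) a s)
      (4 * Real.pi * r ^ 2 * σ r * (∫ s in B..r, gf (mass σ) a s) +
        mass σ r * gf (mass σ) a r) r := fun r _ =>
    (mass_hasDerivAt h r).mul (intervalIntegral.integral_hasDerivAt_right
      (hg.intervalIntegrable _ _) (hg.stronglyMeasurableAtFilter _ _) hg.continuousAt)
  have hpc : Continuous (fun r => ∫ s in B..r, gf (mass σ) a s) :=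
    intervalIntegral.continuous_primitive (fun p q => hg.intervalIntegrable p q) B
  have c1 : Continuous (fun r => 4 * Real.pi * r ^ 2 * σ r * (∫ s in B..r, gf (mass σ) a s)) := by
    fun_prop
  have c2 : Continuous (fun r => mass σ r * gf (mass σ) a r) := by fun_prop
  have e3 := intervalIntegral.integral_eq_sub_of_hasDerivAt hd
    ((c1.add c2).intervalIntegrable _ _)
  rw [intervalIntegral.integral_add (c1.intervalIntegrable _ _) (c2.intervalIntegrable _ _),
    intervalIntegral.integral_same, mul_zero] at e3
  have e4 : ∫ r in a..B, 4 * Real.pi * r ^ 2 * (Vf (mass σ) a B r * σ r) =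
      ∫ r in a..B, 4 * Real.pi * r ^ 2 * σ r * (∫ s in B..r, gf (mass σ) a s) := by
    apply intervalIntegral.integral_congr
    intro r hr
    rw [uIcc_of_le haB] at hr
    simp only [Vf, max_eq_left hr.1]
    ring
  have e5 : ∫ r in a..B, mass σ r * gf (mass σ) a r = ∫ s in a..B, mass σ s ^ 2 / s ^ 2 := by
    apply intervalIntegral.integral_congr
    intro r hr
    rw [uIcc_of_le haB] at hr
    simp only [gf, max_eq_left hr.1]
    ring
  have e6 : Vf (mass σ) a B a = ∫ s in B..a, gf (mass σ) a s := by rw [Vf, max_self]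
  rw [e2, e4, e6]
  rw [e5] at e3
  linarith

/-- A perturbation of zero total mass has no field outside a ball containing its support, so its field
energy is that of the ball, split at the radius `a`. -/
lemma field_split (h : Prof σ R) (hz : mass σ R = 0) (ha : 0 < a) (haB : a ≤ B) (hRB : R ≤ B) :
    ∫ r in Ioi (0:ℝ), mass σ r ^ 2 / r ^ 2 =
      (∫ r in (0:ℝ)..a, mass σ r ^ 2 / r ^ 2) + ∫ r in a..B, mass σ r ^ 2 / r ^ 2 := by
  have hi : IntegrableOn (fun r => mass σ r ^ 2 / r ^ 2) (Ioi 0) := by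
    simpa only [sq] using integrable_mass_mul h h
  have hB : 0 ≤ B := by linarith
  rw [intervalIntegral.integral_add_adjacent_intervals, intervalIntegral.integral_of_le hB]
  · apply setIntegral_eq_of_subset_of_forall_sdiff_eq_zero measurableSet_Ioi
    · exact Ioc_subset_Ioi_self
    · intro x hx
      have : B < x := by
        by_contra hcon
        exact hx.2 ⟨hx.1, not_lt.1 hcon⟩
      rw [mass_eq_of_ge h (by linarith), hz]
      simp
  · rw [intervalIntegrable_iff_integrableOn_Ioc_of_le ha.le]
    exact hi.mono_set Ioc_subset_Ioi_self
  · rw [intervalIntegrable_iff_integrableOn_Ioc_of_le haB]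
    exact hi.mono_set fun x hx => ha.trans hx.1

end

/-! ### Radius–energy coordinates on phase space -/

/-- The relativistic momentum weight `ε √(ε² - 1)`, zero for `ε ≤ 1`. -/
def wgt (ε : ℝ) : ℝ := max ε 0 * √(max ε 0 ^ 2 - 1)

lemma wgt_nonneg (ε : ℝ) : 0 ≤ wgt ε := by unfold wgt; positivity

lemma wgt_cont : Continuous wgt := by unfold wgt; fun_prop

lemma wgt_zero {ε : ℝ} (h : ε ≤ 1) : wgt ε = 0 := by
  unfold wgt
  rw [Real.sqrt_eq_zero_of_nonpos, mul_zero]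
  have h1 : max ε 0 ≤ 1 := max_le h zero_le_one
  have h2 : 0 ≤ max ε 0 := le_max_right _ _
  nlinarith

lemma lint_momentum {G : ℝ → ℝ≥0∞} (hG : Measurable G) (v : ℝ) :
    ∫⁻ p : V3, G (√(1 + ‖p‖ ^ 2) + v) =
      ∫⁻ e, ENNReal.ofReal (4 * Real.pi * wgt (e - v)) * G e := by
  have hm : Measurable (fun t : ℝ => G (√(1 + t ^ 2) + v)) := hG.comp (by fun_prop)
  rw [lint_radial (fun t => G (√(1 + t ^ 2) + v)) hm]
  have himg : (fun t : ℝ => √(1 + t ^ 2) + v) '' Ioi 0 = Ioi (1 + v) := by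
    ext e
    simp only [mem_image, mem_Ioi]
    constructor
    · rintro ⟨t, ht, rfl⟩
      have : 1 < √(1 + t ^ 2) := by
        rw [Real.lt_sqrt (by norm_num)]
        nlinarith
      linarith
    · intro he
      have h1 : 0 < (e - v) ^ 2 - 1 := by nlinarith
      refine ⟨√((e - v) ^ 2 - 1), Real.sqrt_pos.2 h1, ?_⟩
      rw [Real.sq_sqrt h1.le, add_sub_cancel, Real.sqrt_sq (by linarith)]
      ring
  have e1 : ∫⁻ e, ENNReal.ofReal (4 * Real.pi * wgt (e - v)) * G e =
      ∫⁻ e in Ioi (1 + v), ENNReal.ofReal (4 * Real.pi * wgt (e - v)) * G e := by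
    rw [← lintegral_indicator measurableSet_Ioi]
    congr 1; ext e
    by_cases he : e ∈ Ioi (1 + v)
    · rw [indicator_of_mem he]
    · rw [indicator_of_notMem he, wgt_zero]
      · simp
      · have : e ≤ 1 + v := not_lt.1 he
        linarith
  rw [e1, ← himg]
  have hd : ∀ t ∈ Ioi (0:ℝ), HasDerivWithinAt (fun t : ℝ => √(1 + t ^ 2) + v)
      (t / √(1 + t ^ 2)) (Ioi 0) t := by
    intro t ht
    have h1 : (1 + t ^ 2) ≠ 0 := by positivity
    have h2 : HasDerivAt (fun t : ℝ => 1 + t ^ 2) (2 * t) t :=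
      ((hasDerivAt_pow 2 t).const_add 1).congr_deriv (by push_cast; ring)
    refine (((h2.sqrt h1).add_const v).congr_deriv ?_).hasDerivWithinAt
    have : √(1 + t ^ 2) ≠ 0 := by positivity
    field_simp
  have hinj : InjOn (fun t : ℝ => √(1 + t ^ 2) + v) (Ioi 0) := by
    intro a ha b hb hab
    have h1 : √(1 + a ^ 2) = √(1 + b ^ 2) := by simpa using hab
    rw [Real.sqrt_inj (by positivity) (by positivity)] at h1
    have ha' : 0 < a := ha
    have hb' : 0 < b := hb
    nlinarith
  rw [lintegral_image_eq_lintegral_abs_deriv_mul measurableSet_Ioi hd hinj]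
  apply setLIntegral_congr_fun measurableSet_Ioi
  intro t ht
  have ht' : 0 < t := ht
  simp only
  rw [← mul_assoc, ← ENNReal.ofReal_mul (abs_nonneg _)]
  congr 2
  have h1 : 0 < √(1 + t ^ 2) := by positivity
  rw [abs_of_nonneg (by positivity), wgt, add_sub_cancel_right, max_eq_left h1.le,
    Real.sq_sqrt (by positivity), add_sub_cancel_left, Real.sqrt_sq ht'.le]
  field_simp

/-- Phase-space integrals of functions of radius and energy, in the coordinates `(r, e)`. -/
lemma lint_phase {F : ℝ → ℝ → ℝ≥0∞} (hF : Measurable (Function.uncurry F)) {U₀ : V3 → ℝ}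
    {u : ℝ → ℝ} (hu : Continuous u) (hux : ∀ x, U₀ x = u ‖x‖) :
    ∫⁻ z : V3 × V3, F ‖z.1‖ (Erel U₀ z) =
      ∫⁻ r in Ioi (0:ℝ), ∫⁻ e, ENNReal.ofReal (16 * Real.pi ^ 2 * (r ^ 2 * wgt (e - u r))) *
        F r e := by
  have hw := wgt_cont
  have hEm : Measurable (fun z : V3 × V3 => F ‖z.1‖ (Erel U₀ z)) := by
    have : Measurable (fun z : V3 × V3 => ((‖z.1‖, √(1 + ‖z.2‖ ^ 2) + u ‖z.1‖) : ℝ × ℝ)) := by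
      fun_prop
    have h2 := hF.comp this
    simpa only [Function.comp_def, Function.uncurry, Erel, hux] using h2
  rw [Measure.volume_eq_prod, lintegral_prod _ hEm.aemeasurable]
  have e1 : ∀ x : V3, ∫⁻ p : V3, F ‖(x, p).1‖ (Erel U₀ (x, p)) =
      ∫⁻ e, ENNReal.ofReal (4 * Real.pi * wgt (e - u ‖x‖)) * F ‖x‖ e := by
    intro x
    have hG : Measurable (F ‖x‖) := hF.comp (by fun_prop : Measurable fun e : ℝ => (‖x‖, e))
    rw [← lint_momentum hG]
    simp only [Erel, hux]
  simp_rw [e1]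
  have hmeas : Measurable (fun r => ∫⁻ e, ENNReal.ofReal (4 * Real.pi * wgt (e - u r)) * F r e) := by
    apply Measurable.lintegral_prod_right'
      (f := fun q : ℝ × ℝ => ENNReal.ofReal (4 * Real.pi * wgt (q.2 - u q.1)) * F q.1 q.2)
    exact Measurable.mul (by fun_prop) hF
  rw [lint_radial (fun r => ∫⁻ e, ENNReal.ofReal (4 * Real.pi * wgt (e - u r)) * F r e) hmeas]
  apply setLIntegral_congr_fun measurableSet_Ioi
  intro r hr
  simp only
  rw [← lintegral_const_mul']
  · congr 1; ext e
    rw [← mul_assoc, ← ENNReal.ofReal_mul (by positivity)]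
    congr 2
    ring
  · exact ENNReal.ofReal_ne_top

/-! ### An Antonov-type inequality on energy surfaces -/

/-- `(ε² - 1) ^ (3 / 2)`, zero for `ε ≤ 1`. -/
def Zf (ε : ℝ) : ℝ := √(max ε 0 ^ 2 - 1) ^ 3

lemma Zf_nonneg (ε : ℝ) : 0 ≤ Zf ε := by unfold Zf; positivity

lemma Zf_cont : Continuous Zf := by unfold Zf; fun_prop

lemma Zf_zero {ε : ℝ} (h : ε ≤ 1) : Zf ε = 0 := by
  unfold Zf
  rw [Real.sqrt_eq_zero_of_nonpos, zero_pow three_ne_zero]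
  have h1 : max ε 0 ≤ 1 := max_le h zero_le_one
  have h2 : 0 ≤ max ε 0 := le_max_right _ _
  nlinarith

lemma sqrt_cube_hasDerivAt (x : ℝ) : HasDerivAt (fun x : ℝ => √x ^ 3) (3 / 2 * √x) x := by
  have e : (fun x : ℝ => √x ^ 3) = fun x => x * √x := by
    ext x
    rcases le_total 0 x with h | h
    · rw [pow_succ, Real.sq_sqrt h]
    · rw [Real.sqrt_eq_zero_of_nonpos h]; simp
  rw [e]
  rcases eq_or_ne x 0 with rfl | hx
  · rw [hasDerivAt_iff_tendsto_slope]
    have h1 : Tendsto (fun x : ℝ => √x) (𝓝[≠] 0) (𝓝 (3 / 2 * √0)) := by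
      have := Real.continuous_sqrt.tendsto 0
      rw [Real.sqrt_zero] at this
      simp only [Real.sqrt_zero, mul_zero]
      exact this.mono_left nhdsWithin_le_nhds
    refine h1.congr' ?_
    filter_upwards [self_mem_nhdsWithin] with y hy
    have hy' : y ≠ 0 := hy
    simp [slope, hy']
  · refine ((hasDerivAt_id x).mul (Real.hasDerivAt_sqrt hx)).congr_deriv ?_
    rcases lt_or_gt_of_ne hx with h | h
    · rw [Real.sqrt_eq_zero_of_nonpos h.le]; simp
    · have h1 : √x ≠ 0 := by positivity
      simp only [id]
      have h2 := Real.mul_self_sqrt h.le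
      field_simp
      nlinarith

lemma Zf_hasDerivAt (ε : ℝ) : HasDerivAt Zf (3 * wgt ε) ε := by
  have h1 : HasDerivAt (fun x : ℝ => max x 0 ^ 2 - 1) (2 * max ε 0) ε := by
    have h := ((pospow_hasDerivAt le_rfl ε).const_mul 2).sub_const 1
    refine (h.congr_deriv (by rw [Real.rpow_one])).congr_of_eventuallyEq
      (Eventually.of_forall fun x => ?_)
    simp only
    rw [show (1:ℝ) + 1 = 2 by norm_num, Real.rpow_two]
    ring
  have h2 := (sqrt_cube_hasDerivAt (max ε 0 ^ 2 - 1)).comp ε h1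
  refine h2.congr_deriv ?_
  unfold wgt
  ring

/-- The primitive `(r² (ε² - 1)) ^ (3 / 2) / 3` of the weight `r² ε √(ε² - 1) q(e, r)`. -/
def sh (u : ℝ → ℝ) (e r : ℝ) : ℝ := 1 / 3 * r ^ 3 * Zf (e - u r)

/-- A globally continuous form of the radial derivative of `sh`. -/
def shD (u m : ℝ → ℝ) (e r : ℝ) : ℝ := r ^ 2 * Zf (e - u r) - r * wgt (e - u r) * m r

section
variable {u m ρ : ℝ → ℝ} {R₁ c : ℝ}

lemma sh_nonneg {e r : ℝ} (hr : 0 ≤ r) : 0 ≤ sh u e r := by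
  have := Zf_nonneg (e - u r)
  unfold sh; positivity

lemma RadData.sh_hasDerivAt (hd : RadData u m ρ R₁ c) {e r : ℝ} (hr : 0 < r) :
    HasDerivAt (sh u e) (shD u m e r) r := by
  have h1 := (Zf_hasDerivAt (e - u r)).comp r ((hd.uder r hr).const_sub e)
  have h2 : HasDerivAt (fun r : ℝ => 1 / 3 * r ^ 3) (r ^ 2) r :=
    ((hasDerivAt_pow 3 r).const_mul (1 / 3)).congr_deriv (by push_cast; ring)
  refine (h2.mul h1).congr_deriv ?_
  simp only [Function.comp, shD]
  field_simp
  ring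

lemma RadData.mcont (hd : RadData u m ρ R₁ c) : Continuous m :=
  continuous_iff_continuousAt.2 fun r => (hd.mder r).continuousAt

lemma RadData.shD_cont (hd : RadData u m ρ R₁ c) (e : ℝ) : Continuous (shD u m e) := by
  have := hd.mcont
  have := hd.ucont
  have := Zf_cont
  have := wgt_cont
  unfold shD; fun_prop

lemma shD_eq {e r : ℝ} (hr : 0 < r) :
    r ^ 2 * wgt (e - u r) * qf u m e r = shD u m e r := by
  rcases le_or_gt (e - u r) 1 with h | h
  · rw [shD, wgt_zero h, Zf_zero h]; ring
  · have h0 : 0 < e - u r := by linarith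
    have hX : 0 ≤ (e - u r) ^ 2 - 1 := by nlinarith
    unfold shD qf Zf wgt
    rw [max_eq_left h.le, max_eq_left h0.le]
    set ε := e - u r
    have h3 : √(ε ^ 2 - 1) ^ 3 = √(ε ^ 2 - 1) * (ε ^ 2 - 1) := by
      rw [pow_succ, Real.sq_sqrt hX]; ring
    rw [h3]
    field_simp

/-- Below `r*` the function `q` is nonnegative, so weight times `|q|` is the derivative of `sh`. -/
lemma RadData.sh_below (hd : RadData u m ρ R₁ c) {e s : ℝ} (he : e ≤ 1 / 2) (hs : 0 < s)
    (h : s ≤ rst u m e) :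
    ∫⁻ r in Ioo 0 s, ENNReal.ofReal (r ^ 2 * wgt (e - u r) * |qf u m e r|) ≤
      ENNReal.ofReal (sh u e s) := by
  have hc := hd.shD_cont e
  have hshc : Continuous (sh u e) := by
    have := hd.ucont
    have := Zf_cont
    unfold sh; fun_prop
  have hnn : ∀ r ∈ Ioo 0 s, r ^ 2 * wgt (e - u r) * |qf u m e r| = shD u m e r := by
    intro r hr
    have := (hd.rst_below he hr.1 (hr.2.trans_le h)).2
    rw [abs_of_nonneg this, shD_eq hr.1]
  have h1 := intervalIntegral.integral_eq_sub_of_hasDerivAt_of_le hs.le hshc.continuousOn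
    (fun x hx => hd.sh_hasDerivAt hx.1) (hc.intervalIntegrable _ _)
  have h0 : sh u e 0 = 0 := by simp [sh]
  rw [h0, sub_zero, intervalIntegral.integral_of_le hs.le, integral_Ioc_eq_integral_Ioo] at h1
  rw [← h1, ofReal_integral_eq_lintegral_ofReal]
  · apply le_of_eq
    apply setLIntegral_congr_fun measurableSet_Ioo
    intro r hr
    simp only
    rw [hnn r hr]
  · exact hc.integrableOn_Icc.mono_set Ioo_subset_Icc_self
  · filter_upwards [ae_restrict_mem measurableSet_Ioo] with r hr
    rw [← hnn r hr]
    have := wgt_nonneg (e - u r)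
    simp only [Pi.zero_apply]
    positivity

/-- Above `r*` the function `q` is nonpositive, so weight times `|q|` is minus the derivative of `sh`. -/
lemma RadData.sh_above (hd : RadData u m ρ R₁ c) {e s : ℝ} (he : e ≤ 1 / 2) (hs : 0 < s)
    (h : rst u m e < s) :
    ∫⁻ r in Ici s, ENNReal.ofReal (r ^ 2 * wgt (e - u r) * |qf u m e r|) ≤
      ENNReal.ofReal (sh u e s) := by
  have hc := hd.shD_cont e
  have hz : ∀ r, R₁ ≤ r → wgt (e - u r) = 0 := fun r hr => wgt_zero (by
    by_contra hcon
    exact absurd (hd.lt_R he (not_le.1 hcon)) (not_lt.2 hr))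
  have hsub : ∫⁻ r in Ici s, ENNReal.ofReal (r ^ 2 * wgt (e - u r) * |qf u m e r|) ≤
      ∫⁻ r in Icc s (max s R₁), ENNReal.ofReal (r ^ 2 * wgt (e - u r) * |qf u m e r|) := by
    rw [← lintegral_indicator measurableSet_Ici, ← lintegral_indicator measurableSet_Icc]
    apply lintegral_mono
    intro r
    by_cases hr : r ∈ Ici s
    · by_cases hr2 : r ≤ max s R₁
      · rw [indicator_of_mem hr, indicator_of_mem (show r ∈ Icc s (max s R₁) from ⟨hr, hr2⟩)]
      · rw [indicator_of_mem hr, hz r (le_of_lt ((le_max_right _ _).trans_lt (not_le.1 hr2)))]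
        simp
    · rw [indicator_of_notMem hr]; exact zero_le
  refine hsub.trans ?_
  have hnn : ∀ r ∈ Ioc s (max s R₁), r ^ 2 * wgt (e - u r) * |qf u m e r| = - shD u m e r := by
    intro r hr
    have := hd.rst_above he (hs.trans hr.1) (h.trans hr.1)
    rw [abs_of_nonpos this, ← shD_eq (hs.trans hr.1)]
    ring
  have hle : s ≤ max s R₁ := le_max_left _ _
  have h1 := intervalIntegral.integral_eq_sub_of_hasDerivAt (a := s) (b := max s R₁)
    (f := fun r => - sh u e r) (f' := fun r => - shD u m e r)
    (fun x hx => by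
      rw [uIcc_of_le hle] at hx
      exact (hd.sh_hasDerivAt (hs.trans_le hx.1)).neg) (hc.neg.intervalIntegrable _ _)
  have h2 : sh u e (max s R₁) ≥ 0 := sh_nonneg (hs.le.trans hle)
  rw [intervalIntegral.integral_of_le hle] at h1
  rw [← setLIntegral_congr Ioc_ae_eq_Icc]
  refine le_trans ?_ (ENNReal.ofReal_le_ofReal
    (show ∫ r in Ioc s (max s R₁), - shD u m e r ≤ sh u e s by linarith))
  rw [ofReal_integral_eq_lintegral_ofReal]
  · apply le_of_eq
    apply setLIntegral_congr_fun measurableSet_Ioc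
    intro r hr
    simp only
    rw [hnn r hr]
  · exact hc.neg.integrableOn_Icc.mono_set Ioc_subset_Icc_self
  · filter_upwards [ae_restrict_mem measurableSet_Ioc] with r hr
    rw [← hnn r hr]
    have := wgt_nonneg (e - u r)
    simp only [Pi.zero_apply]
    positivity

end

/-! ### The Antonov-type inequality at a fixed energy -/

/-- Weighted Cauchy–Schwarz inequality on an interval. -/
lemma cs_interval {g θ : ℝ → ℝ} {p q : ℝ} (hpq : p ≤ q) (hg : Continuous g) (hθ : Continuous θ)
    (hpos : ∀ s ∈ Icc p q, 0 < θ s) :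
    (∫ s in p..q, g s) ^ 2 ≤ (∫ s in p..q, g s ^ 2 / θ s) * ∫ s in p..q, θ s := by
  rcases hpq.eq_or_lt with rfl | hlt
  · simp
  set G := ∫ s in p..q, g s with hG
  set T := ∫ s in p..q, θ s with hT
  set A := ∫ s in p..q, g s ^ 2 / θ s with hA
  have hTpos : 0 < T :=
    intervalIntegral.intervalIntegral_pos_of_pos_on (hθ.intervalIntegrable _ _)
      (fun s hs => hpos s (Ioo_subset_Icc_self hs)) hlt
  have i1 : IntervalIntegrable (fun s => g s ^ 2 / θ s) volume p q := by
    apply ContinuousOn.intervalIntegrable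
    rw [uIcc_of_le hpq]
    exact (hg.pow 2).continuousOn.div hθ.continuousOn fun s hs => (hpos s hs).ne'
  have i2 : IntervalIntegrable g volume p q := hg.intervalIntegrable _ _
  have i3 : IntervalIntegrable θ volume p q := hθ.intervalIntegrable _ _
  have e1 : ∫ s in p..q, (T ^ 2 * (g s ^ 2 / θ s) - 2 * T * G * g s + G ^ 2 * θ s) =
      T ^ 2 * A - 2 * T * G * G + G ^ 2 * T := by
    rw [intervalIntegral.integral_add ((i1.const_mul _).sub (i2.const_mul _)) (i3.const_mul _),
      intervalIntegral.integral_sub (i1.const_mul _) (i2.const_mul _)]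
    simp only [intervalIntegral.integral_const_mul]
    rw [← hA, ← hG, ← hT]
  have e2 : 0 ≤ ∫ s in p..q, (T ^ 2 * (g s ^ 2 / θ s) - 2 * T * G * g s + G ^ 2 * θ s) := by
    apply intervalIntegral.integral_nonneg hpq
    intro s hs
    have h1 := hpos s hs
    have : T ^ 2 * (g s ^ 2 / θ s) - 2 * T * G * g s + G ^ 2 * θ s =
        (T * g s - G * θ s) ^ 2 / θ s := by
      field_simp
      ring
    rw [this]
    positivity
  rw [e1] at e2
  have : 0 ≤ T * (A * T - G ^ 2) := by linarith
  have := nonneg_of_mul_nonneg_right this hTpos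
  linarith

section
variable {u m ρ : ℝ → ℝ} {R₁ c : ℝ} {δ : ℝ → ℝ} {a B : ℝ}

/-- The oscillation of the potential between a radius and the turning radius. -/
lemma RadData.osc (hd : RadData u m ρ R₁ c) (hδ : Continuous δ) (ha : 0 < a) {e r : ℝ}
    (he : e ≤ 1 / 2) (hr : 0 < r) (h1 : 1 < e - u r) :
    (Vf δ a B r - Vf δ a B (rst u m e)) ^ 2 ≤ |qf u m e r| *
      ∫ s in (max (min r (rst u m e)) a)..(max (max r (rst u m e)) a),
        gf δ a s ^ 2 / tht ρ (cfour u c) s := by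
  have hg := gf_cont hδ ha
  have hθ := hd.tht_cont (cfour u c)
  have hV := Vf_cont (B := B) hδ ha
  set R := rst u m e with hR
  set w : ℝ → ℝ := fun s => gf δ a s ^ 2 / tht ρ (cfour u c) s with hw
  have hwnn : ∀ s, a ≤ s → 0 ≤ w s := fun s hs => by
    have := hd.tht_pos (ha.trans_le hs)
    simp only [hw]; positivity
  have hwi : ∀ p q, a ≤ p → a ≤ q → IntervalIntegrable w volume p q := by
    intro p q hp hq
    apply ContinuousOn.intervalIntegrable
    apply (hg.pow 2).continuousOn.div hθ.continuousOn
    intro s hs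
    have : a ≤ s := le_trans (le_min hp hq) hs.1
    exact (hd.tht_pos (ha.trans_le this)).ne'
  have hmono : ∀ p t q q', a ≤ p → p ≤ t → t ≤ q → q ≤ q' →
      ∫ s in t..q, w s ≤ ∫ s in p..q', w s := by
    intro p t q q' hp hpt htq hqq
    apply intervalIntegral.integral_mono_interval hpt htq hqq _
      (hwi p q' hp (hp.trans (hpt.trans (htq.trans hqq))))
    filter_upwards [ae_restrict_mem measurableSet_Ioc] with s hs
    exact hwnn s (hp.trans hs.1.le)
  have hVmax : ∀ t, Vf δ a B (max t a) = Vf δ a B t := fun t => by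
    simp only [Vf, max_eq_left (le_max_right t a)]
  have hstep : ∀ p q, a ≤ p → p ≤ q → 1 < e - u q →
      (Vf δ a B q - Vf δ a B p) ^ 2 ≤ (∫ s in p..q, w s) * (qf u m e p - qf u m e q) := by
    intro p q hp hpq h
    rw [Vf_sub hδ ha, max_eq_left hp, max_eq_left (hp.trans hpq)]
    refine (cs_interval hpq hg hθ fun s hs => hd.tht_pos (ha.trans_le (hp.trans hs.1))).trans ?_
    apply mul_le_mul_of_nonneg_left (hd.qf_drop he (ha.trans_le hp) hpq h)
    exact intervalIntegral.integral_nonneg hpq fun s hs => hwnn s (hp.trans hs.1)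
  rcases lt_trichotomy r R with hrR | hrR | hrR
  · rw [min_eq_left hrR.le, max_eq_right hrR.le]
    set p := max r a with hp
    have hap : a ≤ p := le_max_right _ _
    rcases le_or_gt R a with hRa | hRa
    · have e1 : Vf δ a B r = Vf δ a B R := by
        rw [← hVmax r, ← hVmax R, max_eq_right hRa, max_eq_right (hrR.le.trans hRa)]
      rw [e1, sub_self, zero_pow two_ne_zero]
      apply mul_nonneg (abs_nonneg _)
      exact intervalIntegral.integral_nonneg (max_le_max hrR.le le_rfl)
        fun s hs => hwnn s (hap.trans hs.1)
    rw [max_eq_left hRa.le, ← hVmax r]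
    have hpR : p < R := max_lt hrR hRa
    have hp0 : 0 < p := ha.trans_le hap
    obtain ⟨b1, b2⟩ := hd.rst_below he hp0 hpR
    have hq : qf u m e p ≤ qf u m e r := hd.qf_anti he hr (le_max_left _ _) b1
    have hlim : Tendsto (fun t => (Vf δ a B p - Vf δ a B t) ^ 2) (𝓝[<] R)
        (𝓝 ((Vf δ a B p - Vf δ a B R) ^ 2)) := by
      have : Continuous fun t => (Vf δ a B p - Vf δ a B t) ^ 2 := by fun_prop
      exact (this.tendsto R).mono_left nhdsWithin_le_nhds
    refine le_of_tendsto hlim ?_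
    filter_upwards [Ioo_mem_nhdsLT hpR] with t ht
    obtain ⟨c1, c2⟩ := hd.rst_below he (hp0.trans ht.1) ht.2
    have h3 := hstep p t hap ht.1.le c1
    have h4 := hmono p p t R hap le_rfl ht.1.le ht.2.le
    have h5 : 0 ≤ ∫ s in p..t, w s :=
      intervalIntegral.integral_nonneg ht.1.le fun s hs => hwnn s (hap.trans hs.1)
    calc (Vf δ a B p - Vf δ a B t) ^ 2 = (Vf δ a B t - Vf δ a B p) ^ 2 := by ring
      _ ≤ (∫ s in p..t, w s) * (qf u m e p - qf u m e t) := h3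
      _ ≤ (∫ s in p..t, w s) * |qf u m e r| := by
          apply mul_le_mul_of_nonneg_left _ h5
          linarith [le_abs_self (qf u m e r)]
      _ ≤ (∫ s in p..R, w s) * |qf u m e r| := mul_le_mul_of_nonneg_right h4 (abs_nonneg _)
      _ = _ := mul_comm _ _
  · rw [hrR]
    simp
  · rw [min_eq_right hrR.le, max_eq_left hrR.le]
    set p := max R a with hp
    have hap : a ≤ p := le_max_right _ _
    rcases le_or_gt r a with hra | hra
    · have e1 : Vf δ a B r = Vf δ a B R := by
        rw [← hVmax r, ← hVmax R, max_eq_right hra, max_eq_right (hrR.le.trans hra)]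
      rw [e1, sub_self, zero_pow two_ne_zero]
      apply mul_nonneg (abs_nonneg _)
      exact intervalIntegral.integral_nonneg (max_le_max hrR.le le_rfl)
        fun s hs => hwnn s (hap.trans hs.1)
    rw [max_eq_left hra.le, ← hVmax R]
    have hpr : p < r := max_lt hrR hra
    have hp0 : 0 < p := ha.trans_le hap
    have hlim : Tendsto (fun t => (Vf δ a B r - Vf δ a B t) ^ 2) (𝓝[>] p)
        (𝓝 ((Vf δ a B r - Vf δ a B p) ^ 2)) := by
      have : Continuous fun t => (Vf δ a B r - Vf δ a B t) ^ 2 := by fun_prop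
      exact (this.tendsto p).mono_left nhdsWithin_le_nhds
    refine le_of_tendsto hlim ?_
    filter_upwards [Ioo_mem_nhdsGT hpr] with t ht
    have c2 := hd.rst_above he (hp0.trans ht.1) (lt_of_le_of_lt (le_max_left _ _) ht.1)
    have h3 := hstep t r (hap.trans ht.1.le) ht.2.le h1
    have h4 := hmono p t r r hap ht.1.le ht.2.le le_rfl
    have h5 : 0 ≤ ∫ s in t..r, w s :=
      intervalIntegral.integral_nonneg ht.2.le fun s hs => hwnn s (hap.trans (ht.1.le.trans hs.1))
    calc (Vf δ a B r - Vf δ a B t) ^ 2 ≤ (∫ s in t..r, w s) * (qf u m e t - qf u m e r) := h3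
      _ ≤ (∫ s in t..r, w s) * |qf u m e r| := by
          apply mul_le_mul_of_nonneg_left _ h5
          linarith [neg_abs_le (qf u m e r)]
      _ ≤ (∫ s in p..r, w s) * |qf u m e r| := mul_le_mul_of_nonneg_right h4 (abs_nonneg _)
      _ = _ := mul_comm _ _

/-- The weight `(δ / s²)² / θ` outside the ball of radius `a`. -/
def Wf (δ ρ : ℝ → ℝ) (c₄ a : ℝ) (s : ℝ) : ℝ≥0∞ :=
  (Ioi a).indicator (fun s => ENNReal.ofReal (gf δ a s ^ 2 / tht ρ c₄ s)) s

lemma RadData.Wf_meas (hd : RadData u m ρ R₁ c) (hδ : Continuous δ) (ha : 0 < a) (c₄ : ℝ) :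
    Measurable (Wf δ ρ c₄ a) := by
  have hg := gf_cont hδ ha
  have hθ := hd.tht_cont c₄
  apply Measurable.indicator _ measurableSet_Ioi
  exact (((hg.pow 2).measurable).div hθ.measurable).ennreal_ofReal

/-- Antonov-type inequality for a fixed energy. -/
lemma RadData.antonov_energy (hd : RadData u m ρ R₁ c) (hδ : Continuous δ) (ha : 0 < a) {e : ℝ}
    (he : e ≤ 1 / 2) :
    ∫⁻ r in Ioi (0:ℝ), ENNReal.ofReal (r ^ 2 * wgt (e - u r)) *
        ENNReal.ofReal ((Vf δ a B r - Vf δ a B (rst u m e)) ^ 2) ≤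
      ∫⁻ s in Ioi a, Wf δ ρ (cfour u c) a s * ENNReal.ofReal (sh u e s) := by
  have hg := gf_cont hδ ha
  have hθ := hd.tht_cont (cfour u c)
  set R := rst u m e with hR
  have hWm := hd.Wf_meas hδ ha (cfour u c)
  set W := Wf δ ρ (cfour u c) a with hW
  have hqm : Measurable (fun r => |qf u m e r|) := by
    have := hd.mcont.measurable
    have := hd.ucont.measurable
    unfold qf
    apply Measurable.abs
    apply Measurable.sub
    · apply Measurable.sub (by fun_prop)
      exact measurable_const.div (by fun_prop)
    · exact hd.mcont.measurable.div measurable_id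
  set Q : ℝ → ℝ≥0∞ := fun r => ENNReal.ofReal (r ^ 2 * wgt (e - u r) * |qf u m e r|) with hQ
  have hQm : Measurable Q := by
    have := hd.ucont.measurable
    have := wgt_cont.measurable
    apply Measurable.ennreal_ofReal
    apply Measurable.mul _ hqm
    apply Measurable.mul (by fun_prop)
    exact this.comp (by fun_prop)
  set S : Set (ℝ × ℝ) := {q | min q.1 R < q.2 ∧ q.2 ≤ max q.1 R} with hS
  have hS1 : MeasurableSet {q : ℝ × ℝ | min q.1 R < q.2} :=
    measurableSet_lt (by fun_prop) (by fun_prop)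
  have hS2 : MeasurableSet {q : ℝ × ℝ | q.2 ≤ max q.1 R} :=
    measurableSet_le (by fun_prop) (by fun_prop)
  have hSm : MeasurableSet S := hS1.inter hS2
  have hpt : ∀ r ∈ Ioi (0:ℝ), ENNReal.ofReal (r ^ 2 * wgt (e - u r)) *
      ENNReal.ofReal ((Vf δ a B r - Vf δ a B R) ^ 2) ≤
      ∫⁻ s, S.indicator (fun q => Q q.1 * W q.2) (r, s) := by
    intro r hr
    have hr0 : 0 < r := hr
    rcases le_or_gt (e - u r) 1 with h1 | h1
    · rw [wgt_zero h1]; simp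
    have h2 := hd.osc (B := B) hδ ha he hr0 h1
    rw [← hR] at h2
    set p := max (min r R) a with hp
    set q := max (max r R) a with hq
    have hpq : p ≤ q := max_le_max (min_le_max) le_rfl
    have hap : a ≤ p := le_max_right _ _
    have hci : ContinuousOn (fun s => gf δ a s ^ 2 / tht ρ (cfour u c) s) (Icc p q) :=
      (hg.pow 2).continuousOn.div hθ.continuousOn fun s hs =>
        (hd.tht_pos (ha.trans_le (hap.trans hs.1))).ne'
    have h3 : ENNReal.ofReal (∫ s in p..q, gf δ a s ^ 2 / tht ρ (cfour u c) s) ≤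
        ∫⁻ s in Ioc (min r R) (max r R), W s := by
      rw [intervalIntegral.integral_of_le hpq, ofReal_integral_eq_lintegral_ofReal]
      · rw [← lintegral_indicator measurableSet_Ioc, ← lintegral_indicator measurableSet_Ioc]
        apply lintegral_mono
        intro s
        by_cases hs : s ∈ Ioc p q
        · have hsa : a < s := lt_of_le_of_lt hap hs.1
          have hs2 : s ∈ Ioc (min r R) (max r R) := by
            refine ⟨lt_of_le_of_lt (le_max_left _ _) hs.1, ?_⟩
            rcases le_max_iff.1 hs.2 with h | h
            · exact h
            · exact absurd h (not_le.2 hsa)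
          rw [indicator_of_mem hs, indicator_of_mem hs2, hW, Wf, indicator_of_mem
            (show s ∈ Ioi a from hsa)]
        · rw [indicator_of_notMem hs]; exact zero_le
      · exact hci.integrableOn_Icc.mono_set Ioc_subset_Icc_self
      · filter_upwards [ae_restrict_mem measurableSet_Ioc] with s hs
        have := hd.tht_pos (ha.trans (lt_of_le_of_lt hap hs.1))
        simp only [Pi.zero_apply]
        positivity
    have hw0 : 0 ≤ r ^ 2 * wgt (e - u r) := by
      have := wgt_nonneg (e - u r)
      positivity
    calc ENNReal.ofReal (r ^ 2 * wgt (e - u r)) * ENNReal.ofReal ((Vf δ a B r - Vf δ a B R) ^ 2)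
        ≤ ENNReal.ofReal (r ^ 2 * wgt (e - u r)) * ENNReal.ofReal (|qf u m e r| *
          ∫ s in p..q, gf δ a s ^ 2 / tht ρ (cfour u c) s) := by gcongr
      _ = Q r * ENNReal.ofReal (∫ s in p..q, gf δ a s ^ 2 / tht ρ (cfour u c) s) := by
          rw [ENNReal.ofReal_mul (abs_nonneg _), ← mul_assoc, ← ENNReal.ofReal_mul hw0]
      _ ≤ Q r * ∫⁻ s in Ioc (min r R) (max r R), W s := by gcongr
      _ = ∫⁻ s, S.indicator (fun q => Q q.1 * W q.2) (r, s) := by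
          rw [← lintegral_const_mul _ hWm, ← lintegral_indicator measurableSet_Ioc]
          congr 1
  refine (setLIntegral_mono' measurableSet_Ioi hpt).trans ?_
  have hjoint : Measurable (S.indicator (fun q => Q q.1 * W q.2)) :=
    ((hQm.comp measurable_fst).mul (hWm.comp measurable_snd)).indicator hSm
  rw [lintegral_lintegral_swap (by exact hjoint.aemeasurable),
    ← lintegral_indicator measurableSet_Ioi]
  apply lintegral_mono
  intro s
  beta_reduce
  by_cases hs : s ∈ Ioi a
  · rw [indicator_of_mem hs]
    have hs0 : 0 < s := ha.trans hs
    rcases le_or_gt s R with hsR | hsR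
    · refine le_trans ?_ (mul_le_mul_right (hd.sh_below he hs0 hsR) _)
      rw [← lintegral_const_mul _ hQm, ← lintegral_indicator measurableSet_Ioi,
        ← lintegral_indicator measurableSet_Ioo]
      apply lintegral_mono
      intro r
      simp only [indicator]
      split_ifs with h1 h2 h3 h3
      · exact (mul_comm _ _).le
      · exfalso
        apply h3
        refine ⟨h1, ?_⟩
        by_contra hcon
        have := h2.1
        simp only at this
        rw [min_lt_iff] at this
        rcases this with h | h
        · exact hcon h
        · linarith
      · exact zero_le
      · exact le_rfl
      · exact zero_le
      · exact le_rfl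
    · refine le_trans ?_ (mul_le_mul_right (hd.sh_above he hs0 hsR) _)
      rw [← lintegral_const_mul _ hQm, ← lintegral_indicator measurableSet_Ioi,
        ← lintegral_indicator measurableSet_Ici]
      apply lintegral_mono
      intro r
      simp only [indicator]
      split_ifs with h1 h2 h3 h3
      · exact (mul_comm _ _).le
      · exfalso
        apply h3
        have := h2.2
        simp only at this
        rw [le_max_iff] at this
        rcases this with h | h
        · exact h
        · linarith
      · exact zero_le
      · exact le_rfl
      · exact zero_le
      · exact le_rfl
  · have : ∀ r, S.indicator (fun q => Q q.1 * W q.2) (r, s) = 0 := by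
      intro r
      simp only [indicator]
      split_ifs
      · rw [hW, Wf, indicator_of_notMem hs, mul_zero]
      · rfl
    simp [this]

end

/-! ### The Antonov inequality integrated over the energy -/

lemma hY_meas {E₀ k Y : ℝ} : Measurable (hY E₀ k Y) := by
  unfold hY
  exact Measurable.ite measurableSet_Iio (by fun_prop) measurable_const

lemma lint_hY {E₀ k Y : ℝ} (hk : 1 ≤ k) (e' : ℝ) :
    ∫⁻ e in Ioi e', ENNReal.ofReal (hY E₀ k Y e) ≤
      ENNReal.ofReal (max (E₀ + Y - e') 0 ^ k) := by
  rcases le_or_gt (E₀ + Y) e' with h | h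
  · have : ∀ e ∈ Ioi e', ENNReal.ofReal (hY E₀ k Y e) = 0 := fun e he => by
      rw [hY, if_neg (by have : e' < e := he; linarith), ENNReal.ofReal_zero]
    rw [setLIntegral_congr_fun measurableSet_Ioi this]
    simp
  have hd : ∀ e, HasDerivAt (fun e => -(E₀ + Y - e) ^ k) (k * (E₀ + Y - e) ^ (k - 1)) e := by
    intro e
    have h1 : HasDerivAt (fun e => E₀ + Y - e) (-1) e := (hasDerivAt_id e).const_sub _
    exact ((h1.rpow_const (Or.inr hk)).neg).congr_deriv (by ring)
  have hc : Continuous (fun e => k * (E₀ + Y - e) ^ (k - 1)) := by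
    apply continuous_const.mul
    exact Continuous.rpow_const (by fun_prop) (fun e => Or.inr (by linarith))
  have hint := intervalIntegral.integral_eq_sub_of_hasDerivAt (fun e _ => hd e)
    (hc.intervalIntegrable (μ := volume) e' (E₀ + Y))
  rw [sub_self, Real.zero_rpow (by linarith)] at hint
  rw [max_eq_left (by linarith)]
  have : (E₀ + Y - e') ^ k = ∫ e in e'..(E₀ + Y), k * (E₀ + Y - e) ^ (k - 1) := by
    rw [hint]; ring
  rw [this, intervalIntegral.integral_of_le h.le, ofReal_integral_eq_lintegral_ofReal]
  · rw [← lintegral_indicator measurableSet_Ioi, ← lintegral_indicator measurableSet_Ioc]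
    apply lintegral_mono
    intro e
    simp only [indicator, hY, mem_Ioi, mem_Ioc]
    split_ifs with h1 h2 h3 h3 h4
    · exact le_rfl
    · exact absurd ⟨h1, h2.le⟩ h3
    · simp
    · simp
    · exact zero_le
    · exact le_rfl
  · exact hc.integrableOn_Ioc
  · filter_upwards [ae_restrict_mem measurableSet_Ioc] with e he
    have : 0 ≤ E₀ + Y - e := by linarith [he.2]
    simp only [Pi.zero_apply]
    positivity

lemma lint_wgt (v e : ℝ) :
    ENNReal.ofReal (4 * Real.pi / 3 * Zf (e - v)) =
      ∫⁻ e' in Iio e, ENNReal.ofReal (4 * Real.pi * wgt (e' - v)) := by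
  have hw := wgt_cont
  set p := min e (v + 1) with hp
  have hd : ∀ x, HasDerivAt (fun x => 4 * Real.pi / 3 * Zf (x - v)) (4 * Real.pi * wgt (x - v)) x := by
    intro x
    have h := ((Zf_hasDerivAt (x - v)).comp_sub_const x v).const_mul (4 * Real.pi / 3)
    exact h.congr_deriv (by ring)
  have hc : Continuous (fun x => 4 * Real.pi * wgt (x - v)) := by fun_prop
  have hint := intervalIntegral.integral_eq_sub_of_hasDerivAt (fun x _ => hd x)
    (hc.intervalIntegrable (μ := volume) p e)
  rw [Zf_zero (ε := p - v) (by have := min_le_right e (v + 1); linarith), mul_zero,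
    sub_zero] at hint
  rw [← hint, intervalIntegral.integral_of_le (min_le_left _ _), ofReal_integral_eq_lintegral_ofReal]
  · rw [setLIntegral_congr Ioo_ae_eq_Ioc.symm, ← lintegral_indicator measurableSet_Ioo,
      ← lintegral_indicator measurableSet_Iio]
    congr 1; ext x
    simp only [indicator, mem_Iio, mem_Ioo]
    split_ifs with h1 h2 h2
    · rfl
    · exact absurd h1.2 h2
    · have : x ≤ p := by
        by_contra hcon
        exact h1 ⟨not_le.1 hcon, h2⟩
      have h3 := this.trans (min_le_right e (v + 1))
      rw [wgt_zero (by linarith)]; simp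
    · rfl
  · exact hc.integrableOn_Ioc
  · filter_upwards with x
    have := wgt_nonneg (x - v)
    simp only [Pi.zero_apply]
    positivity

/-- Integrating the explicit primitive against `h` over the energy reproduces the spatial density with
raised cut-off energy; the factor `4π/3 · Zf` is the volume of a momentum ball. -/
lemma lint_hY_Zf {E₀ k Y : ℝ} (hk : 1 ≤ k) (v : ℝ) :
    ∫⁻ e, ENNReal.ofReal (hY E₀ k Y e) * ENNReal.ofReal (4 * Real.pi / 3 * Zf (e - v)) ≤
      ∫⁻ p : V3, ENNReal.ofReal (max (E₀ + Y - (√(1 + ‖p‖ ^ 2) + v)) 0 ^ k) := by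
  have hw := wgt_cont.measurable
  have hh := (hY_meas (E₀ := E₀) (k := k) (Y := Y)).ennreal_ofReal
  have hwm : Measurable fun e' => ENNReal.ofReal (4 * Real.pi * wgt (e' - v)) :=
    Measurable.ennreal_ofReal ((hw.comp (by fun_prop)).const_mul _)
  rw [lint_momentum (G := fun e => ENNReal.ofReal (max (E₀ + Y - e) 0 ^ k)) (by fun_prop)]
  have h1 : ∀ e, ENNReal.ofReal (hY E₀ k Y e) * ENNReal.ofReal (4 * Real.pi / 3 * Zf (e - v)) =
      ∫⁻ e', {q : ℝ × ℝ | q.2 < q.1}.indicator (fun q => ENNReal.ofReal (hY E₀ k Y q.1) *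
        ENNReal.ofReal (4 * Real.pi * wgt (q.2 - v))) (e, e') := by
    intro e
    rw [lint_wgt, ← lintegral_const_mul _ hwm, ← lintegral_indicator measurableSet_Iio]
    congr 1
  have hS : MeasurableSet {q : ℝ × ℝ | q.2 < q.1} := measurableSet_lt (by fun_prop) (by fun_prop)
  have hj : Measurable ({q : ℝ × ℝ | q.2 < q.1}.indicator (fun q => ENNReal.ofReal (hY E₀ k Y q.1) *
        ENNReal.ofReal (4 * Real.pi * wgt (q.2 - v)))) :=
    ((hh.comp measurable_fst).mul (hwm.comp measurable_snd)).indicator hS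
  simp_rw [h1]
  rw [lintegral_lintegral_swap (by exact hj.aemeasurable)]
  apply lintegral_mono
  intro e'
  beta_reduce
  refine le_trans ?_ (mul_le_mul_right (lint_hY hk e') _)
  rw [← lintegral_const_mul _ hh, ← lintegral_indicator measurableSet_Ioi]
  apply lintegral_mono
  intro e
  simp only [indicator, mem_Ioi, mem_ofPred_eq]
  split_ifs with h
  · exact (mul_comm _ _).le
  · exact le_rfl

section
variable {k E₀ : ℝ} {U₀ : V3 → ℝ} {f₀ : V3 × V3 → ℝ}
variable {u m ρ : ℝ → ℝ} {R₁ c : ℝ} {δ : ℝ → ℝ} {a B : ℝ}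

/-- Raising the cut-off energy by `Y` changes the density by at most a multiple of `Y`. -/
lemma Steady.rho_shift (h : Steady k E₀ U₀ f₀) (hd : RadData u m ρ R₁ c)
    (hux : ∀ x, U₀ x = u ‖x‖) (hρ : ∀ x, rhoOf f₀ x = ρ ‖x‖) :
    ∃ C, 0 < C ∧ ∀ Y, 0 ≤ Y → E₀ + Y ≤ 1 / 2 → ∀ s, 0 ≤ s →
      ∫⁻ p : V3, ENNReal.ofReal (max (E₀ + Y - (√(1 + ‖p‖ ^ 2) + u s)) 0 ^ k) ≤
        ENNReal.ofReal (ρ s + C * Y) := by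
  have hk := h.one_le
  set b := |u 0| + 1 with hb
  have hb0 : 0 < b := by positivity
  set v : ℝ := (volume (Metric.ball (0:V3) b)).toReal with hv
  have hv0 : 0 < v := ENNReal.toReal_pos (Metric.measure_ball_pos _ _ hb0).ne'
    measure_ball_lt_top.ne
  set L := k * b ^ (k - 1) with hL
  have hL0 : 0 < L := by positivity
  refine ⟨L * v, by positivity, ?_⟩
  intro Y hY hEY s hs
  set x : V3 := s • unitV with hx
  have hxn : ‖x‖ = s := by rw [norm_smul, norm_unitV, mul_one, Real.norm_of_nonneg hs]
  have hpt : ∀ p : V3, ENNReal.ofReal (max (E₀ + Y - (√(1 + ‖p‖ ^ 2) + u s)) 0 ^ k) ≤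
      ENNReal.ofReal (f₀ (x, p)) +
        (Metric.ball (0:V3) b).indicator (fun _ => ENNReal.ofReal (L * Y)) p := by
    intro p
    have hf : f₀ (x, p) = max (E₀ - (√(1 + ‖p‖ ^ 2) + u s)) 0 ^ k := by
      rw [h.ansatz]
      simp only [polyAnsatz, Erel, hux, hxn]
    by_cases hp : p ∈ Metric.ball (0:V3) b
    · rw [indicator_of_mem hp, ← ENNReal.ofReal_add (h.f_nonneg _) (by positivity), hf]
      apply ENNReal.ofReal_le_ofReal
      have hle : E₀ + Y - (√(1 + ‖p‖ ^ 2) + u s) ≤ b := by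
        have := hd.eps_le hEY hs
        have := Real.sqrt_nonneg (1 + ‖p‖ ^ 2)
        linarith
      have := pospow_lip hk (u := E₀ - (√(1 + ‖p‖ ^ 2) + u s)) (by linarith) hle hb0
      nlinarith
    · have hp' : b ≤ ‖p‖ := by simpa using hp
      have h1 := hd.eps_le hEY hs
      have h2 : ‖p‖ ≤ √(1 + ‖p‖ ^ 2) := Real.le_sqrt_of_sq_le (by linarith)
      rw [max_eq_right (by linarith), Real.zero_rpow (by linarith)]
      simp
  refine (lintegral_mono hpt).trans ?_
  have hfm : Continuous fun p => f₀ (x, p) := by have := h.cont; fun_prop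
  rw [lintegral_add_left hfm.measurable.ennreal_ofReal, lintegral_indicator Metric.isOpen_ball.measurableSet,
    setLIntegral_const]
  have hρs : 0 ≤ ρ s := hd.rho_nonneg s hs
  rw [ENNReal.ofReal_add hρs (by positivity)]
  apply add_le_add
  · rw [← hxn, ← hρ, rhoOf, ofReal_integral_eq_lintegral_ofReal]
    · obtain ⟨R, hR, hz⟩ := h.adm.supp
      apply hfm.integrable_of_hasCompactSupport
      apply HasCompactSupport.intro (isCompact_closedBall (0:V3) R)
      intro p hp
      apply hz
      have : R < ‖p‖ := by simpa using hp
      exact this.le.trans (norm_snd_le (x, p))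
    · exact Eventually.of_forall fun p => h.f_nonneg _
  · rw [show L * v * Y = (L * Y) * v by ring, ENNReal.ofReal_mul (p := L * Y) (by positivity), hv,
      ENNReal.ofReal_toReal measure_ball_lt_top.ne]

/-- The energy profile of the comparison potential. -/
def bE (u m δ : ℝ → ℝ) (a B e : ℝ) : ℝ := Vf δ a B (rst u m (min e (1 / 2)))

lemma RadData.bE_lip (hd : RadData u m ρ R₁ c) (hδ : Continuous δ) (ha : 0 < a) {N : ℝ}
    (hN : ∀ s, 0 ≤ s → |δ s| ≤ N) (x y : ℝ) :
    |bE u m δ a B x - bE u m δ a B y| ≤ N / a ^ 2 * (2 / (cfour u c * a)) * |x - y| := by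
  have hN0 : 0 ≤ N := (abs_nonneg _).trans (hN 0 le_rfl)
  have hc4 := hd.cfour_pos
  wlog hxy : y ≤ x generalizing x y
  · rw [abs_sub_comm, abs_sub_comm x y]
    exact this y x (not_le.1 hxy).le
  have h1 := Vf_lip hδ ha hN (B := B) (rst u m (min y (1 / 2))) (rst u m (min x (1 / 2)))
  refine h1.trans ?_
  rw [mul_assoc]
  apply mul_le_mul_of_nonneg_left _ (by positivity)
  have hmin : min y (1 / 2) ≤ min x (1 / 2) := min_le_min hxy le_rfl
  have h2 := hd.rst_mono hmin (min_le_right _ _)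
  have h3 := hd.rst_lip hmin (min_le_right _ _) ha
  rw [abs_of_nonneg (sub_nonneg.2 (max_le_max h2 le_rfl)), abs_of_nonneg (sub_nonneg.2 hxy)]
  refine h3.trans ?_
  apply mul_le_mul_of_nonneg_left _ (by positivity)
  rcases le_total x (1 / 2) with h | h
  · rw [min_eq_left h, min_eq_left (hxy.trans h)]
  · rw [min_eq_right h]
    rcases le_total y (1 / 2) with h' | h'
    · rw [min_eq_left h']; linarith
    · rw [min_eq_right h']; linarith

lemma RadData.bE_cont (hd : RadData u m ρ R₁ c) (hδ : Continuous δ) (ha : 0 < a) {N : ℝ}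
    (hN : ∀ s, 0 ≤ s → |δ s| ≤ N) : Continuous (bE u m δ a B) := by
  have hN0 : 0 ≤ N := (abs_nonneg _).trans (hN 0 le_rfl)
  have hc4 := hd.cfour_pos
  apply LipschitzWith.continuous (K := ⟨N / a ^ 2 * (2 / (cfour u c * a)), by positivity⟩)
  apply LipschitzWith.of_dist_le_mul
  intro x y
  rw [Real.dist_eq, Real.dist_eq]
  exact hd.bE_lip hδ ha hN x y

/-- Antonov-type inequality: the part of the comparison potential orthogonal to functions of the
energy is controlled, with a constant strictly below one, by the field energy outside the ball of
radius `a`. -/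
lemma Steady.antonov (h : Steady k E₀ U₀ f₀) (hd : RadData u m ρ R₁ c)
    (hux : ∀ x, U₀ x = u ‖x‖) (hρ : ∀ x, rhoOf f₀ x = ρ ‖x‖) {M : ℝ} (hM : ∀ s, 0 ≤ s → ρ s ≤ M) :
    ∃ Y₀ ε₀, 0 < Y₀ ∧ 0 < ε₀ ∧ ∀ Y, 0 ≤ Y → Y ≤ Y₀ → ∀ δ : ℝ → ℝ, Continuous δ → ∀ a B N : ℝ,
      0 < a → a ≤ B → (∀ s, 0 ≤ s → |δ s| ≤ N) → (∀ s, B ≤ s → δ s = 0) →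
      ∫⁻ z, ENNReal.ofReal (hY E₀ k Y (Erel U₀ z)) *
        ENNReal.ofReal ((Vf δ a B ‖z.1‖ - bE u m δ a B (Erel U₀ z)) ^ 2) ≤
      ENNReal.ofReal ((1 - ε₀) * ∫ s in a..B, δ s ^ 2 / s ^ 2) := by
  obtain ⟨C, hC, hsh⟩ := h.rho_shift hd hux hρ
  have hk := h.one_le
  have hc4 := hd.cfour_pos
  have hM0 : 0 ≤ M := (hd.rho_nonneg 0 le_rfl).trans (hM 0 le_rfl)
  set c4 := cfour u c with hc4d
  have hEn := h.E_neg
  have hpi := Real.pi_pos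
  refine ⟨min (1 / 2) (c4 / (8 * Real.pi * C)), c4 / 2 / (4 * Real.pi * M + c4), by positivity,
    by positivity, ?_⟩
  set ε₀ := c4 / 2 / (4 * Real.pi * M + c4) with hε
  intro Y hY0 hYY δ hδ a B N ha haB hN hz
  have hY1 : E₀ + Y ≤ 1 / 2 := by linarith [hYY.trans (min_le_left _ _)]
  have hY2 : 4 * Real.pi * (C * Y) ≤ c4 / 2 := by
    have := hYY.trans (min_le_right _ _)
    rw [le_div_iff₀ (by positivity)] at this
    linarith
  have hε1 : ε₀ * (4 * Real.pi * M + c4) = c4 / 2 := by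
    rw [hε]; field_simp
  have hbc : Continuous (bE u m δ a B) := hd.bE_cont hδ ha hN
  have hVc := Vf_cont hδ ha (B := B)
  have hwc := wgt_cont
  have huc := hd.ucont
  have hhm := hY_meas (E₀ := E₀) (k := k) (Y := Y)
  have hZc := Zf_cont
  have hFm : Measurable (Function.uncurry fun r e => ENNReal.ofReal (hY E₀ k Y e) *
      ENNReal.ofReal ((Vf δ a B r - bE u m δ a B e) ^ 2)) := by
    simp only [Function.uncurry_def]
    apply Measurable.fun_mul
    · exact (hhm.comp measurable_snd).ennreal_ofReal
    · apply Measurable.ennreal_ofReal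
      apply Continuous.measurable
      fun_prop
  rw [lint_phase hFm hd.ucont hux]
  have hjm : Measurable (Function.uncurry fun r e => ENNReal.ofReal (16 * Real.pi ^ 2 *
      (r ^ 2 * wgt (e - u r))) * (ENNReal.ofReal (hY E₀ k Y e) *
      ENNReal.ofReal ((Vf δ a B r - bE u m δ a B e) ^ 2))) := by
    apply Measurable.mul _ hFm
    apply Measurable.ennreal_ofReal
    apply Continuous.measurable
    fun_prop
  rw [lintegral_lintegral_swap hjm.aemeasurable]
  have hWm := hd.Wf_meas hδ ha c4
  have hshm : Measurable (Function.uncurry fun e s => ENNReal.ofReal (sh u e s)) := by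
    apply Measurable.ennreal_ofReal
    apply Continuous.measurable
    unfold sh
    fun_prop
  have hshe : ∀ e, Measurable fun s => ENNReal.ofReal (sh u e s) := fun e =>
    hshm.comp measurable_prodMk_left
  -- fixed energy
  have step1 : ∀ e, ∫⁻ r in Ioi (0:ℝ), ENNReal.ofReal (16 * Real.pi ^ 2 *
      (r ^ 2 * wgt (e - u r))) * (ENNReal.ofReal (hY E₀ k Y e) *
      ENNReal.ofReal ((Vf δ a B r - bE u m δ a B e) ^ 2)) ≤
      ∫⁻ s in Ioi a, ENNReal.ofReal (16 * Real.pi ^ 2) * ENNReal.ofReal (hY E₀ k Y e) *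
        (Wf δ ρ c4 a s * ENNReal.ofReal (sh u e s)) := by
    intro e
    have hm2 : Measurable fun s => Wf δ ρ c4 a s * ENNReal.ofReal (sh u e s) := hWm.mul (hshe e)
    rw [lintegral_const_mul _ hm2]
    by_cases he : e < E₀ + Y
    · have he' : e ≤ 1 / 2 := he.le.trans hY1
      refine le_trans ?_ (mul_le_mul_right (hd.antonov_energy (B := B) hδ ha he') _)
      have hm1 : Measurable fun r => ENNReal.ofReal (r ^ 2 * wgt (e - u r)) *
          ENNReal.ofReal ((Vf δ a B r - Vf δ a B (rst u m e)) ^ 2) := by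
        apply Measurable.fun_mul
        · apply Measurable.ennreal_ofReal
          apply Continuous.measurable
          fun_prop
        · apply Measurable.ennreal_ofReal
          apply Continuous.measurable
          fun_prop
      rw [← lintegral_const_mul _ hm1]
      apply lintegral_mono
      intro r
      beta_reduce
      rw [ENNReal.ofReal_mul (by positivity), bE, min_eq_left he']
      apply le_of_eq
      ring
    · have : hY E₀ k Y e = 0 := by rw [hY, if_neg he]
      simp [this]
  refine (lintegral_mono step1).trans ?_
  rw [lintegral_lintegral_swap]
  swap
  · apply Measurable.aemeasurable
    simp only [Function.uncurry_def]
    apply Measurable.fun_mul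
    · exact ((hhm.comp measurable_fst).ennreal_ofReal).const_mul _
    · exact (hWm.comp measurable_snd).mul hshm
  -- fixed radius
  have step2 : ∀ s ∈ Ioi a, ∫⁻ e, ENNReal.ofReal (16 * Real.pi ^ 2) *
      ENNReal.ofReal (hY E₀ k Y e) * (Wf δ ρ c4 a s * ENNReal.ofReal (sh u e s)) ≤
      ENNReal.ofReal ((1 - ε₀) * (δ s ^ 2 / s ^ 2)) := by
    intro s hs
    have has : a < s := hs
    have hs0 : 0 < s := ha.trans has
    have hρ0 := hd.rho_nonneg s hs0.le
    have e1 : ∀ e, ENNReal.ofReal (16 * Real.pi ^ 2) *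
        ENNReal.ofReal (hY E₀ k Y e) * (Wf δ ρ c4 a s * ENNReal.ofReal (sh u e s)) =
        (Wf δ ρ c4 a s * ENNReal.ofReal (4 * Real.pi * s ^ 3)) *
        (ENNReal.ofReal (hY E₀ k Y e) * ENNReal.ofReal (4 * Real.pi / 3 * Zf (e - u s))) := by
      intro e
      have : ENNReal.ofReal (16 * Real.pi ^ 2) * ENNReal.ofReal (sh u e s) =
          ENNReal.ofReal (4 * Real.pi * s ^ 3) * ENNReal.ofReal (4 * Real.pi / 3 * Zf (e - u s)) := by
        rw [← ENNReal.ofReal_mul (by positivity), ← ENNReal.ofReal_mul (by positivity), sh]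
        congr 1; ring
      calc _ = ENNReal.ofReal (hY E₀ k Y e) * Wf δ ρ c4 a s *
            (ENNReal.ofReal (16 * Real.pi ^ 2) * ENNReal.ofReal (sh u e s)) := by ring
        _ = _ := by rw [this]; ring
    simp_rw [e1]
    rw [lintegral_const_mul]
    swap
    · apply (hhm.ennreal_ofReal).mul
      apply Measurable.ennreal_ofReal
      apply Continuous.measurable
      fun_prop
    refine (mul_le_mul_right ((lint_hY_Zf hk (u s)).trans (hsh Y hY0 hY1 s hs0.le)) _).trans ?_
    have hθ := hd.tht_pos hs0
    rw [Wf, indicator_of_mem hs, ← ENNReal.ofReal_mul (by positivity),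
      ← ENNReal.ofReal_mul (by positivity)]
    apply ENNReal.ofReal_le_ofReal
    rw [gf, max_eq_left has.le]
    have hden : 0 < 4 * Real.pi * ρ s + c4 := by positivity
    have e2 : (δ s / s ^ 2) ^ 2 / tht ρ c4 s * (4 * Real.pi * s ^ 3) * (ρ s + C * Y) =
        δ s ^ 2 / s ^ 2 * ((4 * Real.pi * (ρ s + C * Y)) / (4 * Real.pi * ρ s + c4)) := by
      have : tht ρ c4 s = s * (4 * Real.pi * ρ s + c4) := by unfold tht; ring
      rw [this]
      field_simp
    rw [e2, mul_comm]
    apply mul_le_mul_of_nonneg_right _ (by positivity)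
    rw [div_le_iff₀ hden]
    have h1 : ε₀ * (4 * Real.pi * ρ s + c4) ≤ c4 / 2 := by
      rw [← hε1]
      have := hM s hs0.le
      gcongr
    linarith
  refine (setLIntegral_mono' measurableSet_Ioi step2).trans ?_
  have hε1' : 0 ≤ 1 - ε₀ := by
    have : ε₀ ≤ 1 := by
      rw [hε, div_le_one (by positivity)]
      have : 0 ≤ 4 * Real.pi * M := by positivity
      linarith
    linarith
  have hci : ContinuousOn (fun s => (1 - ε₀) * (δ s ^ 2 / s ^ 2)) (Icc a B) := by
    apply continuousOn_const.mul
    apply (hδ.pow 2).continuousOn.div (by fun_prop)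
    intro s hs
    have : 0 < s := ha.trans_le hs.1
    positivity
  rw [← intervalIntegral.integral_const_mul, intervalIntegral.integral_of_le haB,
    ofReal_integral_eq_lintegral_ofReal]
  · rw [← lintegral_indicator measurableSet_Ioi, ← lintegral_indicator measurableSet_Ioc]
    apply lintegral_mono
    intro s
    simp only [indicator, mem_Ioi, mem_Ioc]
    split_ifs with h1 h2 h3
    · exact le_rfl
    · rw [hz s (not_le.1 fun hcon => h2 ⟨h1, hcon⟩).le]; simp
    · exact zero_le
    · exact le_rfl
  · exact hci.integrableOn_Icc.mono_set Ioc_subset_Icc_self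
  · filter_upwards with s
    simp only [Pi.zero_apply]
    positivity

end

/-! ### Perturbation estimates in terms of the relative Casimir energy -/

lemma dens_eq {k E₀ : ℝ} {U₀ : V3 → ℝ} {f₀ : V3 × V3 → ℝ} (h : Steady k E₀ U₀ f₀)
    (f : V3 × V3 → ℝ) (z : V3 × V3) : dens E₀ k U₀ f f₀ z = dpt E₀ k (Erel U₀ z) (f z) := by
  rw [dens, dpt, h.ansatz]

lemma f0_eq {k E₀ : ℝ} {U₀ : V3 → ℝ} {f₀ : V3 × V3 → ℝ} (h : Steady k E₀ U₀ f₀)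
    (z : V3 × V3) : f₀ z = polyAnsatz E₀ k (Erel U₀ z) := by
  rw [h.ansatz]

/-- The mass function is the phase space mass over a ball. -/
lemma Adm.mass_phase {f : V3 × V3 → ℝ} (hf : Adm f) {s : ℝ → ℝ}
    (e : ∀ x, rhoOf f x = s ‖x‖) {r : ℝ} (hr : 0 ≤ r) :
    mass s r = ∫ z in (Metric.closedBall (0:V3) r) ×ˢ univ, f z := by
  have hi : Integrable f := (hf.integrable_mul (w := fun _ => 1) continuous_const).congr
    (by filter_upwards with z; simp)
  have h1 : ∫ z in (Metric.closedBall (0:V3) r) ×ˢ (univ : Set V3), f z =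
      ∫ x in Metric.closedBall (0:V3) r, rhoOf f x := by
    rw [Measure.volume_eq_prod, setIntegral_prod]
    · simp [rhoOf]
    · rw [← Measure.volume_eq_prod]; exact hi.integrableOn
  rw [h1, ← integral_indicator Metric.isClosed_closedBall.measurableSet]
  have h2 : ∀ x : V3, (Metric.closedBall (0:V3) r).indicator (fun x => rhoOf f x) x =
      (fun t => (Iic r).indicator s t) ‖x‖ := by
    intro x
    simp only [indicator, mem_closedBall_zero_iff, mem_Iic, e]
  simp_rw [h2]
  rw [integral_radial (fun t => (Iic r).indicator s t), mass, intervalIntegral.integral_of_le hr,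
    ← integral_indicator measurableSet_Ioc, ← integral_indicator measurableSet_Ioi]
  congr 1; ext t
  simp only [indicator, mem_Ioc, mem_Ioi, mem_Iic]
  split_ifs with a1 a2 a3 a3 a4 <;> simp_all

section
variable {k E₀ : ℝ} {U₀ : V3 → ℝ} {f₀ : V3 × V3 → ℝ}
variable {u m ρ : ℝ → ℝ} {R₁ c : ℝ} {f : V3 × V3 → ℝ}

lemma Steady.dens_nonneg (h : Steady k E₀ U₀ f₀) (hf : Adm f) (z : V3 × V3) :
    0 ≤ dens E₀ k U₀ f f₀ z := by
  rw [dens_eq h]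
  exact dpt_nonneg h.one_le (hf.nonneg z)

lemma Adm.diff_comp (hf : Adm f) (hf₀ : Adm f₀) {F : ℝ → ℝ} (hF : Continuous F) (hF0 : F 0 = 0) :
    Integrable (fun z => F (f z - f₀ z)) := by
  obtain ⟨R, hR, hz⟩ := hf.supp
  obtain ⟨R', hR', hz'⟩ := hf₀.supp
  apply Continuous.integrable_of_hasCompactSupport (hF.comp (hf.cont.sub hf₀.cont))
  apply HasCompactSupport.intro (isCompact_closedBall (0 : V3 × V3) (max R R'))
  intro z hzR
  have : max R R' < ‖z‖ := by simpa using hzR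
  simp only [Function.comp, Pi.sub_apply]
  rw [hz z ((le_max_left _ _).trans this.le), hz' z ((le_max_right _ _).trans this.le)]
  simpa using hF0

/-- The relative Casimir energy controls the squared `L²` distance. -/
lemma Steady.l2_bound (h : Steady k E₀ U₀ f₀) (hd : RadData u m ρ R₁ c)
    (hux : ∀ x, U₀ x = u ‖x‖) :
    ∃ C, 0 < C ∧ ∀ f, Adm f → (∀ z, ∃ z', f z = f₀ z') →
      ∫ z, (f z - f₀ z) ^ 2 ≤ C * ∫ z, dens E₀ k U₀ f f₀ z := by
  obtain ⟨M, hM⟩ : ∃ M, ∀ z, f₀ z ≤ M := by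
    obtain ⟨M, hM⟩ := h.cont.bounded_above_of_compact_support h.cpt
    exact ⟨M, fun z => (le_abs_self _).trans (hM z)⟩
  obtain ⟨c', hc', hco⟩ := dpt_coercive (E₀ := E₀) (A := |u 0|) (M := |M| + 1) h.one_le
    (abs_nonneg _) (by positivity)
  refine ⟨1 / c', by positivity, fun f hf hz => ?_⟩
  rw [div_mul_eq_mul_div, one_mul, le_div_iff₀' hc', ← integral_const_mul]
  apply integral_mono ((hf.diff_comp h.adm (F := fun t => t ^ 2) (by fun_prop) (by simp)).const_mul _)
    (h.integrable_dens hf)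
  intro z
  simp only
  rw [dens_eq h, f0_eq h]
  apply hco _ _ (hf.nonneg z)
  · have h1 : u 0 ≤ u ‖z.1‖ := hd.umono le_rfl (norm_nonneg _)
    have h2 := neg_abs_le (u 0)
    have h3 := Real.sqrt_nonneg (1 + ‖z.2‖ ^ 2)
    have h4 := h.E_neg
    rw [Erel, hux]
    linarith
  · rw [← f0_eq h]
    obtain ⟨z', hz'⟩ := hz z
    have h1 := h.f_nonneg z
    have h2 := hM z
    have h3 := h.f_nonneg z'
    have h4 := hM z'
    have h5 := le_abs_self M
    rw [hz', abs_le]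
    constructor <;> linarith

/-- Interpolation: on a set of finite measure the perturbation is controlled by its `L²` norm, off
it by the relative Casimir energy. -/
lemma Steady.l1_split (h : Steady k E₀ U₀ f₀) (hf : Adm f) {C : ℝ}
    (hC : ∫ z, (f z - f₀ z) ^ 2 ≤ C * ∫ z, dens E₀ k U₀ f f₀ z)
    {S T : Set (V3 × V3)} (hS : MeasurableSet S) (hT : MeasurableSet T) (hTf : volume T ≠ ⊤)
    {l τ : ℝ} (hl : 0 ≤ l) (hτ : 0 < τ)
    (hst : ∀ z ∈ S, z ∉ T → |f z - f₀ z| ≤ l * dens E₀ k U₀ f f₀ z) :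
    ∫ z in S, |f z - f₀ z| ≤ τ / 2 * (volume T).toReal +
      C / (2 * τ) * (∫ z, dens E₀ k U₀ f f₀ z) + l * ∫ z, dens E₀ k U₀ f f₀ z := by
  have i1 := hf.diff_comp h.adm (F := fun t => |t|) (by fun_prop) (by simp)
  have i2 := hf.diff_comp h.adm (F := fun t => t ^ 2) (by fun_prop) (by simp)
  have i3 := h.integrable_dens hf
  have i4 : Integrable (T.indicator (fun _ : V3 × V3 => τ / 2)) :=
    (integrableOn_const hTf).integrable_indicator hT
  have i6 : Integrable (fun z => T.indicator (fun _ : V3 × V3 => τ / 2) z +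
      1 / (2 * τ) * (f z - f₀ z) ^ 2) := i4.add (i2.const_mul _)
  have i5 : Integrable (fun z => T.indicator (fun _ : V3 × V3 => τ / 2) z +
      1 / (2 * τ) * (f z - f₀ z) ^ 2 + l * dens E₀ k U₀ f f₀ z) :=
    i6.add (i3.const_mul _)
  have hle : ∫ z in S, |f z - f₀ z| ≤ ∫ z, (T.indicator (fun _ : V3 × V3 => τ / 2) z +
      1 / (2 * τ) * (f z - f₀ z) ^ 2 + l * dens E₀ k U₀ f f₀ z) := by
    rw [← integral_indicator hS]
    apply integral_mono (i1.indicator hS) i5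
    intro z
    have hdn := mul_nonneg hl (h.dens_nonneg hf z)
    have hsq : 0 ≤ 1 / (2 * τ) * (f z - f₀ z) ^ 2 := by positivity
    by_cases hzT : z ∈ T
    · have : |f z - f₀ z| ≤ τ / 2 + 1 / (2 * τ) * (f z - f₀ z) ^ 2 := by
        have e1 : τ / 2 + 1 / (2 * τ) * (f z - f₀ z) ^ 2 - |f z - f₀ z| =
            (τ - |f z - f₀ z|) ^ 2 / (2 * τ) := by
          rw [← sq_abs (f z - f₀ z)]
          field_simp
          ring
        have : 0 ≤ (τ - |f z - f₀ z|) ^ 2 / (2 * τ) := by positivity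
        linarith
      simp only [indicator, hzT, if_true]
      split_ifs
      · linarith
      · positivity
    · simp only [indicator, hzT, if_false]
      split_ifs with hzS
      · linarith [hst z hzS hzT]
      · positivity
  refine hle.trans ?_
  rw [integral_add i6 (i3.const_mul _), integral_add i4 (i2.const_mul _),
    integral_indicator hT, setIntegral_const, integral_const_mul, integral_const_mul]
  have h1 : 1 / (2 * τ) * ∫ z, (f z - f₀ z) ^ 2 ≤
      C / (2 * τ) * ∫ z, dens E₀ k U₀ f f₀ z := by
    rw [div_mul_eq_mul_div, div_mul_eq_mul_div, one_mul]
    gcongr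
  have h2 : (volume.real T) • (τ / 2) = τ / 2 * (volume T).toReal := by
    rw [smul_eq_mul, mul_comm]; rfl
  rw [h2]
  linarith

/-- Outside the support the perturbation is controlled by the excess energy. -/
lemma Steady.far_bound (h : Steady k E₀ U₀ f₀) (hf : Adm f) {z : V3 × V3} {η : ℝ} (hη : 0 < η)
    (hz : E₀ + η ≤ Erel U₀ z) : |f z - f₀ z| ≤ 1 / η * dens E₀ k U₀ f f₀ z := by
  have hk := h.one_le
  have h0 : f₀ z = 0 := by
    rw [f0_eq h, polyAnsatz, max_eq_right (by linarith), Real.zero_rpow (by linarith)]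
  rw [h0, sub_zero, abs_of_nonneg (hf.nonneg z), dens_eq h, div_mul_eq_mul_div, one_mul,
    le_div_iff₀' hη]
  refine le_trans ?_ (dpt_linear hk (hf.nonneg z) (by linarith))
  exact mul_le_mul_of_nonneg_right (by linarith) (hf.nonneg z)

lemma vol_prod (r P : ℝ) (hr : 0 ≤ r) (hP : 0 ≤ P) :
    (volume ((Metric.closedBall (0:V3) r) ×ˢ (Metric.closedBall (0:V3) P))).toReal =
      (4 / 3 * Real.pi) ^ 2 * (r ^ 3 * P ^ 3) := by
  rw [Measure.volume_eq_prod, Measure.prod_prod, EuclideanSpace.volume_closedBall_fin_three,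
    EuclideanSpace.volume_closedBall_fin_three]
  simp only [ENNReal.toReal_mul, ENNReal.toReal_pow]
  rw [ENNReal.toReal_ofReal hr, ENNReal.toReal_ofReal hP, ENNReal.toReal_ofReal (by positivity)]
  ring

lemma vol_prod_fin (r P : ℝ) :
    volume ((Metric.closedBall (0:V3) r) ×ˢ (Metric.closedBall (0:V3) P)) ≠ ⊤ := by
  rw [Measure.volume_eq_prod, Measure.prod_prod]
  exact ENNReal.mul_ne_top measure_closedBall_lt_top.ne measure_closedBall_lt_top.ne

/-- The `L¹` distance is at most of the order of the square root of the relative Casimir energy. -/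
lemma Steady.l1_bound (h : Steady k E₀ U₀ f₀) (hd : RadData u m ρ R₁ c)
    (hux : ∀ x, U₀ x = u ‖x‖) :
    ∃ C, 0 < C ∧ ∀ f, Adm f → (∀ z, ∃ z', f z = f₀ z') → ∀ D, D = ∫ z, dens E₀ k U₀ f f₀ z →
      D ≤ 1 → ∫ z, |f z - f₀ z| ≤ C * √D := by
  obtain ⟨C, hC, hb⟩ := h.l2_bound hd hux
  set V := (4 / 3 * Real.pi) ^ 2 * (R₁ ^ 3 * (|u 0| + 1) ^ 3) with hV
  have hR := hd.Rpos
  have hV0 : 0 < V := by positivity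
  refine ⟨V / 2 + C / 2 + 2, by positivity, ?_⟩
  intro f hf hz D hD hD1
  have hD0 : 0 ≤ D := hD ▸ integral_nonneg (h.dens_nonneg hf)
  have hEn := h.E_neg
  have hst : ∀ z ∈ (univ : Set (V3 × V3)),
      z ∉ (Metric.closedBall (0:V3) R₁) ×ˢ (Metric.closedBall (0:V3) (|u 0| + 1)) →
      |f z - f₀ z| ≤ 2 * dens E₀ k U₀ f f₀ z := by
    intro z _ hzT
    have hE : E₀ + 1 / 2 ≤ Erel U₀ z := by
      by_contra hcon
      apply hzT
      rw [not_le, Erel, hux] at hcon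
      have h1 : ‖z.2‖ ≤ √(1 + ‖z.2‖ ^ 2) := Real.le_sqrt_of_sq_le (by linarith)
      have h2 : 1 ≤ √(1 + ‖z.2‖ ^ 2) := Real.one_le_sqrt.2 (by nlinarith [sq_nonneg ‖z.2‖])
      have h3 : u 0 ≤ u ‖z.1‖ := hd.umono le_rfl (norm_nonneg _)
      have h4 := neg_abs_le (u 0)
      refine ⟨?_, ?_⟩
      · rw [mem_closedBall_zero_iff]
        by_contra hc'
        have := hd.ubig ‖z.1‖ (not_le.1 hc').le
        linarith
      · rw [mem_closedBall_zero_iff]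
        linarith
    have := h.far_bound hf (by norm_num : (0:ℝ) < 1 / 2) hE
    linarith
  have key : ∀ τ, 0 < τ → ∫ z, |f z - f₀ z| ≤ τ / 2 * V + C / (2 * τ) * D + 2 * D := by
    intro τ hτ
    have := h.l1_split hf (hb f hf hz) MeasurableSet.univ
      (Metric.isClosed_closedBall.measurableSet.prod Metric.isClosed_closedBall.measurableSet)
      (vol_prod_fin _ _) (by norm_num : (0:ℝ) ≤ 2) hτ hst
    rwa [vol_prod _ _ hR.le (by positivity), setIntegral_univ, ← hD] at this
  rcases hD0.eq_or_lt with h0 | h0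
  · rw [← h0, Real.sqrt_zero, mul_zero]
    apply le_of_forall_pos_le_add
    intro ε hε
    have := key (2 * ε / V) (by positivity)
    rw [← h0] at this
    have e1 : 2 * ε / V / 2 * V = ε := by field_simp
    linarith
  · have hs : 0 < √D := Real.sqrt_pos.2 h0
    have hsq : √D * √D = D := Real.mul_self_sqrt hD0
    have := key (√D) hs
    have e1 : C / (2 * √D) * D = C / 2 * √D := by
      nth_rewrite 2 [← hsq]
      field_simp
    have e2 : D ≤ √D := Real.le_sqrt_of_sq_le (by nlinarith)
    rw [e1] at this
    nlinarith

lemma Adm.mass_diff_le (hf : Adm f) (hf₀ : Adm f₀) {s s₀ : ℝ → ℝ} {R R₀ : ℝ} (hs : Prof s R)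
    (hs₀ : Prof s₀ R₀) (e : ∀ x, rhoOf f x = s ‖x‖) (e₀ : ∀ x, rhoOf f₀ x = s₀ ‖x‖) {r : ℝ}
    (hr : 0 ≤ r) :
    |mass (s - s₀) r| ≤ ∫ z in (Metric.closedBall (0:V3) r) ×ˢ univ, |f z - f₀ z| := by
  have hi : Integrable f := (hf.integrable_mul (w := fun _ => 1) continuous_const).congr
    (by filter_upwards with z; simp)
  have hi₀ : Integrable f₀ := (hf₀.integrable_mul (w := fun _ => 1) continuous_const).congr
    (by filter_upwards with z; simp)
  rw [mass_sub hs hs₀, hf.mass_phase e hr, hf₀.mass_phase e₀ hr,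
    ← integral_sub hi.integrableOn hi₀.integrableOn]
  exact abs_integral_le_integral_abs

/-- Decay of the perturbed mass in small balls. -/
lemma Steady.mass_small (h : Steady k E₀ U₀ f₀) (hd : RadData u m ρ R₁ c)
    (hux : ∀ x, U₀ x = u ‖x‖) :
    ∃ C, 0 < C ∧ ∀ f, Adm f → (∀ z, ∃ z', f z = f₀ z') → ∀ s s₀ R R₀, Prof s R → Prof s₀ R₀ →
      (∀ x, rhoOf f x = s ‖x‖) → (∀ x, rhoOf f₀ x = s₀ ‖x‖) →
      ∀ D, D = ∫ z, dens E₀ k U₀ f f₀ z → 0 < D → D ≤ 1 → ∀ r, 0 < r → r ≤ 1 →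
      |mass (s - s₀) r| ≤ C * r ^ (3 / 5 : ℝ) * √D := by
  obtain ⟨C, hC, hb⟩ := h.l2_bound hd hux
  set K := 2 * (|u 0| + 1) with hK
  have hK0 : 0 < K := by positivity
  set V := (4 / 3 * Real.pi) ^ 2 * K ^ 3 with hV
  have hV0 : 0 < V := by positivity
  refine ⟨V / 2 + C / 2 + 2 / K, by positivity, ?_⟩
  intro f hf hz s s₀ R R₀ hs hs₀ e e₀ D hD hD0 hD1 r hr hr1
  refine (hf.mass_diff_le h.adm hs hs₀ e e₀ hr.le).trans ?_
  set q := r ^ (3 / 5 : ℝ) with hq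
  have hq0 : 0 < q := by positivity
  have hq1 : q ≤ 1 := Real.rpow_le_one hr.le hr1 (by norm_num)
  have hq5 : q ^ 5 = r ^ 3 := by
    rw [hq, ← Real.rpow_natCast, ← Real.rpow_mul hr.le, ← Real.rpow_natCast]
    norm_num
  have hEn := h.E_neg
  have hst : ∀ z ∈ (Metric.closedBall (0:V3) r) ×ˢ (univ : Set V3),
      z ∉ (Metric.closedBall (0:V3) r) ×ˢ (Metric.closedBall (0:V3) (K / q)) →
      |f z - f₀ z| ≤ 1 / (K / q / 2) * dens E₀ k U₀ f f₀ z := by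
    intro z hzS hzT
    apply h.far_bound hf (by positivity)
    have hp : K / q < ‖z.2‖ := by
      by_contra hcon
      exact hzT ⟨hzS.1, by rw [mem_closedBall_zero_iff]; exact not_lt.1 hcon⟩
    have h1 : ‖z.2‖ ≤ √(1 + ‖z.2‖ ^ 2) := Real.le_sqrt_of_sq_le (by linarith)
    have h3 : u 0 ≤ u ‖z.1‖ := hd.umono le_rfl (norm_nonneg _)
    have h4 := neg_abs_le (u 0)
    have h5 : K ≤ K / q := le_div_self hK0.le hq0 hq1
    rw [Erel, hux]
    linarith
  have hsD : 0 < √D := Real.sqrt_pos.2 hD0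
  have hsq : √D * √D = D := Real.mul_self_sqrt hD0.le
  have key := h.l1_split hf (hb f hf hz)
      (Metric.isClosed_closedBall.measurableSet.prod MeasurableSet.univ)
      (Metric.isClosed_closedBall.measurableSet.prod Metric.isClosed_closedBall.measurableSet)
      (vol_prod_fin _ _) (by positivity) (τ := √D / q) (by positivity) hst
  rw [vol_prod _ _ hr.le (by positivity), ← hD] at key
  refine key.trans ?_
  have e2 : D ≤ √D := Real.le_sqrt_of_sq_le (by nlinarith)
  have t1 : √D / q / 2 * ((4 / 3 * Real.pi) ^ 2 * (r ^ 3 * (K / q) ^ 3)) = V / 2 * q * √D := by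
    rw [hV, ← hq5]
    field_simp
  have t2 : C / (2 * (√D / q)) * D = C / 2 * q * √D := by
    nth_rewrite 2 [← hsq]
    field_simp
  have t3 : 1 / (K / q / 2) * D ≤ 2 / K * q * √D := by
    have : 1 / (K / q / 2) = 2 / K * q := by field_simp
    rw [this]
    gcongr
  rw [t1, t2]
  linarith

/-- The field energy of the perturbation in a small ball is a small multiple of the relative Casimir
energy. -/
lemma Steady.inner_energy (h : Steady k E₀ U₀ f₀) (hd : RadData u m ρ R₁ c)
    (hux : ∀ x, U₀ x = u ‖x‖) :
    ∃ C, 0 < C ∧ ∀ f, Adm f → (∀ z, ∃ z', f z = f₀ z') → ∀ s s₀ R R₀, Prof s R → Prof s₀ R₀ →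
      (∀ x, rhoOf f x = s ‖x‖) → (∀ x, rhoOf f₀ x = s₀ ‖x‖) →
      ∀ D, D = ∫ z, dens E₀ k U₀ f f₀ z → 0 < D → D ≤ 1 → ∀ a, 0 < a → a ≤ 1 →
      ∫ r in (0:ℝ)..a, mass (s - s₀) r ^ 2 / r ^ 2 ≤ C * a ^ (1 / 5 : ℝ) * D := by
  obtain ⟨C, hC, hb⟩ := h.mass_small hd hux
  refine ⟨5 * C ^ 2, by positivity, ?_⟩
  intro f hf hz s s₀ R R₀ hs hs₀ e e₀ D hD hD0 hD1 a ha ha1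
  have hI : IntervalIntegrable (fun r : ℝ => C ^ 2 * D * r ^ (-(4 / 5) : ℝ)) volume 0 a :=
    (intervalIntegral.intervalIntegrable_rpow' (by norm_num)).const_mul _
  have hle : ∫ r in (0:ℝ)..a, mass (s - s₀) r ^ 2 / r ^ 2 ≤
      ∫ r in (0:ℝ)..a, C ^ 2 * D * r ^ (-(4 / 5) : ℝ) := by
    rw [intervalIntegral.integral_of_le ha.le, intervalIntegral.integral_of_le ha.le]
    apply integral_mono_of_nonneg
    · filter_upwards with r
      simp only [Pi.zero_apply]
      positivity
    · exact (intervalIntegrable_iff_integrableOn_Ioc_of_le ha.le).1 hI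
    · filter_upwards [ae_restrict_mem measurableSet_Ioc] with r hr
      have hr0 : 0 < r := hr.1
      have h1 := hb f hf hz s s₀ R R₀ hs hs₀ e e₀ D hD hD0 hD1 r hr.1 (hr.2.trans ha1)
      have h2 : mass (s - s₀) r ^ 2 ≤ (C * r ^ (3 / 5 : ℝ) * √D) ^ 2 := by
        rw [← sq_abs]; gcongr
      have h3 : (C * r ^ (3 / 5 : ℝ) * √D) ^ 2 = C ^ 2 * D * r ^ (-(4 / 5) : ℝ) * r ^ 2 := by
        rw [mul_pow, mul_pow, Real.sq_sqrt hD0.le, mul_assoc (C ^ 2 * D), ← Real.rpow_natCast r 2,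
          ← Real.rpow_add hr0, ← Real.rpow_natCast _ 2, ← Real.rpow_natCast (r ^ _) 2,
          ← Real.rpow_mul hr0.le]
        norm_num
        ring
      rw [div_le_iff₀ (by positivity), ← h3]
      exact h2
  refine hle.trans (le_of_eq ?_)
  rw [intervalIntegral.integral_const_mul, integral_rpow (Or.inl (by norm_num)),
    Real.zero_rpow (by norm_num), show (-(4 / 5) + 1 : ℝ) = 1 / 5 by norm_num]
  ring

end

/-! ### Coercivity of the energy–Casimir functional -/

section
variable {k E₀ : ℝ} {U₀ : V3 → ℝ} {f₀ : V3 × V3 → ℝ}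
variable {u m ρ : ℝ → ℝ} {R₁ c : ℝ} {f : V3 × V3 → ℝ}

lemma Adm.integral_mass (hf : Adm f) {s : ℝ → ℝ}
    (e : ∀ x, rhoOf f x = s ‖x‖) {w : ℝ → ℝ} (hw : Continuous w) :
    ∫ z : V3 × V3, w ‖z.1‖ * f z = ∫ r in Ioi (0:ℝ), 4 * Real.pi * r ^ 2 * (w r * s r) := by
  rw [hf.integral_pos_mul (w := fun x => w ‖x‖) (by fun_prop)]
  simp_rw [e]
  exact integral_radial (fun r => w r * s r)

lemma Prof.integrable_mul {s : ℝ → ℝ} {R : ℝ} (hs : Prof s R) {w : ℝ → ℝ} (hw : Continuous w) :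
    IntegrableOn (fun r => 4 * Real.pi * r ^ 2 * (w r * s r)) (Ioi 0) := by
  have hc := hs.cont
  have h1 : Continuous fun r => 4 * Real.pi * r ^ 2 * (w r * s r) := by fun_prop
  have h2 : IntegrableOn (fun r => 4 * Real.pi * r ^ 2 * (w r * s r)) (Ioc 0 R) :=
    h1.integrableOn_Ioc
  apply h2.of_forall_sdiff_eq_zero measurableSet_Ioi
  intro r hr
  have : R ≤ r := by
    by_contra hcon
    exact hr.2 ⟨hr.1, (not_le.1 hcon).le⟩
  simp [hs.zero r this]

/-- Equimeasurable states have the same total mass. -/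
lemma Adm.mass_total (hf : Adm f) (hf₀ : Adm f₀) (heq : ∀ F : ℝ → ℝ, ∫ z, F (f z) = ∫ z, F (f₀ z))
    {s s₀ : ℝ → ℝ} {R R₀ : ℝ} (hs : Prof s R) (hs₀ : Prof s₀ R₀)
    (e : ∀ x, rhoOf f x = s ‖x‖) (e₀ : ∀ x, rhoOf f₀ x = s₀ ‖x‖) :
    mass (s - s₀) (max R R₀) = 0 := by
  have key : ∀ {g : V3 × V3 → ℝ} {σ : ℝ → ℝ} {R' : ℝ}, Adm g → Prof σ R' →
      (∀ x, rhoOf g x = σ ‖x‖) → ∀ r, R' ≤ r → mass σ r = ∫ z, g z := by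
    intro g σ R' hg hσ e' r hr
    have h1 := hg.integral_mass e' (w := fun _ => 1) continuous_const
    simp only [one_mul] at h1
    have hr0 : 0 ≤ r := hσ.pos.le.trans hr
    rw [h1, mass, intervalIntegral.integral_of_le hr0]
    refine (setIntegral_eq_of_subset_of_forall_sdiff_eq_zero measurableSet_Ioi
      Ioc_subset_Ioi_self ?_).symm
    intro t ht
    have : R' ≤ t := by
      by_contra hcon
      exact ht.2 ⟨ht.1, (not_le.1 hcon).le.trans hr⟩
    simp [hσ.zero t this]
  rw [mass_sub hs hs₀, key hf hs e _ (le_max_left _ _), key hf₀ hs₀ e₀ _ (le_max_right _ _)]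
  have := heq id
  simp only [id] at this
  rw [this, sub_self]

/-- Pairing of the perturbation with the comparison potential. -/
lemma Adm.pairing (hf : Adm f) (hf₀ : Adm f₀)
    {s s₀ : ℝ → ℝ} {R R₀ : ℝ} (hs : Prof s R) (hs₀ : Prof s₀ R₀)
    (e : ∀ x, rhoOf f x = s ‖x‖) (e₀ : ∀ x, rhoOf f₀ x = s₀ ‖x‖) {a B : ℝ} (ha : 0 < a)
    (haB : a ≤ B) (hB : max R R₀ ≤ B) :
    ∫ z : V3 × V3, Vf (mass (s - s₀)) a B ‖z.1‖ * (f z - f₀ z) =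
      - ∫ r in a..B, mass (s - s₀) r ^ 2 / r ^ 2 := by
  have hσ := hs.sub hs₀
  have hV : Continuous (Vf (mass (s - s₀)) a B) := Vf_cont (mass_cont hσ) ha
  have hV' : Continuous fun z : V3 × V3 => Vf (mass (s - s₀)) a B ‖z.1‖ := by fun_prop
  rw [← Vf_pairing hσ ha haB hB]
  simp_rw [mul_sub]
  rw [integral_sub (hf.integrable_mul hV') (hf₀.integrable_mul hV'), hf.integral_mass e hV,
    hf₀.integral_mass e₀ hV, ← integral_sub (hs.integrable_mul hV) (hs₀.integrable_mul hV)]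
  congr 1; ext r
  simp only [Pi.sub_apply]
  ring

/-- The coercivity estimate, for a given inner radius `a`. -/
lemma Steady.coercive (h : Steady k E₀ U₀ f₀) (hd : RadData u m ρ R₁ c)
    {Y₀ ε : ℝ} (hε1 : ε ≤ 1)
    (hant : ∀ Y, 0 ≤ Y → Y ≤ Y₀ → ∀ δ : ℝ → ℝ, Continuous δ → ∀ a B N : ℝ,
      0 < a → a ≤ B → (∀ s, 0 ≤ s → |δ s| ≤ N) → (∀ s, B ≤ s → δ s = 0) →
      ∫⁻ z, ENNReal.ofReal (hY E₀ k Y (Erel U₀ z)) *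
        ENNReal.ofReal ((Vf δ a B ‖z.1‖ - bE u m δ a B (Erel U₀ z)) ^ 2) ≤
      ENNReal.ofReal ((1 - ε) * ∫ s in a..B, δ s ^ 2 / s ^ 2))
    (hf : Adm f) (heq : ∀ F : ℝ → ℝ, ∫ z, F (f z) = ∫ z, F (f₀ z))
    {s s₀ : ℝ → ℝ} {R R₀ : ℝ} (hs : Prof s R) (hs₀ : Prof s₀ R₀)
    (e : ∀ x, rhoOf f x = s ‖x‖) (e₀ : ∀ x, rhoOf f₀ x = s₀ ‖x‖) {a B N : ℝ} (ha : 0 < a)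
    (haB : a ≤ B) (hB : max R R₀ ≤ B) (hN : ∀ r, 0 ≤ r → |mass (s - s₀) r| ≤ N)
    (hNY : 2 * N / a ≤ Y₀) :
    (1 + ε) / 2 * (∫ r in a..B, mass (s - s₀) r ^ 2 / r ^ 2) ≤
      (1 + N / a ^ 2 * (2 / (cfour u c * a))) * ∫ z, dens E₀ k U₀ f f₀ z := by
  have hk := h.one_le
  have hσ := hs.sub hs₀
  set δ := mass (s - s₀) with hδd
  have hδ : Continuous δ := mass_cont hσ
  have hN0 : 0 ≤ N := (abs_nonneg _).trans (hN 0 le_rfl)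
  have hz : ∀ r, B ≤ r → δ r = 0 := fun r hr => by
    rw [hδd, mass_eq_of_ge hσ (hB.trans hr)]
    exact hf.mass_total h.adm heq hs hs₀ e e₀
  set J := ∫ r in a..B, δ r ^ 2 / r ^ 2 with hJ
  have hJ0 : 0 ≤ J := intervalIntegral.integral_nonneg haB fun r _ => by positivity
  set V := Vf δ a B with hVd
  set b := bE u m δ a B with hbd
  have hVc : Continuous V := Vf_cont hδ ha
  have hbc : Continuous b := hd.bE_cont hδ ha hN
  have hEc := h.cont_Erel
  set Y := 2 * N / a with hYd
  have hY0 : 0 ≤ Y := by positivity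
  set y : V3 × V3 → ℝ := fun z => b (Erel U₀ z) - V ‖z.1‖ with hy
  have hyY : ∀ z, |y z| ≤ Y := by
    intro z
    have h1 := Vf_bound ha haB hN hz ‖z.1‖
    have h2 : |b (Erel U₀ z)| ≤ N / a := Vf_bound ha haB hN hz _
    calc |y z| ≤ |b (Erel U₀ z)| + |V ‖z.1‖| := abs_sub _ _
      _ ≤ N / a + N / a := add_le_add h2 h1
      _ = Y := by rw [hYd]; ring
  have hyc : Continuous y := by fun_prop
  -- the quadratic term
  have hq' := hant Y hY0 hNY δ hδ a B N ha haB hN hz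
  have hqe : ∀ z, ENNReal.ofReal (hY E₀ k Y (Erel U₀ z)) *
      ENNReal.ofReal ((V ‖z.1‖ - b (Erel U₀ z)) ^ 2) =
      ENNReal.ofReal (y z ^ 2 * hY E₀ k Y (Erel U₀ z)) := by
    intro z
    rw [← ENNReal.ofReal_mul (hY_nonneg hk), hy]
    congr 1; ring
  have hq : ∫⁻ z, ENNReal.ofReal (y z ^ 2 * hY E₀ k Y (Erel U₀ z)) ≤
      ENNReal.ofReal ((1 - ε) * J) := by
    rw [← lintegral_congr hqe]
    exact hq'
  have hqm : Measurable fun z => y z ^ 2 * hY E₀ k Y (Erel U₀ z) :=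
    (hyc.measurable.pow_const 2).mul (hY_meas.comp hEc.measurable)
  have hqn : ∀ z, 0 ≤ y z ^ 2 * hY E₀ k Y (Erel U₀ z) := fun z =>
    mul_nonneg (sq_nonneg _) (hY_nonneg hk)
  have hqi : Integrable fun z => y z ^ 2 * hY E₀ k Y (Erel U₀ z) := by
    refine ⟨hqm.aestronglyMeasurable, ?_⟩
    rw [hasFiniteIntegral_iff_ofReal (Eventually.of_forall hqn)]
    exact hq.trans_lt ENNReal.ofReal_lt_top
  have hqI : ∫ z, y z ^ 2 * hY E₀ k Y (Erel U₀ z) ≤ (1 - ε) * J := by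
    rw [integral_eq_lintegral_of_nonneg_ae (Eventually.of_forall hqn) hqm.aestronglyMeasurable]
    exact ENNReal.toReal_le_of_le_ofReal (mul_nonneg (by linarith) hJ0) hq
  -- the linear term
  have hiy : Integrable fun z => y z * (f z - f₀ z) :=
    ((hf.integrable_mul hyc).sub (h.adm.integrable_mul hyc)).congr
      (by filter_upwards with z; simp only [Pi.sub_apply]; ring)
  have hbE : Continuous fun z => b (Erel U₀ z) := hbc.comp hEc
  have hVz : Continuous fun z : V3 × V3 => V ‖z.1‖ := by fun_prop
  have hib : Integrable fun z => b (Erel U₀ z) * (f z - f₀ z) :=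
    ((hf.integrable_mul hbE).sub (h.adm.integrable_mul hbE)).congr
      (by filter_upwards with z; simp only [Pi.sub_apply]; ring)
  have hiV : Integrable fun z => V ‖z.1‖ * (f z - f₀ z) :=
    ((hf.integrable_mul hVz).sub (h.adm.integrable_mul hVz)).congr
      (by filter_upwards with z; simp only [Pi.sub_apply]; ring)
  have hlin : ∫ z, y z * (f z - f₀ z) = (∫ z, b (Erel U₀ z) * (f z - f₀ z)) + J := by
    have h1 := hf.pairing h.adm hs hs₀ e e₀ ha haB hB
    have h2 : ∫ z, y z * (f z - f₀ z) = (∫ z, b (Erel U₀ z) * (f z - f₀ z)) -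
        ∫ z, V ‖z.1‖ * (f z - f₀ z) := by
      rw [← integral_sub hib hiV]
      congr 1; ext z
      rw [hy]; ring
    rw [h2, hVd, hδd, h1]
    ring
  have hcas := (abs_le.1 (h.casimir hf heq (fun x y => hd.bE_lip (B := B) hδ ha hN x y) hbc)).1
  have hfen : (∫ z, y z * (f z - f₀ z)) - 1 / 2 * ∫ z, y z ^ 2 * hY E₀ k Y (Erel U₀ z) ≤
      ∫ z, dens E₀ k U₀ f f₀ z := by
    rw [← integral_const_mul, ← integral_sub hiy (hqi.const_mul _)]
    apply integral_mono (hiy.sub (hqi.const_mul _)) (h.integrable_dens hf)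
    intro z
    simp only [Pi.sub_apply]
    rw [dens_eq h, f0_eq h]
    have := dpt_fenchel (E₀ := E₀) (e := Erel U₀ z) hk (hf.nonneg z) (hyY z)
    linarith
  rw [hlin] at hfen
  linarith

/-- The core estimate for a nontrivial steady state. -/
lemma Steady.main (h : Steady k E₀ U₀ f₀) (hne : f₀ ≠ 0) :
    ∃ δ₀, 0 < δ₀ ∧ ∃ ε, 0 < ε ∧ ∀ f, Adm f → (∀ F : ℝ → ℝ, ∫ z, F (f z) = ∫ z, F (f₀ z)) →
      (∀ z, ∃ z', f z = f₀ z') → ∫ z, dens E₀ k U₀ f f₀ z ≤ δ₀ →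
      ∀ s s₀ R R₀, Prof s R → Prof s₀ R₀ →
      (∀ x, rhoOf f x = s ‖x‖) → (∀ x, rhoOf f₀ x = s₀ ‖x‖) →
      ε * (∫ r in Ioi (0:ℝ), mass (s - s₀) r ^ 2 / r ^ 2) ≤ (∫ z, dens E₀ k U₀ f f₀ z) -
        1 / 2 * ∫ r in Ioi (0:ℝ), mass (s - s₀) r ^ 2 / r ^ 2 := by
  obtain ⟨ρ, Rρ, hρ, eρ⟩ := h.adm.exists_prof
  obtain ⟨u, R₁, c, hd, hux⟩ := h.exists_rad hne hρ eρ
  obtain ⟨M, hM, hMb⟩ := hρ.bound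
  obtain ⟨Y₀, ε₀, hY₀, hε₀, hant₀⟩ := h.antonov hd hux eρ
    (fun s hs => (le_abs_self _).trans (hMb s hs))
  obtain ⟨C₁, hC₁, hl1⟩ := h.l1_bound hd hux
  obtain ⟨C₂, hC₂, hinn⟩ := h.inner_energy hd hux
  have hc4 := hd.cfour_pos
  set ε := min ε₀ 1 with hεd
  have hε : 0 < ε := by positivity
  have hε1 : ε ≤ 1 := min_le_right _ _
  set q := ε / (8 * C₂) with hq
  have hq0 : 0 < q := by positivity
  set a := min 1 (q ^ 5) with had
  have ha : 0 < a := by positivity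
  have ha1 : a ≤ 1 := min_le_left _ _
  have haq : C₂ * a ^ (1 / 5 : ℝ) ≤ ε / 8 := by
    have h1 : a ^ (1 / 5 : ℝ) ≤ q := by
      calc a ^ (1 / 5 : ℝ) ≤ (q ^ 5) ^ (1 / 5 : ℝ) :=
            Real.rpow_le_rpow ha.le (min_le_right _ _) (by norm_num)
        _ = q := by
            rw [← Real.rpow_natCast, ← Real.rpow_mul hq0.le]
            norm_num
    calc C₂ * a ^ (1 / 5 : ℝ) ≤ C₂ * q := by gcongr
      _ = ε / 8 := by rw [hq]; field_simp
  set L := C₁ / a ^ 2 * (2 / (cfour u c * a)) with hL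
  have hL0 : 0 < L := by positivity
  set t := min 1 (min (Y₀ * a / (2 * C₁)) (ε / 8 / L)) with ht
  have ht0 : 0 < t := by positivity
  refine ⟨t ^ 2, by positivity, ε / 4, by positivity, ?_⟩
  intro f hf heq hz hDt s s₀ R R₀ hs hs₀ e e₀
  set D := ∫ z, dens E₀ k U₀ f f₀ z with hD
  have hD0 : 0 ≤ D := integral_nonneg (h.dens_nonneg hf)
  have hsD : √D ≤ t := by
    rw [Real.sqrt_le_left ht0.le]; exact hDt
  have hD1 : D ≤ 1 := hDt.trans (pow_le_one₀ ht0.le (min_le_left _ _))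
  have hΔ := hl1 f hf hz D hD hD1
  have hi1 := hf.diff_comp h.adm (F := fun t => |t|) (by fun_prop) (by simp)
  have hN : ∀ r, 0 ≤ r → |mass (s - s₀) r| ≤ C₁ * √D := by
    intro r hr
    refine ((hf.mass_diff_le h.adm hs hs₀ e e₀ hr).trans ?_).trans hΔ
    exact setIntegral_le_integral hi1 (Eventually.of_forall fun z => abs_nonneg _)
  rcases hD0.eq_or_lt with h0 | hDp
  · have hm : ∀ r ∈ Ioi (0:ℝ), mass (s - s₀) r ^ 2 / r ^ 2 = 0 := by
      intro r hr
      have h1 := hN r (le_of_lt hr)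
      rw [← h0, Real.sqrt_zero, mul_zero] at h1
      have : mass (s - s₀) r = 0 := abs_nonpos_iff.1 h1
      simp [this]
    rw [setIntegral_congr_fun measurableSet_Ioi hm, ← h0]
    simp
  have hσ := hs.sub hs₀
  have hant : ∀ Y, 0 ≤ Y → Y ≤ Y₀ → ∀ δ : ℝ → ℝ, Continuous δ → ∀ a B N : ℝ,
      0 < a → a ≤ B → (∀ s, 0 ≤ s → |δ s| ≤ N) → (∀ s, B ≤ s → δ s = 0) →
      ∫⁻ z, ENNReal.ofReal (hY E₀ k Y (Erel U₀ z)) *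
        ENNReal.ofReal ((Vf δ a B ‖z.1‖ - bE u (mass ρ) δ a B (Erel U₀ z)) ^ 2) ≤
      ENNReal.ofReal ((1 - ε) * ∫ s in a..B, δ s ^ 2 / s ^ 2) := by
    intro Y hY hYY δ hδ a B N ha haB hN hz
    refine (hant₀ Y hY hYY δ hδ a B N ha haB hN hz).trans (ENNReal.ofReal_le_ofReal ?_)
    have : 0 ≤ ∫ s in a..B, δ s ^ 2 / s ^ 2 :=
      intervalIntegral.integral_nonneg haB fun r _ => by positivity
    have h2 : ε ≤ ε₀ := min_le_left _ _
    gcongr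
  have ht2 : t ≤ Y₀ * a / (2 * C₁) := (min_le_right _ _).trans (min_le_left _ _)
  have ht3 : t ≤ ε / 8 / L := (min_le_right _ _).trans (min_le_right _ _)
  have hNY : 2 * (C₁ * √D) / a ≤ Y₀ := by
    rw [le_div_iff₀ (by positivity)] at ht2
    rw [div_le_iff₀ ha]
    nlinarith
  have hLam : C₁ * √D / a ^ 2 * (2 / (cfour u c * a)) ≤ ε / 8 := by
    have h1 : √D * L ≤ ε / 8 := by
      rw [← le_div_iff₀ hL0]; exact hsD.trans ht3
    calc C₁ * √D / a ^ 2 * (2 / (cfour u c * a)) = √D * L := by rw [hL]; ring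
      _ ≤ _ := h1
  have hco := h.coercive hd hε1 hant hf heq hs hs₀ e e₀ ha (le_max_right (max R R₀) a)
    (le_max_left _ _) hN hNY
  have hin := hinn f hf hz s s₀ R R₀ hs hs₀ e e₀ D hD hDp hD1 a ha ha1
  rw [field_split hσ (hf.mass_total h.adm heq hs hs₀ e e₀) ha (le_max_right (max R R₀) a)
    (le_max_left _ _)]
  set J := ∫ r in a..max (max R R₀) a, mass (s - s₀) r ^ 2 / r ^ 2
  set I₁ := ∫ r in (0:ℝ)..a, mass (s - s₀) r ^ 2 / r ^ 2
  rw [← hD] at hco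
  have hJD : (1 + ε) / 2 * J ≤ (1 + ε / 8) * D :=
    hco.trans (mul_le_mul_of_nonneg_right (by linarith) hD0)
  have hID : I₁ ≤ ε / 8 * D := hin.trans (mul_le_mul_of_nonneg_right haq hD0)
  have hsum : (1 + ε) / 2 * (I₁ + J) ≤ (1 + ε / 4) * D := by
    have : (1 + ε) / 2 * I₁ ≤ 1 * (ε / 8 * D) := by
      have : 0 ≤ ε / 8 * D := by positivity
      calc (1 + ε) / 2 * I₁ ≤ (1 + ε) / 2 * (ε / 8 * D) := by gcongr
        _ ≤ _ := by gcongr; linarith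
    linarith
  have hI0 : 0 ≤ I₁ + J := by
    apply add_nonneg
    · exact intervalIntegral.integral_nonneg ha.le fun r _ => by positivity
    · exact intervalIntegral.integral_nonneg (le_max_right _ _) fun r _ => by positivity
  have hfin : (1 + ε / 4) * ((1 / 2 + ε / 4) * (I₁ + J)) ≤ (1 + ε / 4) * D := by
    refine le_trans ?_ hsum
    rw [← mul_assoc]
    apply mul_le_mul_of_nonneg_right _ hI0
    nlinarith
  have := le_of_mul_le_mul_left hfin (by positivity)
  linarith

end

/-- **The steady state is a local minimizer of the energy–Casimir functional on
dynamically accessible states (RVP).** -/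
theorem stmt_8 (k E₀ : ℝ) (hk : 1 ≤ k) (hk' : k < 7 / 2) (hE₀ : E₀ < 0)
    (U₀ : V3 → ℝ) (hU₀smooth : ContDiff ℝ 2 U₀)
    (hU₀rad : ∀ x y : V3, ‖x‖ = ‖y‖ → U₀ x = U₀ y)
    (hU₀inf : Tendsto U₀ (Filter.cocompact V3) (nhds 0))
    (f₀ : V3 × V3 → ℝ) (hf₀ : f₀ = fun z => polyAnsatz E₀ k (Erel U₀ z))
    (hcpt : HasCompactSupport f₀) (hint : Integrable f₀ volume)
    (hpoisson : ∀ x : V3, U₀ x = -∫ y : V3, rhoOf f₀ y / ‖x - y‖) :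
    ∃ δ₀ : ℝ, 0 < δ₀ ∧ ∃ C₀ : ℝ, 0 < C₀ ∧
      ∀ f ∈ DynAcc f₀, distRVP E₀ k U₀ f f₀ ≤ δ₀ →
        HCrel E₀ k f - HCrel E₀ k f₀ ≥
          C₀ * ∫ x : V3, ‖gradUf f x - gradUf f₀ x‖ ^ 2 := by
  have h : Steady k E₀ U₀ f₀ := ⟨hk, hE₀, hU₀smooth, hU₀rad, hU₀inf, hf₀, hcpt, hpoisson⟩
  by_cases hne : f₀ = 0
  · -- rearrangements of the trivial state are trivial
    refine ⟨1, one_pos, 1, one_pos, fun f hf _ => ?_⟩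
    have hff : f = f₀ := by
      funext z
      obtain ⟨z', hz'⟩ := (h.dynAcc hf).2.2 z
      rw [hz', hne]
      simp
    rw [hff]
    simp
  obtain ⟨δ₀, hδ₀, ε, hε, hmain⟩ := h.main hne
  have hpi := Real.pi_pos
  refine ⟨δ₀, hδ₀, ε / (4 * Real.pi), by positivity, fun f hf hd => ?_⟩
  obtain ⟨hA, heq, hz⟩ := h.dynAcc hf
  obtain ⟨s, R, hs, e⟩ := hA.exists_prof
  obtain ⟨s₀, R₀, hs₀, e₀⟩ := h.adm.exists_prof
  have hfield : 0 ≤ ∫ x : V3, ‖gradUf f x - gradUf f₀ x‖ ^ 2 :=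
    integral_nonneg fun x => by positivity
  have hD : ∫ z, dens E₀ k U₀ f f₀ z ≤ δ₀ := by
    have h1 : distRVP E₀ k U₀ f f₀ = (∫ z, dens E₀ k U₀ f f₀ z) +
      (1 / (8 * Real.pi)) * ∫ x : V3, ‖gradUf f x - gradUf f₀ x‖ ^ 2 := rfl
    have h2 : 0 ≤ (1 / (8 * Real.pi)) * ∫ x : V3, ‖gradUf f x - gradUf f₀ x‖ ^ 2 := by positivity
    linarith
  have hfin := hmain f hA heq hz hD s s₀ R R₀ hs hs₀ e e₀
  rw [h.energy_identity hA heq hs hs₀ e e₀, field_energy hs hs₀ e e₀, ge_iff_le]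
  refine le_trans (le_of_eq ?_) hfin
  field_simp
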